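/- Let i ∈ I and let β be a formal nonnegative combination of the α_j. For every graded left R(β)-module M there is an isomorphism of graded R(β)-modules E_i F_i M ≅ q^{−(α_i,α_i)} F_i E_i M ⊕ (M ⊗_k k[t_i]), natural in M, where t_i is an indeterminate of degree (α_i,α_i) and M ⊗_k k[t_i] ≅ ⊕_{m ≥ 0} q^{m(α_i,α_i)} M; here E_i F_i is the composite through modules over R(β+α_i) and F_i E_i the composite through modules over R(β−α_i). -/

import Mathlib

/- ## Scaffold: Khovanov–Lauda–Rouquier algebras -/

open scoped TensorProduct

/-- A symmetrizable Cartan datum together with the structure constants of the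
family of polynomials `Q`. -/
structure CartanDatum (k : Type) [Field k] (I : Type) [Fintype I] [DecidableEq I] : Type where
  a : I → I → ℤ
  d : I → ℤ
  t : I → I → ℕ → ℕ → k
  a_diag : ∀ i, a i i = 2
  a_nonpos : ∀ i j, i ≠ j → a i j ≤ 0
  a_zero_iff : ∀ i j, a i j = 0 ↔ a j i = 0
  d_pos : ∀ i, 0 < d i
  symmetrize : ∀ i j, d i * a i j = d j * a j i
  t_symm : ∀ i j p q, t i j p q = t j i q p
  t_lead : ∀ i j, i ≠ j → t i j (-(a i j)).toNat 0 ≠ 0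

namespace KLR

variable {k : Type} [Field k] {I : Type} [Fintype I] [DecidableEq I]

/-- The symmetric bilinear form `(α_i, α_j) = d_i a_{ij}`. -/
def B (C : CartanDatum k I) (i j : I) : ℤ := C.d i * C.a i j

/-- Generators of the KLR algebra `R(n)`. -/
inductive Gen (I : Type) (n : ℕ) : Type
  | e (ν : Fin n → I) : Gen I n
  | x (a : Fin n) : Gen I n
  | tau (l : ℕ) (h : l + 1 < n) : Gen I n

variable (k) in
/-- The free algebra on the generators. -/
abbrev FA (I : Type) (n : ℕ) : Type := FreeAlgebra k (Gen I n)

variable (k) in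
def ge {n : ℕ} (ν : Fin n → I) : FA k I n := FreeAlgebra.ι k (Gen.e ν)

variable (k) in
def gx {n : ℕ} (a : Fin n) : FA k I n := FreeAlgebra.ι k (Gen.x a)

variable (k) in
def gt {n : ℕ} (l : ℕ) (h : l + 1 < n) : FA k I n := FreeAlgebra.ι k (Gen.tau l h)

/-- The polynomial `Q_{ij}(u,v)` evaluated on two elements of an algebra. -/
def Qel (C : CartanDatum k I) {A : Type} [Ring A] [Algebra k A] (i j : I) (u v : A) : A :=
  if i = j then 0 else
    ∑ p ∈ Finset.range ((-(C.a i j)).toNat + 1), ∑ q ∈ Finset.range ((-(C.a j i)).toNat + 1),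
      if C.d i * (p : ℤ) + C.d j * (q : ℤ) = -(C.d i * C.a i j) then
        C.t i j p q • (u ^ p * v ^ q) else 0

/-- The divided difference `(Q_{ij}(u,v) - Q_{ij}(w,v))/(u - w)` evaluated on elements. -/
def Qdiff (C : CartanDatum k I) {A : Type} [Ring A] [Algebra k A] (i j : I) (u v w : A) : A :=
  if i = j then 0 else
    ∑ p ∈ Finset.range ((-(C.a i j)).toNat + 1), ∑ q ∈ Finset.range ((-(C.a j i)).toNat + 1),
      if C.d i * (p : ℤ) + C.d j * (q : ℤ) = -(C.d i * C.a i j) then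
        C.t i j p q • ((∑ c ∈ Finset.range p, u ^ c * w ^ (p - 1 - c)) * v ^ q) else 0

/-- The defining relations of the KLR algebra `R(n)`. -/
inductive Rel (C : CartanDatum k I) (n : ℕ) : FA k I n → FA k I n → Prop
  | ee : ∀ ν ν' : Fin n → I, Rel C n (ge k ν * ge k ν') (if ν = ν' then ge k ν else 0)
  | esum : Rel C n (∑ ν : Fin n → I, ge k ν) 1
  | xx : ∀ a b : Fin n, Rel C n (gx k a * gx k b) (gx k b * gx k a)
  | xe : ∀ (a : Fin n) (ν : Fin n → I), Rel C n (gx k a * ge k ν) (ge k ν * gx k a)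
  | taue : ∀ (l : ℕ) (h : l + 1 < n) (ν : Fin n → I),
      Rel C n (gt k l h * ge k ν)
        (ge k (ν ∘ Equiv.swap (⟨l, Nat.lt_of_succ_lt h⟩ : Fin n) ⟨l + 1, h⟩) * gt k l h)
  | tautau : ∀ (l : ℕ) (h : l + 1 < n) (l' : ℕ) (h' : l' + 1 < n),
      (l + 1 < l' ∨ l' + 1 < l) →
      Rel C n (gt k l h * gt k l' h') (gt k l' h' * gt k l h)
  | tausq : ∀ (l : ℕ) (h : l + 1 < n) (ν : Fin n → I),
      Rel C n (gt k l h ^ 2 * ge k ν)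
        (Qel C (ν ⟨l, Nat.lt_of_succ_lt h⟩) (ν ⟨l + 1, h⟩)
          (gx k ⟨l, Nat.lt_of_succ_lt h⟩) (gx k ⟨l + 1, h⟩) * ge k ν)
  | taux : ∀ (l : ℕ) (h : l + 1 < n) (m : Fin n) (ν : Fin n → I),
      Rel C n ((gt k l h * gx k m
          - gx k (Equiv.swap (⟨l, Nat.lt_of_succ_lt h⟩ : Fin n) ⟨l + 1, h⟩ m) * gt k l h) * ge k ν)
        (if m = ⟨l, Nat.lt_of_succ_lt h⟩ ∧ ν ⟨l, Nat.lt_of_succ_lt h⟩ = ν ⟨l + 1, h⟩ then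
            -(ge k ν)
          else if m = (⟨l + 1, h⟩ : Fin n) ∧ ν ⟨l, Nat.lt_of_succ_lt h⟩ = ν ⟨l + 1, h⟩ then
            ge k ν
          else 0)
  | braid : ∀ (l : ℕ) (h2 : l + 2 < n) (ν : Fin n → I),
      Rel C n ((gt k (l + 1) h2 * gt k l (Nat.lt_of_succ_lt h2) * gt k (l + 1) h2
          - gt k l (Nat.lt_of_succ_lt h2) * gt k (l + 1) h2 * gt k l (Nat.lt_of_succ_lt h2))
          * ge k ν)
        (if ν ⟨l, Nat.lt_of_succ_lt (Nat.lt_of_succ_lt h2)⟩ = ν ⟨l + 2, h2⟩ then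
            Qdiff C (ν ⟨l, Nat.lt_of_succ_lt (Nat.lt_of_succ_lt h2)⟩)
              (ν ⟨l + 1, Nat.lt_of_succ_lt h2⟩)
              (gx k ⟨l, Nat.lt_of_succ_lt (Nat.lt_of_succ_lt h2)⟩)
              (gx k ⟨l + 1, Nat.lt_of_succ_lt h2⟩)
              (gx k ⟨l + 2, h2⟩) * ge k ν
          else 0)

/-- The Khovanov–Lauda–Rouquier algebra `R(n)`. -/
abbrev Alg (C : CartanDatum k I) (n : ℕ) : Type := RingQuot (Rel C n)

variable (C : CartanDatum k I)

/-- The generator `e(ν)` of `R(n)`. -/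
noncomputable def Ee {n : ℕ} (ν : Fin n → I) : Alg C n :=
  RingQuot.mkAlgHom k (Rel C n) (ge k ν)

/-- The generator `x_a` of `R(n)`. -/
noncomputable def Xx {n : ℕ} (a : Fin n) : Alg C n :=
  RingQuot.mkAlgHom k (Rel C n) (gx k a)

/-- The generator `τ_l` of `R(n)`. -/
noncomputable def Tt {n : ℕ} (l : ℕ) (h : l + 1 < n) : Alg C n :=
  RingQuot.mkAlgHom k (Rel C n) (gt k l h)

variable (I) in
/-- The height of `β = Σ k_i α_i`. -/
def ht (β : I → ℕ) : ℕ := ∑ i, β i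

/-- The content of a sequence `ν`. -/
def content {m : ℕ} (ν : Fin m → I) : I → ℕ :=
  fun i => (Finset.univ.filter (fun a => ν a = i)).card

/-- The set `I^β` of sequences of length `m` with content `β`. -/
def seqs (β : I → ℕ) (m : ℕ) : Finset (Fin m → I) :=
  Finset.univ.filter (fun ν => content ν = β)

/-- The central idempotent `e(β)` in `R(n)`. -/
noncomputable def eIdem (n : ℕ) (β : I → ℕ) : Alg C n := ∑ ν ∈ seqs β n, Ee C ν

/-- `β + α_i`. -/
def addA (β : I → ℕ) (i : I) : I → ℕ := fun j => β j + if j = i then 1 else 0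

/-- The idempotent `e(β, α_i)` of `R(n+1)` (sum over `ν ∈ I^{β+α_i}` with `ν_{n+1} = i`). -/
noncomputable def eR (n : ℕ) (β : I → ℕ) (i : I) : Alg C (n + 1) :=
  ∑ ν ∈ (seqs (addA β i) (n + 1)).filter (fun ν => ν (Fin.last n) = i), Ee C ν

/-- The idempotent `e(α_i, β)` of `R(n+1)` (sum over `ν ∈ I^{β+α_i}` with `ν_1 = i`). -/
noncomputable def eL (n : ℕ) (β : I → ℕ) (i : I) : Alg C (n + 1) :=
  ∑ ν ∈ (seqs (addA β i) (n + 1)).filter (fun ν => ν 0 = i), Ee C ν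

/-- The idempotent `e(β - α_i, α_i)` of `R(n)`: sum over `ν ∈ I^β` with last entry `i`;
this is `0` when the coefficient of `α_i` in `β` is `0` or `n = 0`. -/
noncomputable def eD (n : ℕ) (β : I → ℕ) (i : I) : Alg C n :=
  ∑ ν ∈ (seqs β n).filter (fun ν => if h : 0 < n then ν ⟨n - 1, Nat.sub_lt h one_pos⟩ = i
      else False), Ee C ν

/-- The relations defining `R(β) = R(n)e(β)` (a unital ring with unit the image of
`e(β)`): the KLR relations together with the relation `e(β) = 1`. -/
inductive URel (n : ℕ) (β : I → ℕ) : FA k I n → FA k I n → Prop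
  | base : ∀ {x y : FA k I n}, Rel C n x y → URel n β x y
  | unit : URel n β (∑ ν ∈ seqs β n, ge k ν) 1

/-- The algebra `R(β)`, realized as the quotient of `R(n)` identifying `e(β)` with `1`. -/
abbrev bAlg (n : ℕ) (β : I → ℕ) : Type := RingQuot (URel C n β)

/-- The canonical projection `R(n) → R(β)`. -/
noncomputable def toB {n : ℕ} {β : I → ℕ} : Alg C n →ₐ[k] bAlg C n β :=
  RingQuot.liftAlgHom (S := k)
    ⟨RingQuot.mkAlgHom k (URel C n β),
      fun _ _ h => RingQuot.mkAlgHom_rel k (URel.base h)⟩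

/-- The element `a^Λ(x_1)` at the level of the free algebra. -/
noncomputable def aLamF (Λ : I → ℕ) (n : ℕ) (β : I → ℕ) : FA k I n :=
  if h : 0 < n then
    ∑ ν ∈ seqs β n, (gx k (⟨0, h⟩ : Fin n)) ^ (Λ (ν ⟨0, h⟩)) * ge k ν
  else 0

/-- The element `a^Λ(x_1)` of `R(β)`. -/
noncomputable def aLam (Λ : I → ℕ) (n : ℕ) (β : I → ℕ) : bAlg C n β :=
  RingQuot.mkAlgHom k (URel C n β) (aLamF Λ n β)

/-- The relations defining the cyclotomic quotient `R^Λ(β)`. -/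
inductive CRel (Λ : I → ℕ) (n : ℕ) (β : I → ℕ) : FA k I n → FA k I n → Prop
  | base : ∀ {x y : FA k I n}, Rel C n x y → CRel Λ n β x y
  | unit : CRel Λ n β (∑ ν ∈ seqs β n, ge k ν) 1
  | cyc : CRel Λ n β (aLamF Λ n β) 0

/-- The cyclotomic KLR algebra `R^Λ(β)`. -/
abbrev cAlg (Λ : I → ℕ) (n : ℕ) (β : I → ℕ) : Type := RingQuot (CRel C Λ n β)

/-- The canonical projection `R(β) → R^Λ(β)`. -/
noncomputable def toC {Λ : I → ℕ} {n : ℕ} {β : I → ℕ} : bAlg C n β →ₐ[k] cAlg C Λ n β :=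
  RingQuot.liftAlgHom (S := k)
    ⟨RingQuot.mkAlgHom k (CRel C Λ n β),
      fun _ _ h => by
        cases h with
        | base hb => exact RingQuot.mkAlgHom_rel k (CRel.base hb)
        | unit => exact RingQuot.mkAlgHom_rel k CRel.unit⟩

/-- The canonical projection `R(n) → R^Λ(β)`. -/
noncomputable def toCB (Λ : I → ℕ) {n : ℕ} {β : I → ℕ} : Alg C n →ₐ[k] cAlg C Λ n β :=
  (toC C).comp (toB C)

end KLR
namespace KLR

variable {k : Type} [Field k] {I : Type} [Fintype I] [DecidableEq I] (C : CartanDatum k I)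

section Homs

/-- Characterization of the non-unital algebra homomorphism `R(n) → R(n+1)` adding `i`
on the right: `e(ν) ↦ e(ν∗(i))`, `x_a ↦ x_a e(…,α_i)`, `τ_l ↦ τ_l e(…,α_i)`,
where the relevant idempotent is supplied as `e`. -/
def IsUpR {n : ℕ} (i : I) (e : Alg C (n + 1)) (φ : Alg C n →ₙₐ[k] Alg C (n + 1)) : Prop :=
  (∀ ν : Fin n → I, φ (Ee C ν) = Ee C (Fin.snoc ν i)) ∧
  (∀ a : Fin n, φ (Xx C a) = Xx C a.castSucc * e) ∧
  (∀ (l : ℕ) (h : l + 1 < n), φ (Tt C l h) = Tt C l (Nat.lt_succ_of_lt h) * e)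

/-- Characterization of the non-unital algebra homomorphism `R(n) → R(n+1)` adding `i`
on the left: `e(ν) ↦ e((i)∗ν)`, `x_a ↦ x_{a+1} e(α_i,…)`, `τ_l ↦ τ_{l+1} e(α_i,…)`. -/
def IsUpL {n : ℕ} (i : I) (e : Alg C (n + 1)) (φ : Alg C n →ₙₐ[k] Alg C (n + 1)) : Prop :=
  (∀ ν : Fin n → I, φ (Ee C ν) = Ee C (Fin.cons i ν)) ∧
  (∀ a : Fin n, φ (Xx C a) = Xx C a.succ * e) ∧
  (∀ (l : ℕ) (h : l + 1 < n), φ (Tt C l h) = Tt C (l + 1) (Nat.succ_lt_succ h) * e)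

/-- Characterization of the non-unital homomorphism `R(β) → R(β+α_i)` (right version). -/
def IsUpRb {n : ℕ} {β γ' : I → ℕ} (i : I)
    (φ : bAlg C n β →ₙₐ[k] bAlg C (n + 1) γ') : Prop :=
  (∀ ν : Fin n → I, φ (toB C (Ee C ν)) = toB C (Ee C (Fin.snoc ν i))) ∧
  (∀ a : Fin n, φ (toB C (Xx C a)) = toB C (Xx C a.castSucc * eR C n β i)) ∧
  (∀ (l : ℕ) (h : l + 1 < n),
    φ (toB C (Tt C l h)) = toB C (Tt C l (Nat.lt_succ_of_lt h) * eR C n β i))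

/-- Characterization of the non-unital homomorphism `R(β) → R(β+α_i)` (left version). -/
def IsUpLb {n : ℕ} {β γ' : I → ℕ} (i : I)
    (φ : bAlg C n β →ₙₐ[k] bAlg C (n + 1) γ') : Prop :=
  (∀ ν : Fin n → I, φ (toB C (Ee C ν)) = toB C (Ee C (Fin.cons i ν))) ∧
  (∀ a : Fin n, φ (toB C (Xx C a)) = toB C (Xx C a.succ * eL C n β i)) ∧
  (∀ (l : ℕ) (h : l + 1 < n),
    φ (toB C (Tt C l h)) = toB C (Tt C (l + 1) (Nat.succ_lt_succ h) * eL C n β i))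

/-- Characterization of the non-unital homomorphism `R^Λ(β) → R^Λ(β+α_i)` (right version). -/
def IsUpRc (Λ : I → ℕ) {n : ℕ} {β γ' : I → ℕ} (i : I)
    (φ : cAlg C Λ n β →ₙₐ[k] cAlg C Λ (n + 1) γ') : Prop :=
  (∀ ν : Fin n → I, φ (toCB C Λ (Ee C ν)) = toCB C Λ (Ee C (Fin.snoc ν i))) ∧
  (∀ a : Fin n, φ (toCB C Λ (Xx C a)) = toCB C Λ (Xx C a.castSucc * eR C n β i)) ∧
  (∀ (l : ℕ) (h : l + 1 < n),
    φ (toCB C Λ (Tt C l h)) = toCB C Λ (Tt C l (Nat.lt_succ_of_lt h) * eR C n β i))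

end Homs

section Tensor

open scoped TensorProduct

variable (S B M : Type) [Ring S] [Algebra k S] [Ring B] [Algebra k B]
  [AddCommGroup M] [Module k M] [Module S M] [IsScalarTower k S M]

variable (k) in
/-- The relation submodule defining the balanced tensor product `B ⊗_S M` where `S`
acts on `B` on the right through the (non-unital) homomorphism `φ : S → B`. -/
def TRel (φ : S →ₙₐ[k] B) : Submodule B (B ⊗[k] M) :=
  Submodule.span B {z | ∃ (b : B) (r : S) (m : M), z = (b * φ r) ⊗ₜ[k] m - b ⊗ₜ[k] (r • m)}

variable (k) in
/-- The balanced tensor product `B ⊗_S M` (over the homomorphism `φ : S → B`). -/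
abbrev OT (φ : S →ₙₐ[k] B) : Type := (B ⊗[k] M) ⧸ TRel k S B M φ

variable (k) in
/-- The canonical projection onto the balanced tensor product. -/
def OTmk (φ : S →ₙₐ[k] B) (z : B ⊗[k] M) : OT k S B M φ := Submodule.Quotient.mk z

end Tensor

section ESub

variable (A : Type) [Ring A] [Algebra k A] (N : Type) [AddCommGroup N] [Module k N]
  [Module A N] [IsScalarTower k A N]

variable (k) in
/-- Multiplication by `e` as a `k`-linear endomorphism of an `A`-module. -/
def eMap (e : A) : N →ₗ[k] N where
  toFun x := e • x
  map_add' x y := smul_add e x y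
  map_smul' c x := by
    simp only [RingHom.id_apply]
    rw [← algebraMap_smul A c x, ← mul_smul, ← Algebra.commutes, mul_smul, algebraMap_smul]

variable (k) in
/-- The `k`-submodule `eN` of an `A`-module `N`. -/
def eSub (e : A) : Submodule k N := LinearMap.range (eMap k A N e)

end ESub

section Grading

variable {A M : Type}

variable (k) in
/-- `𝒜` is an algebra grading of `A`. -/
def IsAlgGrading [Ring A] [Algebra k A] (𝒜 : ℤ → Submodule k A) : Prop :=
  (1 : A) ∈ 𝒜 0 ∧ (∀ {c₁ c₂ : ℤ} {a b : A}, a ∈ 𝒜 c₁ → b ∈ 𝒜 c₂ → a * b ∈ 𝒜 (c₁ + c₂)) ∧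
    DirectSum.IsInternal 𝒜

variable (k) in
/-- `gr` is a grading of the `A`-module `M` compatible with the algebra grading `𝒜`. -/
def IsModGrading [Ring A] [Algebra k A] [AddCommGroup M] [Module k M] [Module A M]
    (𝒜 : ℤ → Submodule k A) (gr : ℤ → Submodule k M) : Prop :=
  DirectSum.IsInternal gr ∧
    ∀ {c m : ℤ} {a : A} {x : M}, a ∈ 𝒜 c → x ∈ gr m → a • x ∈ gr (c + m)

end Grading

section KLRGrading

/-- The canonical grading property for `R(n)`-type quotients: images of `e(ν)` have degree 0,
`x_a e(ν)` has degree `(α_{ν_a}, α_{ν_a})`, and `τ_l e(ν)` has degree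
`-(α_{ν_l}, α_{ν_{l+1}})`.  Here `p : R(n) → A` is the canonical projection onto the
quotient under consideration. -/
def IsKLRGrading {n : ℕ} {A : Type} [Ring A] [Algebra k A] (p : Alg C n →ₐ[k] A)
    (𝒜 : ℤ → Submodule k A) : Prop :=
  IsAlgGrading k 𝒜 ∧
  (∀ ν : Fin n → I, p (Ee C ν) ∈ 𝒜 0) ∧
  (∀ (a : Fin n) (ν : Fin n → I), p (Xx C a * Ee C ν) ∈ 𝒜 (B C (ν a) (ν a))) ∧
  (∀ (l : ℕ) (h : l + 1 < n) (ν : Fin n → I),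
    p (Tt C l h * Ee C ν) ∈ 𝒜 (-(B C (ν ⟨l, Nat.lt_of_succ_lt h⟩) (ν ⟨l + 1, h⟩))))

end KLRGrading

end KLR
namespace KLR

open scoped TensorProduct

variable {k : Type} [Field k] {I : Type} [Fintype I] [DecidableEq I] (C : CartanDatum k I)

section IndGrading

variable (S B M : Type) [Ring S] [Algebra k S] [Ring B] [Algebra k B]
  [AddCommGroup M] [Module k M] [Module S M] [IsScalarTower k S M]

variable (k) in
/-- The induced grading on the balanced tensor product `B ⊗_S M`. -/
def otGr (φ : S →ₙₐ[k] B) (𝒜 : ℤ → Submodule k B) (gr : ℤ → Submodule k M)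
    (c : ℤ) : Submodule k (OT k S B M φ) :=
  Submodule.span k {z | ∃ (c₁ c₂ : ℤ) (b : B) (m : M),
    c₁ + c₂ = c ∧ b ∈ 𝒜 c₁ ∧ m ∈ gr c₂ ∧ z = OTmk k S B M φ (b ⊗ₜ[k] m)}

end IndGrading

section ESubGrading

variable (A N : Type) [Ring A] [Algebra k A] [AddCommGroup N] [Module k N]
  [Module A N] [IsScalarTower k A N]

variable (k) in
/-- The induced grading on the submodule `eN ⊆ N`. -/
def eSubGr (e : A) (gr : ℤ → Submodule k N) (c : ℤ) : Submodule k ↥(eSub k A N e) :=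
  (gr c).comap (eSub k A N e).subtype

end ESubGrading

section Instances

variable (n : ℕ) (β : I → ℕ) (Λ : I → ℕ)

noncomputable instance : Module (bAlg C n β) (cAlg C Λ n β) :=
  Module.compHom _ (toC C (Λ := Λ) (n := n) (β := β)).toRingHom

instance : IsScalarTower k (bAlg C n β) (cAlg C Λ n β) := by
  constructor
  intro c s m
  show (toC C (c • s)) * m = c • (toC C s * m)
  rw [map_smul, Algebra.smul_mul_assoc]

end Instances


end KLR
namespace KLR

open scoped TensorProduct

variable {k : Type} [Field k] {I : Type} [Fintype I] [DecidableEq I] (C : CartanDatum k I)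

/-- `⟨h_i, β⟩ = Σ_j k_j a_{ij}`. -/
def pairH (i : I) (β : I → ℕ) : ℤ := ∑ j, (β j : ℤ) * C.a i j

/-- `(α_i, β) = Σ_j k_j (α_i, α_j)`. -/
def pairB (i : I) (β : I → ℕ) : ℤ := ∑ j, (β j : ℤ) * B C i j

/-- The ordered product `τ_1 τ_2 ⋯ τ_n` in `R(β+α_i)`-type quotients. -/
noncomputable def tauProd (n : ℕ) (γ : I → ℕ) : bAlg C (n + 1) γ :=
  (List.ofFn (fun l : Fin n => toB C (Tt C l.val (Nat.succ_lt_succ l.isLt)))).prod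

/-- The right ideal `Ae` as a `k`-submodule. -/
noncomputable def rId {A : Type} [Ring A] [Algebra k A] (e : A) : Submodule k A :=
  LinearMap.range (LinearMap.mulRight k e)

/-- The left ideal `eA` as a `k`-submodule. -/
noncomputable def lId {A : Type} [Ring A] [Algebra k A] (e : A) : Submodule k A :=
  LinearMap.range (LinearMap.mulLeft k e)

variable (k) in
/-- Characterization of the module structure on `eN` over `S'` acting through
the (non-unital) homomorphism `φ : S' → A`. -/
def IsEAction {A N S' : Type} [Ring A] [Algebra k A] [AddCommGroup N] [Module k N]
    [Module A N] [IsScalarTower k A N] [Ring S'] [Algebra k S']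
    (e : A) (φ : S' →ₙₐ[k] A) (inst : Module S' ↥(eSub k A N e)) : Prop :=
  letI := inst
  ∀ (r : S') (x : ↥(eSub k A N e)), ((r • x : ↥(eSub k A N e)) : N) = φ r • (x : N)

end KLR

namespace KLR

variable {k : Type} [Field k] {I : Type} [Fintype I] [DecidableEq I] (C : CartanDatum k I)

/-- The image of `e(β,α_i)` in `R(β+α_i)`. -/
noncomputable def eRb (n : ℕ) (β : I → ℕ) (i : I) : bAlg C (n + 1) (addA β i) :=
  toB C (eR C n β i)

/-- The image of `e(α_i,β)` in `R(β+α_i)`. -/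
noncomputable def eLb (n : ℕ) (β : I → ℕ) (i : I) : bAlg C (n + 1) (addA β i) :=
  toB C (eL C n β i)

/-- The image of `e(β-α_i,α_i)` in `R(β)`. -/
noncomputable def eDb (n : ℕ) (β : I → ℕ) (i : I) : bAlg C n β :=
  toB C (eD C n β i)

/-- The image of `e(β,α_i)` in `R^Λ(β+α_i)`. -/
noncomputable def eRc (Λ : I → ℕ) (n : ℕ) (β : I → ℕ) (i : I) :
    cAlg C Λ (n + 1) (addA β i) :=
  toCB C Λ (eR C n β i)

/-- The image of `e(β-α_i,α_i)` in `R^Λ(β)`. -/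
noncomputable def eDc (Λ : I → ℕ) (n : ℕ) (β : I → ℕ) (i : I) : cAlg C Λ n β :=
  toCB C Λ (eD C n β i)

end KLR

namespace KLR

variable {k : Type} [Field k] {I : Type} [Fintype I] [DecidableEq I]

variable (k) in
/-- Bundled data of the canonical module structure on `eN` over `S'`, acting through
the non-unital homomorphism `φ : S' → A`, together with its scalar-tower property. -/
structure EData {A S' : Type} (N : Type) [Ring A] [Algebra k A] [AddCommGroup N]
    [Module k N] [Module A N] [IsScalarTower k A N] [Ring S'] [Algebra k S']
    (e : A) (φ : S' →ₙₐ[k] A) : Type where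
  inst : Module S' ↥(eSub k A N e)
  compat : IsEAction k e φ inst
  tower : letI := inst; IsScalarTower k S' ↥(eSub k A N e)

end KLR

namespace KLR
/-- `β - α_i` (truncated subtraction). -/
def subA {I : Type} [DecidableEq I] (β : I → ℕ) (i : I) : I → ℕ :=
  fun j => β j - if j = i then 1 else 0
end KLR

/-!
Write `S = R(β)`, `B = R(β + α_i)` and `e = e(β, α_i)`, so that `E_i F_i M = e (B e ⊗_S M)`.
Straightening words shows that the monomials `τ_a ⋯ τ_{n-1} x_n^c` generate `R(n + 1)` over
`R(n)`. They are independent because in Rouquier's polynomial representation they move the last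
variable to different places, with triangular leading terms; hence `B e` is a free right
`S`-module on their images. Grouping the basis elements according to whether they cross the last
strand gives `e B e = S θ S ⊕ S[x_n]`, where `θ = e τ e` crosses two strands labelled `i`. Since
`θ` commutes with `R(β - α_i)`, there is a map from `S e(β - α_i, α_i) ⊗_{R(β - α_i)} e(β - α_i,
α_i) S` to `S θ S`; it is bijective because it takes a basis to part of a basis. Tensoring with
`M` over `S` gives the decomposition, and the degrees of `θ` and `x_n` give the grading shifts.
-/

namespace KLR

section RationalFunctions

variable (k : Type) [Field k]

/-- The field of rational functions in the variables `x_0, x_1, …`. -/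
abbrev RatFun : Type := FractionRing (MvPolynomial ℕ k)

/-- The variable `x_j`, as a rational function. -/
noncomputable def ratVar (j : ℕ) : RatFun k :=
  algebraMap (MvPolynomial ℕ k) (RatFun k) (MvPolynomial.X j)

/-- The action of a permutation of the variables on rational functions. -/
noncomputable def permAct (w : Equiv.Perm ℕ) : RatFun k ≃ₐ[k] RatFun k :=
  IsFractionRing.fieldEquivOfAlgEquiv k (RatFun k) (RatFun k) (MvPolynomial.renameEquiv k w)

theorem permAct_ratVar (w : Equiv.Perm ℕ) (j : ℕ) :
    permAct k w (ratVar k j) = ratVar k (w j) := by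
  simp [permAct, ratVar]

theorem permAct_permAct (w w' : Equiv.Perm ℕ) (f : RatFun k) :
    permAct k w (permAct k w' f) = permAct k (w * w') f := by
  have hmul : MvPolynomial.renameEquiv k (w * w') =
      (MvPolynomial.renameEquiv k w').trans (MvPolynomial.renameEquiv k w) := by
    ext p
    simp
  rw [permAct, permAct, permAct, hmul, IsFractionRing.fieldEquivOfAlgEquiv_trans _ _ (RatFun k)]
  rfl

theorem permAct_one (f : RatFun k) : permAct k 1 f = f := by
  have hone : MvPolynomial.renameEquiv k (1 : Equiv.Perm ℕ) = AlgEquiv.refl := by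
    ext p
    simp
  rw [permAct, hone, IsFractionRing.fieldEquivOfAlgEquiv_refl]
  rfl

theorem ratVar_injective : Function.Injective (ratVar k) := fun _ _ h =>
  MvPolynomial.X_injective (IsFractionRing.injective (MvPolynomial ℕ k) (RatFun k) h)

variable {k} in
theorem ratVar_sub_ne_zero {a b : ℕ} (h : a ≠ b) : ratVar k a - ratVar k b ≠ 0 :=
  sub_ne_zero.2 fun h' => h (ratVar_injective k h')

end RationalFunctions

/-- An arbitrary enumeration of the index set, used to break the symmetry between `i` and `j`
in the factorization `Pel_mul_Pel` of `Q_{ij}`. -/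
noncomputable def indexRank {I : Type} [Fintype I] (i : I) : ℕ := (Fintype.equivFin I i).val

theorem indexRank_injective {I : Type} [Fintype I] :
    Function.Injective (indexRank : I → ℕ) := fun _ _ h =>
  (Fintype.equivFin I).injective (Fin.ext h)

section StructurePolynomials

variable {k : Type} [Field k] {I : Type} [Fintype I] [DecidableEq I] (C : CartanDatum k I)

theorem map_Qel {A A' : Type} [Ring A] [Algebra k A] [Ring A'] [Algebra k A']
    (g : A →ₐ[k] A') (i j : I) (u v : A) :
    g (Qel C i j u v) = Qel C i j (g u) (g v) := by
  simp only [Qel, apply_ite g, map_sum, map_smul, map_mul, map_pow, map_zero]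

theorem map_Qdiff {A A' : Type} [Ring A] [Algebra k A] [Ring A'] [Algebra k A']
    (g : A →ₐ[k] A') (i j : I) (u v w : A) :
    g (Qdiff C i j u v w) = Qdiff C i j (g u) (g v) (g w) := by
  simp only [Qdiff, apply_ite g, map_sum, map_smul, map_mul, map_pow, map_zero]

theorem Qel_symm {A : Type} [CommRing A] [Algebra k A] (i j : I) (u v : A) :
    Qel C i j u v = Qel C j i v u := by
  unfold Qel
  by_cases hij : i = j
  · rw [if_pos hij, if_pos hij.symm]
  · rw [if_neg hij, if_neg (Ne.symm hij), Finset.sum_comm]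
    refine Finset.sum_congr rfl fun p _ => Finset.sum_congr rfl fun q _ => ?_
    have hdeg : C.d i * (q : ℤ) + C.d j * (p : ℤ) = -(C.d i * C.a i j) ↔
        C.d j * (p : ℤ) + C.d i * (q : ℤ) = -(C.d j * C.a j i) := by
      rw [C.symmetrize i j, add_comm]
    simp only [hdeg, C.t_symm i j q p, mul_comm (u ^ q)]

theorem sub_mul_Qdiff {A : Type} [CommRing A] [Algebra k A] (i j : I) (u v w : A) :
    (u - w) * Qdiff C i j u v w = Qel C i j u v - Qel C i j w v := by
  unfold Qel Qdiff
  split_ifs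
  · simp
  · rw [Finset.mul_sum, ← Finset.sum_sub_distrib]
    refine Finset.sum_congr rfl fun p _ => ?_
    rw [Finset.mul_sum, ← Finset.sum_sub_distrib]
    refine Finset.sum_congr rfl fun q _ => ?_
    split_ifs
    · rw [mul_smul_comm, ← smul_sub, ← mul_assoc, mul_comm (u - w), geom_sum₂_mul, sub_mul]
    · simp

theorem Qel_zero_right {A : Type} [Ring A] [Algebra k A] {i j : I} (hij : i ≠ j) (u : A) :
    Qel C i j u 0 = C.t i j (-(C.a i j)).toNat 0 • u ^ (-(C.a i j)).toNat := by
  have htoNat : (((-(C.a i j)).toNat : ℕ) : ℤ) = -(C.a i j) :=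
    Int.toNat_of_nonneg (by have := C.a_nonpos i j hij; omega)
  rw [Qel, if_neg hij, Finset.sum_eq_single (-(C.a i j)).toNat, Finset.sum_eq_single 0]
  · rw [if_pos (by rw [htoNat]; push_cast; ring), pow_zero, mul_one]
  · intro q _ hq
    simp [hq]
  · simp
  · intro p _ hp
    refine Finset.sum_eq_zero fun q _ => ?_
    rcases eq_or_ne q 0 with rfl | hq
    · refine if_neg fun h => hp ?_
      have : C.d i * (p : ℤ) = C.d i * (-(C.a i j)) := by push_cast at h; linarith
      have := mul_left_cancel₀ (C.d_pos i).ne' this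
      omega
    · simp [hq]
  · simp

theorem Qel_ratVar_ne_zero {i j : I} (hij : i ≠ j) {l m : ℕ} (hlm : l ≠ m) :
    Qel C i j (ratVar k l) (ratVar k m) ≠ 0 := by
  intro h
  have hpoly : Qel C i j (MvPolynomial.X l : MvPolynomial ℕ k) (MvPolynomial.X m) = 0 :=
    IsFractionRing.injective (MvPolynomial ℕ k) (RatFun k) <| by
      rw [map_zero, ← h]
      exact map_Qel C (IsScalarTower.toAlgHom k (MvPolynomial ℕ k) (RatFun k)) i j _ _
  have heval := congrArg (MvPolynomial.aeval fun a : ℕ => if a = l then (1 : k) else 0) hpoly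
  rw [map_Qel, MvPolynomial.aeval_X, MvPolynomial.aeval_X, if_pos rfl, if_neg hlm.symm,
    Qel_zero_right C hij, one_pow, smul_eq_mul, mul_one, map_zero] at heval
  exact C.t_lead i j hij heval

/-- The polynomials `P_{ij}` of Rouquier's polynomial representation, which satisfy
`P_{ij}(u,v) P_{ji}(v,u) = Q_{ij}(u,v)`. -/
noncomputable def Pel {A : Type} [Ring A] [Algebra k A] (i j : I) (u v : A) : A :=
  if indexRank i < indexRank j then Qel C i j u v else 1

theorem Pel_mul_Pel {A : Type} [CommRing A] [Algebra k A] {i j : I} (hij : i ≠ j) (u v : A) :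
    Pel C i j u v * Pel C j i v u = Qel C i j u v := by
  unfold Pel
  rcases lt_trichotomy (indexRank i) (indexRank j) with h | h | h
  · rw [if_pos h, if_neg (not_lt.2 h.le), mul_one]
  · exact absurd (indexRank_injective h) hij
  · rw [if_pos h, if_neg (not_lt.2 h.le), one_mul, Qel_symm]

end StructurePolynomials

section AdjacentSwap

/-- The simple transposition `s_l` of the positions `l` and `l + 1`. -/
def adjSwap (l : ℕ) : Equiv.Perm ℕ := Equiv.swap l (l + 1)

theorem adjSwap_self (l : ℕ) : adjSwap l l = l + 1 := Equiv.swap_apply_left l (l + 1)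

theorem adjSwap_succ (l : ℕ) : adjSwap l (l + 1) = l := Equiv.swap_apply_right l (l + 1)

theorem adjSwap_of_ne {l j : ℕ} (h : j ≠ l) (h' : j ≠ l + 1) : adjSwap l j = j :=
  Equiv.swap_apply_of_ne_of_ne h h'

theorem adjSwap_add_two (l : ℕ) : adjSwap l (l + 2) = l + 2 :=
  adjSwap_of_ne (by omega) (by omega)

theorem adjSwap_succ_self (l : ℕ) : adjSwap (l + 1) l = l :=
  adjSwap_of_ne (by omega) (by omega)

theorem adjSwap_mul_self (l : ℕ) : adjSwap l * adjSwap l = 1 := Equiv.swap_mul_self l (l + 1)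

theorem adjSwap_mul_comm {l m : ℕ} (h : l + 1 < m ∨ m + 1 < l) :
    adjSwap l * adjSwap m = adjSwap m * adjSwap l := by
  ext j
  simp only [Equiv.Perm.mul_apply, adjSwap, Equiv.swap_apply_def]
  split_ifs <;> omega

theorem adjSwap_braid (l : ℕ) :
    adjSwap (l + 1) * adjSwap l * adjSwap (l + 1) = adjSwap l * adjSwap (l + 1) * adjSwap l := by
  ext j
  simp only [Equiv.Perm.mul_apply, adjSwap, Equiv.swap_apply_def]
  split_ifs <;> omega

variable {α : Type*}

theorem comp_adjSwap_comp_adjSwap (l : ℕ) (μ : ℕ → α) : (μ ∘ adjSwap l) ∘ adjSwap l = μ := by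
  rw [Function.comp_assoc, ← Equiv.Perm.coe_mul, adjSwap_mul_self, Equiv.Perm.coe_one,
    Function.comp_id]

theorem comp_adjSwap_of_eq {l : ℕ} {μ : ℕ → α} (h : μ l = μ (l + 1)) : μ ∘ adjSwap l = μ := by
  funext j
  rw [Function.comp_apply]
  rcases eq_or_ne j l with rfl | hl
  · rw [adjSwap_self, h]
  rcases eq_or_ne j (l + 1) with rfl | hl'
  · rw [adjSwap_succ, h]
  · rw [adjSwap_of_ne hl hl']

theorem comp_adjSwap_braid (l : ℕ) (μ : ℕ → α) :
    ((μ ∘ adjSwap (l + 1)) ∘ adjSwap l) ∘ adjSwap (l + 1) =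
      ((μ ∘ adjSwap l) ∘ adjSwap (l + 1)) ∘ adjSwap l := by
  simp only [Function.comp_assoc, ← Equiv.Perm.coe_mul, adjSwap_braid]

variable {k : Type} [Field k]

theorem permAct_adjSwap_adjSwap (l : ℕ) (f : RatFun k) :
    permAct k (adjSwap l) (permAct k (adjSwap l) f) = f := by
  rw [permAct_permAct, adjSwap_mul_self, permAct_one]

theorem permAct_adjSwap_braid (l : ℕ) (f : RatFun k) :
    permAct k (adjSwap (l + 1)) (permAct k (adjSwap l) (permAct k (adjSwap (l + 1)) f)) =
      permAct k (adjSwap l) (permAct k (adjSwap (l + 1)) (permAct k (adjSwap l) f)) := by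
  simp only [permAct_permAct, ← mul_assoc, adjSwap_braid]

end AdjacentSwap

section TauOperator

/-- The space of families of rational functions indexed by infinite words in `I`. The algebra
`R(n)` acts on it through the first `n` variables and letters. -/
abbrev RatRep (k I : Type) [Field k] : Type := (ℕ → I) → RatFun k

variable {k : Type} [Field k] {I : Type}

/-- The coefficient of the identity in the operator `τ_l`. -/
noncomputable def demazureCoeff [DecidableEq I] (a b : I) (u v : RatFun k) : RatFun k :=
  if a = b then (u - v)⁻¹ else 0

theorem permAct_demazureCoeff [DecidableEq I] (w : Equiv.Perm ℕ) (a b : I) (u v : RatFun k) :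
    permAct k w (demazureCoeff a b u v) = demazureCoeff a b (permAct k w u) (permAct k w v) := by
  unfold demazureCoeff
  split_ifs <;> simp

theorem demazureCoeff_comm [DecidableEq I] (a b : I) (u v : RatFun k) :
    demazureCoeff a b u v = -demazureCoeff b a v u := by
  unfold demazureCoeff
  split_ifs with hab hba hba
  · rw [← neg_sub v u, inv_neg]
  · exact absurd hab.symm hba
  · exact absurd hba.symm hab
  · rw [neg_zero]

/- When all three letters agree this is Arnold's relation between the functions
`1 / (x_i - x_j)`; otherwise both sides vanish. -/
theorem demazureCoeff_mul_demazureCoeff [DecidableEq I] (a b c : I) {u v w : RatFun k}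
    (huv : u - v ≠ 0) (hvw : v - w ≠ 0) (huw : u - w ≠ 0) :
    demazureCoeff a b u v * demazureCoeff b c v w =
      demazureCoeff a c u w * (demazureCoeff a b u v + demazureCoeff b c v w) := by
  unfold demazureCoeff
  by_cases hab : a = b <;> by_cases hbc : b = c <;> by_cases hac : a = c
  · simp only [hab, hbc, if_true]
    field_simp
    ring
  all_goals simp_all

variable [Fintype I] [DecidableEq I] (C : CartanDatum k I)

/-- The coefficient of the permutation `s_l` in the operator `τ_l`. -/
noncomputable def crossCoeff (a b : I) (u v : RatFun k) : RatFun k :=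
  if a = b then (u - v)⁻¹ else Pel C b a v u

theorem permAct_crossCoeff (w : Equiv.Perm ℕ) (a b : I) (u v : RatFun k) :
    permAct k w (crossCoeff C a b u v) = crossCoeff C a b (permAct k w u) (permAct k w v) := by
  unfold crossCoeff Pel
  split_ifs
  · simp
  · exact map_Qel C (permAct k w).toAlgHom b a v u
  · simp

theorem crossCoeff_ne_zero (a b : I) {l m : ℕ} (h : l ≠ m) :
    crossCoeff C a b (ratVar k l) (ratVar k m) ≠ 0 := by
  unfold crossCoeff Pel
  split_ifs with hab
  · exact inv_ne_zero (ratVar_sub_ne_zero h)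
  · exact Qel_ratVar_ne_zero C (Ne.symm hab) h.symm
  · exact one_ne_zero

theorem crossCoeff_mul_crossCoeff (a b : I) (u v : RatFun k) :
    crossCoeff C a b u v * crossCoeff C b a v u =
      Qel C a b u v - demazureCoeff a b u v ^ 2 := by
  by_cases hab : a = b
  · subst hab
    simp only [crossCoeff, demazureCoeff, Qel, if_true]
    rw [← neg_sub u v, inv_neg]
    ring
  · simp only [crossCoeff, demazureCoeff, if_neg hab, if_neg (Ne.symm hab)]
    rw [mul_comm, Pel_mul_Pel C hab]
    ring

theorem demazureCoeff_mul_Qel_sub (a b c : I) {u v w : RatFun k} (huw : u - w ≠ 0) :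
    demazureCoeff a c u w * (Qel C a b u v - Qel C b c v w) =
      if a = c then Qdiff C a b u v w else 0 := by
  unfold demazureCoeff
  split_ifs with hac
  · subst hac
    rw [Qel_symm C b, ← sub_mul_Qdiff, inv_mul_cancel_left₀ huw]
  · rw [zero_mul]

/-- The operator by which `τ_l` acts: on equal adjacent letters it is the Demazure operator
`f ↦ (s_l f - f) / (x_l - x_{l+1})`, on distinct letters a multiple of `s_l`. -/
noncomputable def tauOp (l : ℕ) : Module.End k (RatRep k I) where
  toFun f μ := crossCoeff C (μ l) (μ (l + 1)) (ratVar k l) (ratVar k (l + 1))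
      * permAct k (adjSwap l) (f (μ ∘ adjSwap l))
    - demazureCoeff (μ l) (μ (l + 1)) (ratVar k l) (ratVar k (l + 1)) * f μ
  map_add' f g := by
    funext μ
    simp only [Pi.add_apply, map_add]
    ring
  map_smul' c f := by
    funext μ
    simp only [Pi.smul_apply, map_smul, RingHom.id_apply, smul_sub, mul_smul_comm]

theorem tauOp_apply (l : ℕ) (f : RatRep k I) (μ : ℕ → I) :
    tauOp C l f μ = crossCoeff C (μ l) (μ (l + 1)) (ratVar k l) (ratVar k (l + 1))
        * permAct k (adjSwap l) (f (μ ∘ adjSwap l))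
      - demazureCoeff (μ l) (μ (l + 1)) (ratVar k l) (ratVar k (l + 1)) * f μ := rfl

theorem tauOp_tauOp (l : ℕ) (f : RatRep k I) (μ : ℕ → I) :
    tauOp C l (tauOp C l f) μ =
      Qel C (μ l) (μ (l + 1)) (ratVar k l) (ratVar k (l + 1)) * f μ := by
  simp only [tauOp_apply, map_sub, map_mul, permAct_crossCoeff, permAct_demazureCoeff,
    permAct_ratVar, adjSwap_self, adjSwap_succ, Function.comp_apply, comp_adjSwap_comp_adjSwap,
    permAct_adjSwap_adjSwap]
  rw [demazureCoeff_comm (μ (l + 1)) (μ l)]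
  linear_combination
    f μ * crossCoeff_mul_crossCoeff C (μ l) (μ (l + 1)) (ratVar k l) (ratVar k (l + 1))

theorem tauOp_comm {l m : ℕ} (h : l + 1 < m ∨ m + 1 < l) (f : RatRep k I) :
    tauOp C l (tauOp C m f) = tauOp C m (tauOp C l f) := by
  funext μ
  have hμ : (μ ∘ adjSwap l) ∘ adjSwap m = (μ ∘ adjSwap m) ∘ adjSwap l := by
    simp only [Function.comp_assoc, ← Equiv.Perm.coe_mul, adjSwap_mul_comm h]
  have hact (g) : permAct k (adjSwap l) (permAct k (adjSwap m) g) =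
      permAct k (adjSwap m) (permAct k (adjSwap l) g) := by
    rw [permAct_permAct, permAct_permAct, adjSwap_mul_comm h]
  have hlm : adjSwap l m = m := adjSwap_of_ne (by omega) (by omega)
  have hlm' : adjSwap l (m + 1) = m + 1 := adjSwap_of_ne (by omega) (by omega)
  have hml : adjSwap m l = l := adjSwap_of_ne (by omega) (by omega)
  have hml' : adjSwap m (l + 1) = l + 1 := adjSwap_of_ne (by omega) (by omega)
  simp only [tauOp_apply, map_sub, map_mul, permAct_crossCoeff, permAct_demazureCoeff,
    permAct_ratVar, Function.comp_apply, hlm, hlm', hml, hml', hμ, hact]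
  ring

theorem tauOp_ratVar_mul (l m : ℕ) (f : RatRep k I) (μ : ℕ → I) :
    tauOp C l (fun ν => ratVar k m * f ν) μ - ratVar k (adjSwap l m) * tauOp C l f μ =
      (if m = l ∧ μ l = μ (l + 1) then -1 else if m = l + 1 ∧ μ l = μ (l + 1) then 1 else 0)
        * f μ := by
  have hne := ratVar_sub_ne_zero (k := k) (Nat.succ_ne_self l).symm
  simp only [tauOp_apply, map_mul, permAct_ratVar]
  by_cases h : μ l = μ (l + 1)
  · rcases eq_or_ne m l with rfl | hl
    · simp only [crossCoeff, demazureCoeff, h, if_true, adjSwap_self, and_self]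
      field_simp
      ring
    rcases eq_or_ne m (l + 1) with rfl | hl'
    · simp only [crossCoeff, demazureCoeff, h, if_true, adjSwap_succ, Nat.succ_ne_self,
        false_and, and_self, if_false]
      field_simp
      ring
    · simp only [crossCoeff, demazureCoeff, h, if_true, adjSwap_of_ne hl hl', hl, hl',
        false_and, if_false]
      ring
  · simp only [crossCoeff, demazureCoeff, h, if_false, and_false]
    ring

theorem tauOp_braid (l : ℕ) (f : RatRep k I) (μ : ℕ → I) :
    tauOp C (l + 1) (tauOp C l (tauOp C (l + 1) f)) μ
      - tauOp C l (tauOp C (l + 1) (tauOp C l f)) μ =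
    (if μ l = μ (l + 2) then
      Qdiff C (μ l) (μ (l + 1)) (ratVar k l) (ratVar k (l + 1)) (ratVar k (l + 2)) else 0)
        * f μ := by
  have hd := demazureCoeff_mul_demazureCoeff (μ l) (μ (l + 1)) (μ (l + 2))
    (ratVar_sub_ne_zero (k := k) (show l ≠ l + 1 by omega))
    (ratVar_sub_ne_zero (show l + 1 ≠ l + 2 by omega))
    (ratVar_sub_ne_zero (show l ≠ l + 2 by omega))
  have hQ := demazureCoeff_mul_Qel_sub C (μ l) (μ (l + 1)) (μ (l + 2)) (v := ratVar k (l + 1))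
    (ratVar_sub_ne_zero (k := k) (show l ≠ l + 2 by omega))
  have hc₁ := crossCoeff_mul_crossCoeff C (μ l) (μ (l + 1)) (ratVar k l) (ratVar k (l + 1))
  have hc₂ := crossCoeff_mul_crossCoeff C (μ (l + 1)) (μ (l + 2)) (ratVar k (l + 1))
    (ratVar k (l + 2))
  simp only [tauOp_apply, map_sub, map_mul, permAct_crossCoeff, permAct_demazureCoeff,
    permAct_ratVar, Function.comp_apply, adjSwap_self, adjSwap_succ, adjSwap_add_two,
    adjSwap_succ_self, show l + 1 + 1 = l + 2 from rfl,
    show adjSwap (l + 1) (l + 1) = l + 2 from adjSwap_self (l + 1),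
    show adjSwap (l + 1) (l + 2) = l + 1 from adjSwap_succ (l + 1),
    comp_adjSwap_comp_adjSwap, permAct_adjSwap_adjSwap, comp_adjSwap_braid,
    permAct_adjSwap_braid]
  rw [← hQ, demazureCoeff_comm (μ (l + 2)) (μ (l + 1)), demazureCoeff_comm (μ (l + 1)) (μ l)]
  generalize permAct k (adjSwap l) (f (μ ∘ adjSwap l)) = f₀
  generalize permAct k (adjSwap (l + 1)) (f (μ ∘ adjSwap (l + 1))) = f₁
  generalize demazureCoeff (μ l) (μ (l + 1)) (ratVar k l) (ratVar k (l + 1)) = d₀₁ at *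
  generalize demazureCoeff (μ l) (μ (l + 2)) (ratVar k l) (ratVar k (l + 2)) = d₀₂ at *
  generalize demazureCoeff (μ (l + 1)) (μ (l + 2)) (ratVar k (l + 1)) (ratVar k (l + 2)) = d₁₂ at *
  linear_combination d₀₂ * f μ * (hc₁ - hc₂) + (d₀₁ - d₁₂) * f μ * hd
    + crossCoeff C (μ (l + 1)) (μ (l + 2)) (ratVar k (l + 1)) (ratVar k (l + 2)) * f₁ * hd
    - crossCoeff C (μ l) (μ (l + 1)) (ratVar k l) (ratVar k (l + 1)) * f₀ * hd

end TauOperator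

section Representation

/-- The word formed by the first `n` letters of an infinite word. -/
def wordPrefix {I : Type} (n : ℕ) (μ : ℕ → I) : Fin n → I := fun a => μ a

theorem val_swap_eq_adjSwap {n l : ℕ} (h : l + 1 < n) (m : Fin n) :
    (Equiv.swap (⟨l, Nat.lt_of_succ_lt h⟩ : Fin n) ⟨l + 1, h⟩ m : ℕ) = adjSwap l m := by
  simp only [adjSwap, Equiv.swap_apply_def, Fin.ext_iff]
  split_ifs <;> rfl

theorem wordPrefix_comp_adjSwap {I : Type} {n l : ℕ} (h : l + 1 < n) (μ : ℕ → I) :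
    wordPrefix n (μ ∘ adjSwap l) =
      wordPrefix n μ ∘ Equiv.swap (⟨l, Nat.lt_of_succ_lt h⟩ : Fin n) ⟨l + 1, h⟩ := by
  funext a
  simp only [wordPrefix, Function.comp_apply, val_swap_eq_adjSwap]

theorem comp_swap_eq_iff {α : Type*} {n : ℕ} (a b : Fin n) (μ ν : Fin n → α) :
    μ ∘ Equiv.swap a b = ν ↔ μ = ν ∘ Equiv.swap a b := by
  constructor <;> rintro rfl <;> funext j <;> simp

variable {k : Type} [Field k] {I : Type}

variable (k) in
/-- The indicator function of the infinite words starting with `ν`. -/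
noncomputable def prefixIndicator [DecidableEq I] {n : ℕ} (ν : Fin n → I) : RatRep k I :=
  fun μ => if wordPrefix n μ = ν then 1 else 0

variable [Fintype I] [DecidableEq I] (C : CartanDatum k I)

/-- The operators by which the generators of `R(n)` act. -/
noncomputable def genOp (n : ℕ) : Gen I n → Module.End k (RatRep k I)
  | Gen.e ν => Algebra.lmul k (RatRep k I) (prefixIndicator k ν)
  | Gen.x a => Algebra.lmul k (RatRep k I) (fun _ => ratVar k a)
  | Gen.tau l _ => tauOp C l

/-- The representation of the free algebra determined by `genOp`. -/
noncomputable def freeRep (n : ℕ) : FA k I n →ₐ[k] Module.End k (RatRep k I) :=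
  FreeAlgebra.lift k (genOp C n)

theorem freeRep_ge {n : ℕ} (ν : Fin n → I) :
    freeRep C n (ge k ν) = Algebra.lmul k (RatRep k I) (prefixIndicator k ν) := by
  simp [freeRep, ge, genOp]

theorem freeRep_gx {n : ℕ} (a : Fin n) :
    freeRep C n (gx k a) = Algebra.lmul k (RatRep k I) (fun _ => ratVar k a) := by
  simp [freeRep, gx, genOp]

theorem freeRep_gt {n : ℕ} (l : ℕ) (h : l + 1 < n) : freeRep C n (gt k l h) = tauOp C l := by
  simp [freeRep, gt, genOp]

theorem freeRep_ge_apply {n : ℕ} (ν : Fin n → I) (f : RatRep k I) (μ : ℕ → I) :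
    freeRep C n (ge k ν) f μ = if wordPrefix n μ = ν then f μ else 0 := by
  simp [freeRep_ge, prefixIndicator]

theorem freeRep_gx_apply {n : ℕ} (a : Fin n) (f : RatRep k I) (μ : ℕ → I) :
    freeRep C n (gx k a) f μ = ratVar k a * f μ := by
  simp [freeRep_gx]

theorem lmul_Qel_apply (i j : I) (g h : RatRep k I) (f : RatRep k I) (μ : ℕ → I) :
    Qel C i j (Algebra.lmul k (RatRep k I) g) (Algebra.lmul k (RatRep k I) h) f μ =
      Qel C i j (g μ) (h μ) * f μ := by
  rw [← map_Qel]
  exact congrArg (· * f μ) (map_Qel C (Pi.evalAlgHom k (fun _ : ℕ → I => RatFun k) μ) i j g h)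

theorem lmul_Qdiff_apply (i j : I) (g h g' : RatRep k I) (f : RatRep k I) (μ : ℕ → I) :
    Qdiff C i j (Algebra.lmul k (RatRep k I) g) (Algebra.lmul k (RatRep k I) h)
      (Algebra.lmul k (RatRep k I) g') f μ = Qdiff C i j (g μ) (h μ) (g' μ) * f μ := by
  rw [← map_Qdiff]
  exact congrArg (· * f μ)
    (map_Qdiff C (Pi.evalAlgHom k (fun _ : ℕ → I => RatFun k) μ) i j g h g')

theorem mul_freeRep_ge_congr {n : ℕ} {ν : Fin n → I} {μ : ℕ → I} {c c' : RatFun k}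
    (f : RatRep k I) (hc : wordPrefix n μ = ν → c = c') :
    c * freeRep C n (ge k ν) f μ = c' * freeRep C n (ge k ν) f μ := by
  rw [freeRep_ge_apply]
  split_ifs with h
  · rw [hc h]
  · rw [mul_zero, mul_zero]

theorem tauOp_mul {l : ℕ} {g g' : RatRep k I} (f : RatRep k I)
    (hact : ∀ μ, permAct k (adjSwap l) (g (μ ∘ adjSwap l)) = g' μ)
    (heq : ∀ μ : ℕ → I, μ l = μ (l + 1) → g μ = g' μ) :
    tauOp C l (g * f) = g' * tauOp C l f := by
  funext μ
  simp only [tauOp_apply, Pi.mul_apply, map_mul, hact]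
  by_cases h : μ l = μ (l + 1)
  · rw [heq μ h]
    ring
  · simp only [demazureCoeff, if_neg h, zero_mul, sub_zero]
    ring

theorem tauOp_prefixIndicator_mul {n : ℕ} (l : ℕ) (h : l + 1 < n) (ν : Fin n → I)
    (f : RatRep k I) :
    tauOp C l (prefixIndicator k ν * f) = prefixIndicator k
      (ν ∘ Equiv.swap (⟨l, Nat.lt_of_succ_lt h⟩ : Fin n) ⟨l + 1, h⟩) * tauOp C l f := by
  refine tauOp_mul C f (fun μ => ?_) fun μ hμ => ?_
  · simp only [prefixIndicator, wordPrefix_comp_adjSwap h, comp_swap_eq_iff,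
      apply_ite (permAct k _), map_one, map_zero]
  · simp only [prefixIndicator, ← comp_swap_eq_iff, ← wordPrefix_comp_adjSwap h,
      comp_adjSwap_of_eq hμ]

theorem freeRep_tau_sq {n : ℕ} (l : ℕ) (h : l + 1 < n) (ν : Fin n → I) (f : RatRep k I) :
    tauOp C l (tauOp C l (freeRep C n (ge k ν) f)) =
      freeRep C n (Qel C (ν ⟨l, Nat.lt_of_succ_lt h⟩) (ν ⟨l + 1, h⟩)
        (gx k ⟨l, Nat.lt_of_succ_lt h⟩) (gx k ⟨l + 1, h⟩) * ge k ν) f := by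
  funext μ
  rw [tauOp_tauOp, map_mul, map_Qel, freeRep_gx, freeRep_gx, Module.End.mul_apply, lmul_Qel_apply]
  refine mul_freeRep_ge_congr C f ?_
  rintro rfl
  rfl

theorem freeRep_tau_x {n : ℕ} (l : ℕ) (h : l + 1 < n) (m : Fin n) (ν : Fin n → I) :
    freeRep C n ((gt k l h * gx k m
        - gx k (Equiv.swap (⟨l, Nat.lt_of_succ_lt h⟩ : Fin n) ⟨l + 1, h⟩ m) * gt k l h) * ge k ν) =
      freeRep C n (if m = ⟨l, Nat.lt_of_succ_lt h⟩ ∧ ν ⟨l, Nat.lt_of_succ_lt h⟩ = ν ⟨l + 1, h⟩ then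
          -(ge k ν)
        else if m = (⟨l + 1, h⟩ : Fin n) ∧ ν ⟨l, Nat.lt_of_succ_lt h⟩ = ν ⟨l + 1, h⟩ then
          ge k ν
        else 0) := by
  refine LinearMap.ext fun f => funext fun μ => ?_
  have hx : freeRep C n (gx k m) (freeRep C n (ge k ν) f) =
      fun μ' => ratVar k m * freeRep C n (ge k ν) f μ' :=
    funext fun μ' => freeRep_gx_apply C m _ μ'
  simp only [map_mul, map_sub, Module.End.mul_apply, LinearMap.sub_apply, Pi.sub_apply,
    freeRep_gx_apply, freeRep_gt, hx, val_swap_eq_adjSwap, tauOp_ratVar_mul]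
  rw [mul_freeRep_ge_congr C f (c' := if m = ⟨l, Nat.lt_of_succ_lt h⟩ ∧
    ν ⟨l, Nat.lt_of_succ_lt h⟩ = ν ⟨l + 1, h⟩ then -1
    else if m = (⟨l + 1, h⟩ : Fin n) ∧ ν ⟨l, Nat.lt_of_succ_lt h⟩ = ν ⟨l + 1, h⟩ then 1 else 0)]
  · split_ifs <;> simp
  · rintro rfl
    simp only [Fin.ext_iff, wordPrefix]

theorem freeRep_braid {n : ℕ} (l : ℕ) (h2 : l + 2 < n) (ν : Fin n → I) :
    freeRep C n ((gt k (l + 1) h2 * gt k l (Nat.lt_of_succ_lt h2) * gt k (l + 1) h2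
        - gt k l (Nat.lt_of_succ_lt h2) * gt k (l + 1) h2 * gt k l (Nat.lt_of_succ_lt h2))
        * ge k ν) =
      freeRep C n (if ν ⟨l, Nat.lt_of_succ_lt (Nat.lt_of_succ_lt h2)⟩ = ν ⟨l + 2, h2⟩ then
          Qdiff C (ν ⟨l, Nat.lt_of_succ_lt (Nat.lt_of_succ_lt h2)⟩)
            (ν ⟨l + 1, Nat.lt_of_succ_lt h2⟩)
            (gx k ⟨l, Nat.lt_of_succ_lt (Nat.lt_of_succ_lt h2)⟩)
            (gx k ⟨l + 1, Nat.lt_of_succ_lt h2⟩)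
            (gx k ⟨l + 2, h2⟩) * ge k ν
        else 0) := by
  refine LinearMap.ext fun f => funext fun μ => ?_
  simp only [map_mul, map_sub, Module.End.mul_apply, LinearMap.sub_apply, Pi.sub_apply,
    freeRep_gt, tauOp_braid]
  rw [mul_freeRep_ge_congr C f (c' := if ν ⟨l, by omega⟩ = ν ⟨l + 2, h2⟩ then
    Qdiff C (ν ⟨l, by omega⟩) (ν ⟨l + 1, by omega⟩)
      (ratVar k l) (ratVar k (l + 1)) (ratVar k (l + 2)) else 0)]
  · split_ifs
    · rw [map_mul, map_Qdiff, freeRep_gx, freeRep_gx, freeRep_gx, Module.End.mul_apply,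
        lmul_Qdiff_apply]
    · simp
  · rintro rfl
    rfl

theorem freeRep_eq_of_Rel {n : ℕ} {a b : FA k I n} (h : Rel C n a b) :
    freeRep C n a = freeRep C n b := by
  cases h with
  | taux l h m ν => exact freeRep_tau_x C l h m ν
  | braid l h ν => exact freeRep_braid C l h ν
  | _ => ?_
  all_goals refine LinearMap.ext fun f => ?_
  case ee ν ν' =>
    funext μ
    rw [map_mul, Module.End.mul_apply, freeRep_ge_apply, freeRep_ge_apply,
      apply_ite (freeRep C n), map_zero]
    by_cases h : ν = ν'
    · rw [if_pos h, freeRep_ge_apply, ← h]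
      split_ifs <;> rfl
    · rw [if_neg h]
      split_ifs with h₁ h₂
      exacts [absurd (h₁.symm.trans h₂) h, rfl, rfl]
  case esum =>
    funext μ
    rw [map_sum, map_one, LinearMap.sum_apply, Finset.sum_apply]
    simp [freeRep_ge_apply]
  case xx a b => rw [map_mul, map_mul, freeRep_gx, freeRep_gx, ← map_mul, ← map_mul, mul_comm]
  case xe a ν => rw [map_mul, map_mul, freeRep_gx, freeRep_ge, ← map_mul, ← map_mul, mul_comm]
  case taue l h ν =>
    rw [map_mul, map_mul, freeRep_gt, freeRep_ge, freeRep_ge]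
    exact tauOp_prefixIndicator_mul C l h ν f
  case tautau l h l' h' hll =>
    rw [map_mul, map_mul, freeRep_gt, freeRep_gt]
    exact tauOp_comm C hll f
  case tausq l h ν =>
    rw [map_mul, map_pow, pow_two, freeRep_gt]
    exact freeRep_tau_sq C l h ν f

/-- The representation of `R(n)` on families of rational functions; it is Rouquier's polynomial
representation, extended to rational functions and infinite words. -/
noncomputable def rep (n : ℕ) : Alg C n →ₐ[k] Module.End k (RatRep k I) :=
  RingQuot.liftAlgHom k ⟨freeRep C n, fun _ _ h => freeRep_eq_of_Rel C h⟩

theorem rep_mkAlgHom {n : ℕ} (a : FA k I n) :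
    rep C n (RingQuot.mkAlgHom k (Rel C n) a) = freeRep C n a := by
  simp [rep]

theorem rep_Ee_apply {n : ℕ} (ν : Fin n → I) (f : RatRep k I) (μ : ℕ → I) :
    rep C n (Ee C ν) f μ = if wordPrefix n μ = ν then f μ else 0 := by
  rw [Ee, rep_mkAlgHom, freeRep_ge_apply]

theorem rep_Xx_apply {n : ℕ} (a : Fin n) (f : RatRep k I) (μ : ℕ → I) :
    rep C n (Xx C a) f μ = ratVar k a * f μ := by
  rw [Xx, rep_mkAlgHom, freeRep_gx_apply]

theorem rep_Tt {n : ℕ} (l : ℕ) (h : l + 1 < n) : rep C n (Tt C l h) = tauOp C l := by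
  rw [Tt, rep_mkAlgHom, freeRep_gt]

end Representation

section SwapWord

variable {I : Type} {N : ℕ}

/-- The word `s_l ν`, obtained from `ν` by swapping the letters in positions `l` and `l + 1`;
it is `ν` if these positions are out of range. -/
def swapWord (l : ℕ) (ν : Fin N → I) : Fin N → I :=
  if h : l + 1 < N then ν ∘ Equiv.swap (⟨l, Nat.lt_of_succ_lt h⟩ : Fin N) ⟨l + 1, h⟩ else ν

theorem swapWord_swapWord (l : ℕ) (ν : Fin N → I) : swapWord l (swapWord l ν) = ν := by
  unfold swapWord
  split_ifs
  · funext j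
    simp
  · rfl

end SwapWord

section Relations

variable {k : Type} [Field k] {I : Type} [Fintype I] [DecidableEq I] (C : CartanDatum k I) (N : ℕ)

/-- The generator `x_j` of `R(N)` for an arbitrary index `j`; it is `0` if `j` is out of range. -/
noncomputable def xGen (j : ℕ) : Alg C N := if h : j < N then Xx C ⟨j, h⟩ else 0

/-- The generator `τ_l` of `R(N)` for an arbitrary index `l`; it is `0` if `l` is out of range. -/
noncomputable def tauGen (l : ℕ) : Alg C N := if h : l + 1 < N then Tt C l h else 0

variable {N}

theorem xGen_of_lt {j : ℕ} (h : j < N) : xGen C N j = Xx C ⟨j, h⟩ := dif_pos h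

theorem tauGen_of_lt {l : ℕ} (h : l + 1 < N) : tauGen C N l = Tt C l h := dif_pos h

theorem xGen_of_not_lt {j : ℕ} (h : ¬j < N) : xGen C N j = 0 := dif_neg h

theorem tauGen_of_not_lt {l : ℕ} (h : ¬l + 1 < N) : tauGen C N l = 0 := dif_neg h

theorem Ee_mul_Ee (ν ν' : Fin N → I) : Ee C ν * Ee C ν' = if ν = ν' then Ee C ν else 0 := by
  have h := RingQuot.mkAlgHom_rel k (Rel.ee (C := C) ν ν')
  rwa [map_mul, apply_ite (RingQuot.mkAlgHom k (Rel C N)), map_zero] at h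

theorem sum_Ee : ∑ ν : Fin N → I, Ee C ν = 1 := by
  have h := RingQuot.mkAlgHom_rel k (Rel.esum (C := C) (n := N))
  rwa [map_sum, map_one] at h

theorem xGen_comm (a b : ℕ) : xGen C N a * xGen C N b = xGen C N b * xGen C N a := by
  by_cases ha : a < N
  · by_cases hb : b < N
    · rw [xGen_of_lt C ha, xGen_of_lt C hb]
      have h := RingQuot.mkAlgHom_rel k (Rel.xx (C := C) (⟨a, ha⟩ : Fin N) ⟨b, hb⟩)
      rwa [map_mul, map_mul] at h
    · simp [xGen_of_not_lt C hb]
  · simp [xGen_of_not_lt C ha]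

theorem xGen_mul_Ee (a : ℕ) (ν : Fin N → I) : xGen C N a * Ee C ν = Ee C ν * xGen C N a := by
  by_cases ha : a < N
  · rw [xGen_of_lt C ha]
    have h := RingQuot.mkAlgHom_rel k (Rel.xe (C := C) (⟨a, ha⟩ : Fin N) ν)
    rwa [map_mul, map_mul] at h
  · simp [xGen_of_not_lt C ha]

theorem tauGen_mul_Ee (l : ℕ) (ν : Fin N → I) :
    tauGen C N l * Ee C ν = Ee C (swapWord l ν) * tauGen C N l := by
  by_cases h : l + 1 < N
  · rw [tauGen_of_lt C h, swapWord, dif_pos h]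
    have h' := RingQuot.mkAlgHom_rel k (Rel.taue (C := C) l h ν)
    rwa [map_mul, map_mul] at h'
  · simp [tauGen_of_not_lt C h]

theorem Ee_mul_tauGen (l : ℕ) (ν : Fin N → I) :
    Ee C ν * tauGen C N l = tauGen C N l * Ee C (swapWord l ν) := by
  rw [tauGen_mul_Ee, swapWord_swapWord]

theorem tauGen_comm {l m : ℕ} (hlm : l + 1 < m ∨ m + 1 < l) :
    tauGen C N l * tauGen C N m = tauGen C N m * tauGen C N l := by
  by_cases h : l + 1 < N
  · by_cases h' : m + 1 < N
    · rw [tauGen_of_lt C h, tauGen_of_lt C h']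
      have hr := RingQuot.mkAlgHom_rel k (Rel.tautau (C := C) l h m h' hlm)
      rwa [map_mul, map_mul] at hr
    · simp [tauGen_of_not_lt C h']
  · simp [tauGen_of_not_lt C h]

theorem tauGen_mul_tauGen_mul_Ee {l : ℕ} (h : l + 1 < N) (ν : Fin N → I) :
    tauGen C N l * tauGen C N l * Ee C ν =
      Qel C (ν ⟨l, Nat.lt_of_succ_lt h⟩) (ν ⟨l + 1, h⟩) (xGen C N l) (xGen C N (l + 1)) *
        Ee C ν := by
  have hr := RingQuot.mkAlgHom_rel k (Rel.tausq (C := C) l h ν)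
  rw [map_mul, map_mul, map_pow, pow_two, map_Qel] at hr
  rwa [tauGen_of_lt C h, xGen_of_lt C (Nat.lt_of_succ_lt h), xGen_of_lt C h]

theorem tauGen_braid_mul_Ee {l : ℕ} (h : l + 2 < N) (ν : Fin N → I) :
    (tauGen C N (l + 1) * tauGen C N l * tauGen C N (l + 1) -
        tauGen C N l * tauGen C N (l + 1) * tauGen C N l) * Ee C ν =
      if ν ⟨l, Nat.lt_of_succ_lt (Nat.lt_of_succ_lt h)⟩ = ν ⟨l + 2, h⟩ then
        Qdiff C (ν ⟨l, Nat.lt_of_succ_lt (Nat.lt_of_succ_lt h)⟩) (ν ⟨l + 1, Nat.lt_of_succ_lt h⟩)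
          (xGen C N l) (xGen C N (l + 1)) (xGen C N (l + 2)) * Ee C ν
      else 0 := by
  have hr := RingQuot.mkAlgHom_rel k (Rel.braid (C := C) l h ν)
  simp only [map_mul, map_sub, apply_ite (RingQuot.mkAlgHom k (Rel C N)), map_zero,
    map_Qdiff] at hr
  rwa [tauGen_of_lt C (Nat.lt_of_succ_lt h), tauGen_of_lt C (show l + 1 + 1 < N from h),
    xGen_of_lt C (Nat.lt_of_succ_lt (Nat.lt_of_succ_lt h)), xGen_of_lt C (Nat.lt_of_succ_lt h),
    xGen_of_lt C h]

theorem tauGen_mul_xGen_mul_Ee {l : ℕ} (h : l + 1 < N) {m : ℕ} (hm : m < N) (ν : Fin N → I) :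
    (tauGen C N l * xGen C N m - xGen C N (adjSwap l m) * tauGen C N l) * Ee C ν =
      if m = l ∧ ν ⟨l, Nat.lt_of_succ_lt h⟩ = ν ⟨l + 1, h⟩ then -Ee C ν
      else if m = l + 1 ∧ ν ⟨l, Nat.lt_of_succ_lt h⟩ = ν ⟨l + 1, h⟩ then Ee C ν else 0 := by
  have hval := val_swap_eq_adjSwap h ⟨m, hm⟩
  have hm' : adjSwap l m < N := hval ▸ Fin.isLt _
  have hr := RingQuot.mkAlgHom_rel k (Rel.taux (C := C) l h ⟨m, hm⟩ ν)
  rw [show Equiv.swap (⟨l, Nat.lt_of_succ_lt h⟩ : Fin N) ⟨l + 1, h⟩ ⟨m, hm⟩ =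
    ⟨adjSwap l m, hm'⟩ from Fin.ext hval] at hr
  simp only [map_mul, map_sub, apply_ite (RingQuot.mkAlgHom k (Rel C N)), map_zero, map_neg,
    Fin.ext_iff] at hr
  rwa [tauGen_of_lt C h, xGen_of_lt C hm, xGen_of_lt C hm']

theorem eq_of_forall_mul_Ee {a b : Alg C N} (h : ∀ ν, a * Ee C ν = b * Ee C ν) : a = b := by
  rw [← mul_one a, ← mul_one b, ← sum_Ee, Finset.mul_sum, Finset.mul_sum]
  exact Finset.sum_congr rfl fun ν _ => h ν

theorem mem_of_forall_mul_Ee_mem {S : Subalgebra k (Alg C N)} {a : Alg C N}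
    (h : ∀ ν, a * Ee C ν ∈ S) : a ∈ S := by
  rw [← mul_one a, ← sum_Ee, Finset.mul_sum]
  exact S.sum_mem fun ν _ => h ν

theorem tauGen_mul_xGen_of_ne {l m : ℕ} (h₁ : m ≠ l) (h₂ : m ≠ l + 1) :
    tauGen C N l * xGen C N m = xGen C N m * tauGen C N l := by
  by_cases h : l + 1 < N
  · by_cases hm : m < N
    · refine eq_of_forall_mul_Ee C fun ν => ?_
      have hr := tauGen_mul_xGen_mul_Ee C h hm ν
      rw [if_neg fun h => h₁ h.1, if_neg fun h => h₂ h.1, adjSwap_of_ne h₁ h₂, sub_mul] at hr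
      exact sub_eq_zero.1 hr
    · simp [xGen_of_not_lt C hm]
  · simp [tauGen_of_not_lt C h]

/-- The subalgebra of `R(N)` generated by all `e(ν)`, the `x_j` with `j < p` and the `τ_l` with
`l + 1 < m`. For `m = p ≤ N` it is the image of `R(m)` together with the idempotents of `R(N)`. -/
def genSubalg (C : CartanDatum k I) (N m p : ℕ) : Subalgebra k (Alg C N) :=
  Algebra.adjoin k (Set.range (Ee C) ∪ xGen C N '' {j | j < p} ∪ tauGen C N '' {l | l + 1 < m})

theorem Ee_mem_genSubalg (m p : ℕ) (ν : Fin N → I) : Ee C ν ∈ genSubalg C N m p :=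
  Algebra.subset_adjoin (Or.inl (Or.inl ⟨ν, rfl⟩))

theorem xGen_mem_genSubalg {m p j : ℕ} (h : j < p) : xGen C N j ∈ genSubalg C N m p :=
  Algebra.subset_adjoin (Or.inl (Or.inr ⟨j, h, rfl⟩))

theorem tauGen_mem_genSubalg {m p l : ℕ} (h : l + 1 < m) : tauGen C N l ∈ genSubalg C N m p :=
  Algebra.subset_adjoin (Or.inr ⟨l, h, rfl⟩)

theorem genSubalg_mono {m m' p p' : ℕ} (h : m ≤ m') (h' : p ≤ p') :
    genSubalg C N m p ≤ genSubalg C N m' p' :=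
  Algebra.adjoin_mono <| Set.union_subset_union
    (Set.union_subset_union le_rfl (Set.image_mono fun _ hj => lt_of_lt_of_le hj h'))
    (Set.image_mono fun _ hl => lt_of_lt_of_le hl h)

theorem genSubalg_mul_mem {m p : ℕ} (W : Submodule k (Alg C N))
    (he : ∀ ν, ∀ u ∈ W, Ee C ν * u ∈ W) (hx : ∀ j < p, ∀ u ∈ W, xGen C N j * u ∈ W)
    (ht : ∀ l, l + 1 < m → ∀ u ∈ W, tauGen C N l * u ∈ W) {d : Alg C N}
    (hd : d ∈ genSubalg C N m p) : ∀ u ∈ W, d * u ∈ W := by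
  induction hd using Algebra.adjoin_induction with
  | mem g hg =>
    obtain ((⟨ν, rfl⟩ | ⟨j, hj, rfl⟩) | ⟨l, hl, rfl⟩) := hg
    exacts [he ν, hx j hj, ht l hl]
  | algebraMap c =>
    intro u hu
    rw [← Algebra.smul_def]
    exact W.smul_mem c hu
  | add a b _ _ ha hb =>
    intro u hu
    rw [add_mul]
    exact W.add_mem (ha u hu) (hb u hu)
  | mul a b _ _ ha hb =>
    intro u hu
    rw [mul_assoc]
    exact ha _ (hb u hu)

theorem tauGen_mul_xGen_sub_mem (l j m p : ℕ) :
    tauGen C N l * xGen C N j - xGen C N (adjSwap l j) * tauGen C N l ∈ genSubalg C N m p := by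
  by_cases h : l + 1 < N
  · by_cases hj : j < N
    · refine mem_of_forall_mul_Ee_mem C fun ν => ?_
      rw [tauGen_mul_xGen_mul_Ee C h hj]
      split_ifs
      exacts [neg_mem (Ee_mem_genSubalg C m p ν), Ee_mem_genSubalg C m p ν, zero_mem _]
    · rw [adjSwap_of_ne (by omega) (by omega), xGen_of_not_lt C hj]
      simp
  · simp [tauGen_of_not_lt C h]

theorem Qel_mem {A : Type} [Ring A] [Algebra k A] {S : Subalgebra k A} {u v : A} (hu : u ∈ S)
    (hv : v ∈ S) (i j : I) : Qel C i j u v ∈ S := by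
  unfold Qel
  split_ifs
  · exact zero_mem _
  · refine S.sum_mem fun p _ => S.sum_mem fun q _ => ?_
    split_ifs
    · exact S.smul_mem (S.mul_mem (S.pow_mem hu _) (S.pow_mem hv _)) _
    · exact zero_mem _

theorem Qdiff_mem {A : Type} [Ring A] [Algebra k A] {S : Subalgebra k A} {u v w : A} (hu : u ∈ S)
    (hv : v ∈ S) (hw : w ∈ S) (i j : I) : Qdiff C i j u v w ∈ S := by
  unfold Qdiff
  split_ifs
  · exact zero_mem _
  · refine S.sum_mem fun p _ => S.sum_mem fun q _ => ?_
    split_ifs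
    · exact S.smul_mem (S.mul_mem (S.sum_mem fun c _ => S.mul_mem (S.pow_mem hu _)
        (S.pow_mem hw _)) (S.pow_mem hv _)) _
    · exact zero_mem _

theorem tauGen_mul_self_mem {l p : ℕ} (m : ℕ) (hp : l + 1 < p) :
    tauGen C N l * tauGen C N l ∈ genSubalg C N m p := by
  by_cases h : l + 1 < N
  · refine mem_of_forall_mul_Ee_mem C fun ν => ?_
    rw [tauGen_mul_tauGen_mul_Ee C h]
    exact mul_mem (Qel_mem C (xGen_mem_genSubalg C (by omega)) (xGen_mem_genSubalg C hp) _ _)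
      (Ee_mem_genSubalg C m p ν)
  · simp [tauGen_of_not_lt C h]

theorem tauGen_braid_sub_mem {l p : ℕ} (m : ℕ) (hp : l + 2 < p) :
    tauGen C N (l + 1) * tauGen C N l * tauGen C N (l + 1) -
      tauGen C N l * tauGen C N (l + 1) * tauGen C N l ∈ genSubalg C N m p := by
  by_cases h : l + 2 < N
  · refine mem_of_forall_mul_Ee_mem C fun ν => ?_
    rw [tauGen_braid_mul_Ee C h]
    split_ifs
    · exact mul_mem (Qdiff_mem C (xGen_mem_genSubalg C (by omega))
        (xGen_mem_genSubalg C (by omega)) (xGen_mem_genSubalg C hp) _ _) (Ee_mem_genSubalg C m p ν)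
    · exact zero_mem _
  · simp [tauGen_of_not_lt C (show ¬l + 1 + 1 < N from h)]

theorem xGen_mul_comm_of_mem_genSubalg {m p j : ℕ} (hj : m ≤ j) {r : Alg C N}
    (hr : r ∈ genSubalg C N m p) : xGen C N j * r = r * xGen C N j := by
  suffices h : genSubalg C N m p ≤ Subalgebra.centralizer k {xGen C N j} from
    Subalgebra.mem_centralizer_iff k |>.1 (h hr) _ rfl
  refine Algebra.adjoin_le ?_
  rintro g ((⟨ν, rfl⟩ | ⟨a, -, rfl⟩) | ⟨l, hl, rfl⟩) <;>
    rw [SetLike.mem_coe, Subalgebra.mem_centralizer_iff] <;> rintro _ rfl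
  · exact xGen_mul_Ee C j ν
  · exact xGen_comm C j a
  · have hl : l + 1 < m := hl
    exact (tauGen_mul_xGen_of_ne C (by omega) (by omega)).symm

theorem genSubalg_self : genSubalg C N N N = ⊤ := by
  refine eq_top_iff.2 fun a _ => ?_
  obtain ⟨b, rfl⟩ := RingQuot.mkAlgHom_surjective k (Rel C N) a
  induction b using FreeAlgebra.induction with
  | grade0 c => rw [AlgHom.commutes]; exact (genSubalg C N N N).algebraMap_mem c
  | grade1 g =>
    cases g with
    | e ν => exact Ee_mem_genSubalg C N N ν
    | x a =>
      have hx := xGen_mem_genSubalg C (N := N) (m := N) a.2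
      rwa [xGen_of_lt C a.2] at hx
    | tau l h =>
      have hτ := tauGen_mem_genSubalg C (N := N) (p := N) h
      rwa [tauGen_of_lt C h] at hτ
  | mul a b ha hb => rw [map_mul]; exact mul_mem (ha trivial) (hb trivial)
  | add a b ha hb => rw [map_add]; exact add_mem (ha trivial) (hb trivial)

end Relations

section Spanning

open Subalgebra (toSubmodule)

variable {k : Type} [Field k] {I : Type} [Fintype I] [DecidableEq I] (C : CartanDatum k I)
variable (N : ℕ)

/-- The underlying subspace of `genSubalg C N m p`. Inclusions between products of such subspaces
and of the lines `tauLine C N m` express the straightening rules of `R(N)`. -/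
abbrev genSpace (m p : ℕ) : Submodule k (Alg C N) := toSubmodule (genSubalg C N m p)

/-- The line spanned by `τ_m`. -/
abbrev tauLine (m : ℕ) : Submodule k (Alg C N) := k ∙ tauGen C N m

/-- The line spanned by `x_m`. -/
abbrev xLine (m : ℕ) : Submodule k (Alg C N) := k ∙ xGen C N m

/-- The subspace `k[x_m]` of polynomials in `x_m`. -/
noncomputable def xPowSpan (m : ℕ) : Submodule k (Alg C N) :=
  Submodule.span k (Set.range fun c : ℕ => xGen C N m ^ c)

variable {N}

theorem one_le_genSpace (m p : ℕ) : 1 ≤ genSpace C N m p :=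
  Submodule.one_le.2 (one_mem (genSubalg C N m p))

theorem genSpace_mul_genSpace (m p : ℕ) :
    genSpace C N m p * genSpace C N m p = genSpace C N m p :=
  Subalgebra.isIdempotentElem_toSubmodule _

theorem genSpace_mono {m m' p p' : ℕ} (h : m ≤ m') (h' : p ≤ p') :
    genSpace C N m p ≤ genSpace C N m' p' :=
  genSubalg_mono C h h'

theorem tauLine_le_genSpace {l m : ℕ} (h : l + 1 < m) (p : ℕ) :
    tauLine C N l ≤ genSpace C N m p :=
  (Submodule.span_singleton_le_iff_mem _ _).2 (tauGen_mem_genSubalg C h)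

theorem xPowSpan_le_genSpace {j p : ℕ} (h : j < p) (m : ℕ) : xPowSpan C N j ≤ genSpace C N m p := by
  refine Submodule.span_le.2 ?_
  rintro _ ⟨c, rfl⟩
  exact pow_mem (xGen_mem_genSubalg C h) c

theorem tauLine_mul_tauLine_le (m p : ℕ) :
    tauLine C N m * tauLine C N m ≤ genSpace C N p (m + 2) := by
  rw [Submodule.span_mul_span, Set.singleton_mul_singleton, Submodule.span_singleton_le_iff_mem]
  exact tauGen_mul_self_mem C p (by omega)

theorem genSpace_succ_right_mul_le {m p : ℕ} {W : Submodule k (Alg C N)}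
    (hG : genSpace C N m p * W ≤ W) (hx : xLine C N p * W ≤ W) :
    genSpace C N m (p + 1) * W ≤ W := by
  refine Submodule.mul_le.2 fun d hd => genSubalg_mul_mem C W
    (fun ν u hu => hG (Submodule.mul_mem_mul (Ee_mem_genSubalg C m p ν) hu))
    (fun j hj u hu => ?_)
    (fun l hl u hu => hG (Submodule.mul_mem_mul (tauGen_mem_genSubalg C hl) hu)) hd
  obtain hj | rfl := Nat.lt_succ_iff_lt_or_eq.1 hj
  · exact hG (Submodule.mul_mem_mul (xGen_mem_genSubalg C hj) hu)
  · exact hx (Submodule.mul_mem_mul (Submodule.mem_span_singleton_self _) hu)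

theorem genSpace_succ_left_mul_le {m p : ℕ} {W : Submodule k (Alg C N)}
    (hG : genSpace C N (m + 1) p * W ≤ W) (hτ : tauLine C N m * W ≤ W) :
    genSpace C N (m + 2) p * W ≤ W := by
  refine Submodule.mul_le.2 fun d hd => genSubalg_mul_mem C W
    (fun ν u hu => hG (Submodule.mul_mem_mul (Ee_mem_genSubalg C (m + 1) p ν) hu))
    (fun j hj u hu => hG (Submodule.mul_mem_mul (xGen_mem_genSubalg C hj) hu))
    (fun l hl u hu => ?_) hd
  obtain hl | rfl := Nat.lt_succ_iff_lt_or_eq.1 (Nat.succ_lt_succ_iff.1 hl)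
  · exact hG (Submodule.mul_mem_mul (tauGen_mem_genSubalg C (by omega)) hu)
  · exact hτ (Submodule.mul_mem_mul (Submodule.mem_span_singleton_self _) hu)

theorem exists_tauGen_mul_eq (m : ℕ) {r : Alg C N} (hr : r ∈ genSubalg C N m m) :
    ∃ r' ∈ genSubalg C N m m,
      tauGen C N m * r = r' * tauGen C N m ∧ r * tauGen C N m = tauGen C N m * r' := by
  induction hr using Algebra.adjoin_induction with
  | mem g hg =>
    obtain ((⟨ν, rfl⟩ | ⟨a, ha, rfl⟩) | ⟨l, hl, rfl⟩) := hg
    · exact ⟨_, Ee_mem_genSubalg C _ _ (swapWord m ν), tauGen_mul_Ee C m ν, Ee_mul_tauGen C m ν⟩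
    · have ha : a < m := ha
      have h := tauGen_mul_xGen_of_ne C (N := N) (l := m) (m := a) (by omega) (by omega)
      exact ⟨_, xGen_mem_genSubalg C ha, h, h.symm⟩
    · have hl : l + 1 < m := hl
      have h := tauGen_comm C (N := N) (l := m) (m := l) (by omega)
      exact ⟨_, tauGen_mem_genSubalg C hl, h, h.symm⟩
  | algebraMap c =>
    exact ⟨_, Subalgebra.algebraMap_mem _ c, (Algebra.commutes c _).symm, Algebra.commutes c _⟩
  | add a b _ _ ha hb =>
    obtain ⟨a', ha', h₁, h₂⟩ := ha
    obtain ⟨b', hb', h₃, h₄⟩ := hb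
    exact ⟨a' + b', add_mem ha' hb', by rw [mul_add, add_mul, h₁, h₃],
      by rw [mul_add, add_mul, h₂, h₄]⟩
  | mul a b _ _ ha hb =>
    obtain ⟨a', ha', h₁, h₂⟩ := ha
    obtain ⟨b', hb', h₃, h₄⟩ := hb
    exact ⟨a' * b', mul_mem ha' hb', by rw [← mul_assoc, h₁, mul_assoc, h₃, mul_assoc],
      by rw [mul_assoc, h₄, ← mul_assoc, h₂, mul_assoc]⟩

theorem tauLine_mul_genSpace (m : ℕ) :
    tauLine C N m * genSpace C N m m = genSpace C N m m * tauLine C N m := by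
  refine le_antisymm (fun u hu => ?_) (fun u hu => ?_)
  · obtain ⟨r, hr, rfl⟩ := Submodule.mem_span_singleton_mul.1 hu
    obtain ⟨r', hr', h, -⟩ := exists_tauGen_mul_eq C m hr
    exact h ▸ Submodule.mul_mem_mul hr' (Submodule.mem_span_singleton_self _)
  · obtain ⟨r, hr, rfl⟩ := Submodule.mem_mul_span_singleton.1 hu
    obtain ⟨r', hr', -, h⟩ := exists_tauGen_mul_eq C m hr
    exact h ▸ Submodule.mul_mem_mul (Submodule.mem_span_singleton_self _) hr'

theorem xLine_mul_genSpace (m p : ℕ) :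
    xLine C N m * genSpace C N m p = genSpace C N m p * xLine C N m :=
  Submodule.mul_comm_of_commute fun _ hu _ hr => by
    obtain ⟨c, rfl⟩ := Submodule.mem_span_singleton.1 hu
    exact (show Commute _ _ from xGen_mul_comm_of_mem_genSubalg C le_rfl hr).smul_left c

theorem xLine_adjSwap_mul_tauLine_le (l j m p : ℕ) :
    xLine C N (adjSwap l j) * tauLine C N l ≤ tauLine C N l * xLine C N j ⊔ genSpace C N m p := by
  rw [Submodule.span_mul_span, Submodule.span_mul_span, Set.singleton_mul_singleton,
    Set.singleton_mul_singleton, Submodule.span_singleton_le_iff_mem]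
  rw [← sub_sub_cancel (tauGen C N l * xGen C N j) (xGen C N (adjSwap l j) * tauGen C N l)]
  exact sub_mem (Submodule.mem_sup_left (Submodule.mem_span_singleton_self _))
    (Submodule.mem_sup_right (tauGen_mul_xGen_sub_mem C l j m p))

theorem genSpace_mul_tauLine_le (m : ℕ) :
    genSpace C N m (m + 1) * tauLine C N m ≤
      tauLine C N m * genSpace C N (m + 1) (m + 2) ⊔ genSpace C N (m + 1) (m + 2) := by
  set T := tauLine C N m
  set D := genSpace C N (m + 1) (m + 2)
  have hDD : D * D = D := genSpace_mul_genSpace C _ _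
  have hG : genSpace C N m m ≤ D := genSpace_mono C (by omega) (by omega)
  have hx (j) (hj : j < m + 2) : xLine C N j ≤ D :=
    (Submodule.span_singleton_le_iff_mem _ _).2 (xGen_mem_genSubalg C hj)
  have hT : T ≤ T * D ⊔ D := (mul_one T).symm.le.trans <|
    (mul_le_mul_right (one_le_genSpace C _ _) T).trans le_sup_left
  refine (mul_le_mul_right hT _).trans <| genSpace_succ_right_mul_le C ?_ ?_
  · calc genSpace C N m m * (T * D ⊔ D)
      _ = T * (genSpace C N m m * D) ⊔ genSpace C N m m * D := by
        rw [Submodule.mul_sup, ← mul_assoc, ← tauLine_mul_genSpace, mul_assoc]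
      _ ≤ T * (D * D) ⊔ D * D := by gcongr
      _ = T * D ⊔ D := by rw [hDD]
  · have h := xLine_adjSwap_mul_tauLine_le C (N := N) m (m + 1) (m + 1) (m + 2)
    rw [adjSwap_succ] at h
    calc xLine C N m * (T * D ⊔ D)
      _ = xLine C N m * T * D ⊔ xLine C N m * D := by rw [Submodule.mul_sup, mul_assoc]
      _ ≤ (T * xLine C N (m + 1) ⊔ D) * D ⊔ D * D := by gcongr; exact hx m (by omega)
      _ ≤ (T * D ⊔ D) * D ⊔ D * D := by gcongr; exact hx (m + 1) (by omega)
      _ = T * D ⊔ D := by rw [Submodule.sup_mul, mul_assoc, hDD, sup_assoc, sup_idem]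

theorem tauLine_mul_genSpace_mul_tauLine_le (m : ℕ) :
    tauLine C N m * genSpace C N m (m + 1) * tauLine C N m * genSpace C N (m + 1) (m + 2) ≤
      genSpace C N (m + 1) (m + 2) ⊔ tauLine C N m * genSpace C N (m + 1) (m + 2) := by
  set T := tauLine C N m
  set D := genSpace C N (m + 1) (m + 2)
  have hDD : D * D = D := genSpace_mul_genSpace C _ _
  have hTT : T * T ≤ D := tauLine_mul_tauLine_le C m (m + 1)
  calc T * genSpace C N m (m + 1) * T * D
    _ = T * (genSpace C N m (m + 1) * T) * D := by rw [mul_assoc T]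
    _ ≤ T * (T * D ⊔ D) * D := by gcongr; exact genSpace_mul_tauLine_le C m
    _ = T * T * D ⊔ T * D := by
      rw [Submodule.mul_sup, Submodule.sup_mul, ← mul_assoc, mul_assoc (T * T), mul_assoc T D, hDD]
    _ ≤ D * D ⊔ T * D := by gcongr
    _ = D ⊔ T * D := by rw [hDD]

theorem tauLine_braid_le (m p : ℕ) :
    tauLine C N (m + 1) * tauLine C N m * tauLine C N (m + 1) ≤
      tauLine C N m * tauLine C N (m + 1) * tauLine C N m ⊔ genSpace C N p (m + 3) := by
  simp only [Submodule.span_mul_span, Set.singleton_mul_singleton,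
    Submodule.span_singleton_le_iff_mem]
  rw [← sub_add_cancel (tauGen C N (m + 1) * tauGen C N m * tauGen C N (m + 1))
    (tauGen C N m * tauGen C N (m + 1) * tauGen C N m)]
  exact add_mem (Submodule.mem_sup_right (tauGen_braid_sub_mem C p (by omega)))
    (Submodule.mem_sup_left (Submodule.mem_span_singleton_self _))

theorem tauLine_succ_mul_tauLine_mul_le (m : ℕ) :
    tauLine C N (m + 1) *
        (genSpace C N (m + 1) (m + 1) * tauLine C N m * genSpace C N (m + 1) (m + 2)) *
        tauLine C N (m + 1) * genSpace C N (m + 2) (m + 3) ≤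
      genSpace C N (m + 2) (m + 3) ⊔
        genSpace C N (m + 2) (m + 2) * tauLine C N (m + 1) * genSpace C N (m + 2) (m + 3) := by
  set T := tauLine C N m
  set T' := tauLine C N (m + 1)
  set G := genSpace C N (m + 1) (m + 1)
  set G' := genSpace C N (m + 2) (m + 2)
  set D := genSpace C N (m + 1) (m + 2)
  set D' := genSpace C N (m + 2) (m + 3)
  have hDD : D' * D' = D' := genSpace_mul_genSpace C _ _
  have hGG : G' * G' = G' := genSpace_mul_genSpace C _ _
  have hG : G ≤ G' := genSpace_mono C (by omega) (by omega)
  have hGD : G ≤ D' := genSpace_mono C (by omega) (by omega)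
  have hTG : T ≤ G' := tauLine_le_genSpace C (by omega) _
  have hTD : T ≤ D' := tauLine_le_genSpace C (by omega) _
  calc T' * (G * T * D) * T' * D'
    _ = T' * G * T * (D * T') * D' := by simp only [mul_assoc]
    _ = G * T' * T * (D * T') * D' := by rw [tauLine_mul_genSpace]
    _ ≤ G * T' * T * (T' * D' ⊔ D') * D' := by gcongr; exact genSpace_mul_tauLine_le C (m + 1)
    _ = G * (T' * T * T') * D' ⊔ G * T' * T * D' := by
      rw [Submodule.mul_sup, Submodule.sup_mul, ← mul_assoc, mul_assoc _ D', mul_assoc _ D', hDD]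
      simp only [mul_assoc]
    _ ≤ G * (T * T' * T ⊔ D') * D' ⊔ G * T' * T * D' := by
      gcongr; exact tauLine_braid_le C m (m + 2)
    _ = G * T * T' * (T * D') ⊔ G * D' * D' ⊔ G * T' * (T * D') := by
      simp only [Submodule.mul_sup, Submodule.sup_mul, mul_assoc]
    _ ≤ G' * G' * T' * (D' * D') ⊔ D' * D' * D' ⊔ G' * T' * (D' * D') := by gcongr
    _ = D' ⊔ G' * T' * D' := by rw [hGG, hDD, hDD, sup_comm _ D', sup_assoc, sup_idem]

theorem genSpace_succ_succ_le_of_le (m : ℕ)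
    (h : tauLine C N m * genSpace C N (m + 1) (m + 1) * tauLine C N m *
      genSpace C N (m + 1) (m + 2) ≤ genSpace C N (m + 1) (m + 2) ⊔
        genSpace C N (m + 1) (m + 1) * tauLine C N m * genSpace C N (m + 1) (m + 2)) :
    genSpace C N (m + 2) (m + 2) ≤ genSpace C N (m + 1) (m + 2) ⊔
      genSpace C N (m + 1) (m + 1) * tauLine C N m * genSpace C N (m + 1) (m + 2) := by
  set T := tauLine C N m
  set G := genSpace C N (m + 1) (m + 1)
  set D := genSpace C N (m + 1) (m + 2)
  have hDD : D * D = D := genSpace_mul_genSpace C _ _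
  have hGG : G * G = G := genSpace_mul_genSpace C _ _
  have hG : G ≤ D := genSpace_mono C le_rfl (by omega)
  have hx (j) (hj : j < m + 2) : xLine C N j ≤ D :=
    (Submodule.span_singleton_le_iff_mem _ _).2 (xGen_mem_genSubalg C hj)
  have h1D : 1 ≤ D ⊔ G * T * D := (one_le_genSpace C _ _).trans le_sup_left
  rw [← mul_one (genSpace C N (m + 2) (m + 2))]
  refine (mul_le_mul_right h1D _).trans <|
    genSpace_succ_left_mul_le C (genSpace_succ_right_mul_le C ?_ ?_) ?_
  · calc G * (D ⊔ G * T * D)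
      _ = G * D ⊔ G * G * T * D := by simp only [Submodule.mul_sup, mul_assoc]
      _ ≤ D * D ⊔ G * G * T * D := by gcongr
      _ = D ⊔ G * T * D := by rw [hDD, hGG]
  · have hxT := xLine_adjSwap_mul_tauLine_le C (N := N) m m (m + 1) (m + 2)
    rw [adjSwap_self] at hxT
    calc xLine C N (m + 1) * (D ⊔ G * T * D)
      _ = xLine C N (m + 1) * D ⊔ G * (xLine C N (m + 1) * T) * D := by
        rw [Submodule.mul_sup, ← mul_assoc G, ← xLine_mul_genSpace]
        simp only [mul_assoc]
        rfl
      _ ≤ D * D ⊔ G * (T * D ⊔ D) * D := by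
        gcongr
        exacts [hx _ (by omega), hxT.trans (by gcongr; exact hx _ (by omega))]
      _ = D ⊔ (G * T * D ⊔ G * D) := by
        simp only [Submodule.mul_sup, Submodule.sup_mul, mul_assoc, hDD]
      _ ≤ D ⊔ (G * T * D ⊔ D * D) := by gcongr
      _ = D ⊔ G * T * D := by rw [hDD, sup_comm _ D, ← sup_assoc, sup_idem]
  · calc T * (D ⊔ G * T * D)
      _ = 1 * T * D ⊔ T * G * T * D := by simp only [Submodule.mul_sup, mul_assoc, one_mul]
      _ ≤ G * T * D ⊔ (D ⊔ G * T * D) := by gcongr; exact one_le_genSpace C _ _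
      _ = D ⊔ G * T * D := by rw [sup_left_comm, sup_idem]

theorem genSpace_one_le : genSpace C N 1 1 ≤ genSpace C N 0 1 :=
  Algebra.adjoin_mono <| Set.union_subset_union le_rfl <| Set.image_mono fun l hl => by
    have hl : l + 1 < 1 := hl
    omega

theorem genSpace_succ_succ_le (m : ℕ) :
    genSpace C N (m + 2) (m + 2) ≤ genSpace C N (m + 1) (m + 2) ⊔
      genSpace C N (m + 1) (m + 1) * tauLine C N m * genSpace C N (m + 1) (m + 2) := by
  refine genSpace_succ_succ_le_of_le C m ?_
  induction m with
  | zero =>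
    calc tauLine C N 0 * genSpace C N 1 1 * tauLine C N 0 * genSpace C N 1 2
      _ ≤ tauLine C N 0 * genSpace C N 0 1 * tauLine C N 0 * genSpace C N 1 2 := by
        gcongr; exact genSpace_one_le C
      _ ≤ genSpace C N 1 2 ⊔ 1 * tauLine C N 0 * genSpace C N 1 2 := by
        rw [one_mul]; exact tauLine_mul_genSpace_mul_tauLine_le C 0
      _ ≤ _ := by gcongr; exact one_le_genSpace C _ _
  | succ m ih =>
    set T' := tauLine C N (m + 1)
    set D' := genSpace C N (m + 2) (m + 3)
    set G' := genSpace C N (m + 2) (m + 2)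
    have hGT : 1 * T' * D' ≤ G' * T' * D' := by gcongr; exact one_le_genSpace C _ _
    calc T' * G' * T' * D'
      _ ≤ T' * (genSpace C N (m + 1) (m + 2) ⊔
            genSpace C N (m + 1) (m + 1) * tauLine C N m * genSpace C N (m + 1) (m + 2)) *
          T' * D' := by gcongr; exact genSpace_succ_succ_le_of_le C m ih
      _ = T' * genSpace C N (m + 1) (m + 2) * T' * D' ⊔ T' * (genSpace C N (m + 1) (m + 1) *
            tauLine C N m * genSpace C N (m + 1) (m + 2)) * T' * D' := by
        simp only [Submodule.mul_sup, Submodule.sup_mul]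
      _ ≤ (D' ⊔ T' * D') ⊔ (D' ⊔ G' * T' * D') :=
        sup_le_sup (tauLine_mul_genSpace_mul_tauLine_le C (m + 1))
          (tauLine_succ_mul_tauLine_mul_le C m)
      _ ≤ D' ⊔ G' * T' * D' := by
        rw [one_mul] at hGT
        exact sup_le (sup_le_sup_left hGT _) le_rfl

variable (N) in
/-- The product `τ_a τ_{a+1} ⋯ τ_{m-1}`; it is `1` if `m ≤ a`. -/
noncomputable def tauChain (a : ℕ) : ℕ → Alg C N
  | 0 => 1
  | m + 1 => if a ≤ m then tauChain a m * tauGen C N m else 1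

theorem tauChain_self (m : ℕ) : tauChain C N m m = 1 := by
  cases m <;> simp [tauChain]

theorem tauChain_succ {a m : ℕ} (h : a ≤ m) :
    tauChain C N a (m + 1) = tauChain C N a m * tauGen C N m :=
  if_pos h

theorem tauChain_mem_genSubalg (a m p : ℕ) : tauChain C N a m ∈ genSubalg C N (m + 1) p := by
  induction m with
  | zero => exact one_mem _
  | succ m ih =>
    rw [tauChain]
    split_ifs
    · exact mul_mem (genSubalg_mono C (by omega) le_rfl ih) (tauGen_mem_genSubalg C (by omega))
    · exact one_mem _

variable (N) in
/-- The span of the chains `τ_a ⋯ τ_{m-1}` with `a ≤ m`. -/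
noncomputable def tauChainSpan (m : ℕ) : Submodule k (Alg C N) :=
  Submodule.span k ((tauChain C N · m) '' {a | a ≤ m})

theorem tauChainSpan_le_genSpace (m p : ℕ) : tauChainSpan C N m ≤ genSpace C N (m + 1) p :=
  Submodule.span_le.2 <| Set.image_subset_iff.2 fun a _ => tauChain_mem_genSubalg C a m p

theorem one_le_tauChainSpan (m : ℕ) : 1 ≤ tauChainSpan C N m :=
  Submodule.one_le.2 <| Submodule.subset_span ⟨m, le_refl m, tauChain_self C m⟩

theorem tauChainSpan_mul_tauLine_le (m : ℕ) :
    tauChainSpan C N m * tauLine C N m ≤ tauChainSpan C N (m + 1) := by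
  rw [tauChainSpan, Submodule.span_mul_span, Submodule.span_le]
  rintro _ ⟨_, ⟨a, ha, rfl⟩, _, rfl, rfl⟩
  exact Submodule.subset_span ⟨a, Nat.le_succ_of_le ha, tauChain_succ C ha⟩

theorem genSpace_le_tauChainSpan_mul (m : ℕ) :
    genSpace C N (m + 1) (m + 1) ≤ tauChainSpan C N m * genSpace C N m (m + 1) := by
  induction m with
  | zero =>
    calc genSpace C N 1 1
      _ ≤ 1 * genSpace C N 0 1 := by rw [one_mul]; exact genSpace_one_le C
      _ ≤ tauChainSpan C N 0 * genSpace C N 0 1 := by gcongr; exact one_le_tauChainSpan C 0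
  | succ m ih =>
    set T := tauLine C N m
    set D := genSpace C N (m + 1) (m + 2)
    set V := tauChainSpan C N m
    set V' := tauChainSpan C N (m + 1)
    have hDD : D * D = D := genSpace_mul_genSpace C _ _
    have hVD : V ≤ D := tauChainSpan_le_genSpace C m (m + 2)
    have hD : 1 * D ≤ V' * D := by gcongr; exact one_le_tauChainSpan C _
    rw [one_mul] at hD
    refine (genSpace_succ_succ_le C m).trans (sup_le hD ?_)
    calc genSpace C N (m + 1) (m + 1) * T * D
      _ ≤ V * genSpace C N m (m + 1) * T * D := by gcongr
      _ ≤ V * (T * D ⊔ D) * D := by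
        rw [mul_assoc V]; gcongr; exact genSpace_mul_tauLine_le C m
      _ = V * T * D ⊔ V * D := by
        simp only [Submodule.mul_sup, Submodule.sup_mul, mul_assoc, hDD]
      _ ≤ V' * D ⊔ D * D := by gcongr; exact tauChainSpan_mul_tauLine_le C m
      _ ≤ V' * D := by rw [hDD]; exact sup_le le_rfl hD

theorem xPowSpan_mul_genSpace (m p : ℕ) :
    xPowSpan C N m * genSpace C N m p = genSpace C N m p * xPowSpan C N m := by
  have h : xPowSpan C N m ≤
      toSubmodule (Subalgebra.centralizer k (genSubalg C N m p : Set (Alg C N))) := by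
    refine Submodule.span_le.2 ?_
    rintro _ ⟨c, rfl⟩
    exact pow_mem ((Subalgebra.mem_centralizer_iff k).2 fun r hr =>
      (xGen_mul_comm_of_mem_genSubalg C le_rfl hr).symm) c
  exact Submodule.mul_comm_of_commute fun u hu r hr =>
    ((Subalgebra.mem_centralizer_iff k).1 (h hu) r hr).symm

theorem genSpace_le_xPowSpan_mul (m : ℕ) :
    genSpace C N m (m + 1) ≤ xPowSpan C N m * genSpace C N m m := by
  have hGG : genSpace C N m m * genSpace C N m m = genSpace C N m m := genSpace_mul_genSpace C m m
  have hX : 1 ≤ xPowSpan C N m := Submodule.one_le.2 (Submodule.subset_span ⟨0, pow_zero _⟩)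
  have hxX : xLine C N m * xPowSpan C N m ≤ xPowSpan C N m := by
    rw [xPowSpan, Submodule.span_mul_span, Submodule.span_le]
    rintro _ ⟨_, rfl, _, ⟨c, rfl⟩, rfl⟩
    exact Submodule.subset_span ⟨c + 1, pow_succ' _ c⟩
  calc genSpace C N m (m + 1)
    _ = genSpace C N m (m + 1) * (1 * 1) := by rw [mul_one, mul_one]
    _ ≤ genSpace C N m (m + 1) * (xPowSpan C N m * genSpace C N m m) := by
      gcongr; exact one_le_genSpace C m m
    _ ≤ xPowSpan C N m * genSpace C N m m := by
      refine genSpace_succ_right_mul_le C ?_ ?_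
      · rw [← mul_assoc, ← xPowSpan_mul_genSpace, mul_assoc, hGG]
      · rw [← mul_assoc]
        gcongr

theorem tauGen_mul_xGen_pow_sub_mem (m c : ℕ) :
    tauGen C N m * xGen C N (m + 1) ^ c - xGen C N m ^ c * tauGen C N m ∈
      genSubalg C N (m + 1) (m + 2) := by
  induction c with
  | zero => simp
  | succ c ih =>
    have h := tauGen_mul_xGen_sub_mem C (N := N) m (m + 1) (m + 1) (m + 2)
    rw [adjSwap_succ] at h
    have heq : tauGen C N m * xGen C N (m + 1) ^ (c + 1) - xGen C N m ^ (c + 1) * tauGen C N m =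
        (tauGen C N m * xGen C N (m + 1) ^ c - xGen C N m ^ c * tauGen C N m) * xGen C N (m + 1) +
        xGen C N m ^ c * (tauGen C N m * xGen C N (m + 1) - xGen C N m * tauGen C N m) := by
      simp only [pow_succ, sub_mul, mul_sub, mul_assoc, sub_add_sub_cancel]
    rw [heq]
    exact add_mem (mul_mem ih (xGen_mem_genSubalg C (by omega)))
      (mul_mem (pow_mem (xGen_mem_genSubalg C (by omega)) _) h)

theorem tauLine_mul_xPowSpan_le (m : ℕ) :
    tauLine C N m * xPowSpan C N (m + 1) ≤
      xPowSpan C N m * tauLine C N m ⊔ genSpace C N (m + 1) (m + 2) := by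
  rw [xPowSpan, Submodule.span_mul_span, Submodule.span_le]
  rintro _ ⟨_, rfl, _, ⟨c, rfl⟩, rfl⟩
  change tauGen C N m * xGen C N (m + 1) ^ c ∈ _
  rw [← add_sub_cancel (xGen C N m ^ c * tauGen C N m) (tauGen C N m * xGen C N (m + 1) ^ c)]
  exact add_mem (Submodule.mem_sup_left (Submodule.mul_mem_mul (Submodule.subset_span ⟨c, rfl⟩)
    (Submodule.mem_span_singleton_self _)))
    (Submodule.mem_sup_right (tauGen_mul_xGen_pow_sub_mem C m c))

theorem genSpace_le_mul_tauLine_mul_sup (m : ℕ) :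
    genSpace C N (m + 2) (m + 2) ≤
      genSpace C N (m + 1) (m + 1) * tauLine C N m * genSpace C N (m + 1) (m + 1) ⊔
        xPowSpan C N (m + 1) * genSpace C N (m + 1) (m + 1) := by
  set T := tauLine C N m
  set G := genSpace C N (m + 1) (m + 1)
  set D := genSpace C N (m + 1) (m + 2)
  have hGG : G * G = G := genSpace_mul_genSpace C _ _
  have hDD : D * D = D := genSpace_mul_genSpace C _ _
  have hGD : G ≤ D := genSpace_mono C le_rfl (by omega)
  have hX : xPowSpan C N m ≤ G := xPowSpan_le_genSpace C (by omega) _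
  have hD : D ≤ xPowSpan C N (m + 1) * G := genSpace_le_xPowSpan_mul C (m + 1)
  refine (genSpace_succ_succ_le C m).trans (sup_le (hD.trans le_sup_right) ?_)
  calc G * T * D
    _ ≤ G * T * (xPowSpan C N (m + 1) * G) := by gcongr
    _ = G * (T * xPowSpan C N (m + 1)) * G := by simp only [mul_assoc]
    _ ≤ G * (xPowSpan C N m * T ⊔ D) * G := by gcongr; exact tauLine_mul_xPowSpan_le C m
    _ ≤ G * (G * T ⊔ D) * G := by gcongr
    _ = G * G * T * G ⊔ G * D * G := by
      simp only [Submodule.mul_sup, Submodule.sup_mul, mul_assoc]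
    _ ≤ G * G * T * G ⊔ D * D * D := by gcongr
    _ ≤ G * T * G ⊔ xPowSpan C N (m + 1) * G := by
      rw [hGG, hDD, hDD]
      exact sup_le_sup_left hD _

theorem genSpace_le_tauChainSpan_mul_xPowSpan_mul (m : ℕ) :
    genSpace C N (m + 1) (m + 1) ≤ tauChainSpan C N m * xPowSpan C N m * genSpace C N m m := by
  rw [mul_assoc]
  exact (genSpace_le_tauChainSpan_mul C m).trans
    (mul_le_mul_right (genSpace_le_xPowSpan_mul C m) _)

end Spanning

section Operators

variable {k : Type} [Field k] {I : Type}

variable (k I) in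
/-- Multiplication by the variable `x_j` on `RatRep k I`. -/
noncomputable def xOp (j : ℕ) : Module.End k (RatRep k I) :=
  Algebra.lmul k (RatRep k I) (fun _ => ratVar k j)

theorem xOp_apply (j : ℕ) (f : RatRep k I) (μ : ℕ → I) : xOp k I j f μ = ratVar k j * f μ := by
  simp [xOp]

theorem xOp_pow_apply (j c : ℕ) (f : RatRep k I) (μ : ℕ → I) :
    (xOp k I j ^ c) f μ = ratVar k j ^ c * f μ := by
  rw [xOp, ← map_pow]
  simp

theorem eq_zero_of_forall_sum_xOp_pow_mul_eq_zero {n : ℕ} {H : Fin n → Module.End k (RatRep k I)}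
    (h : ∀ M, ∑ b : Fin n, xOp k I b ^ M * H b = 0) : H = 0 := by
  funext b
  refine LinearMap.ext fun f => funext fun μ => ?_
  refine congrFun (Matrix.eq_zero_of_forall_pow_sum_mul_pow_eq_zero
    (f := fun j : Fin n => ratVar k j) (v := fun j => H j f μ)
    (fun i j hij => Fin.ext (ratVar_injective k hij)) fun M => ?_) b
  simpa only [LinearMap.zero_apply, Pi.zero_apply, LinearMap.sum_apply, Finset.sum_apply,
    Module.End.mul_apply, xOp_pow_apply, mul_comm] using congrFun (LinearMap.congr_fun (h M) f) μ

variable [DecidableEq I]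

/-- The part of `tauOp C l` that fixes the variables: multiplication by `-demazureCoeff`. -/
noncomputable def stayOp (l : ℕ) : Module.End k (RatRep k I) :=
  Algebra.lmul k (RatRep k I)
    (fun μ => -demazureCoeff (μ l) (μ (l + 1)) (ratVar k l) (ratVar k (l + 1)))

theorem stayOp_mul_xOp (l j : ℕ) :
    (stayOp l : Module.End k (RatRep k I)) * xOp k I j = xOp k I j * stayOp l := by
  rw [stayOp, xOp, ← map_mul, ← map_mul, mul_comm]

variable [Fintype I] (C : CartanDatum k I)

/-- The part of `tauOp C l` that exchanges `x_l` and `x_{l+1}`. -/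
noncomputable def crossOp (l : ℕ) : Module.End k (RatRep k I) where
  toFun f μ := crossCoeff C (μ l) (μ (l + 1)) (ratVar k l) (ratVar k (l + 1))
    * permAct k (adjSwap l) (f (μ ∘ adjSwap l))
  map_add' f g := by
    funext μ
    simp [mul_add]
  map_smul' c f := by
    funext μ
    simp

theorem crossOp_apply (l : ℕ) (f : RatRep k I) (μ : ℕ → I) :
    crossOp C l f μ = crossCoeff C (μ l) (μ (l + 1)) (ratVar k l) (ratVar k (l + 1))
      * permAct k (adjSwap l) (f (μ ∘ adjSwap l)) := rfl

theorem tauOp_eq_crossOp_add_stayOp (l : ℕ) : tauOp C l = crossOp C l + stayOp l := by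
  refine LinearMap.ext fun f => funext fun μ => ?_
  simp [tauOp_apply, crossOp_apply, stayOp, sub_eq_add_neg]

theorem crossOp_mul_xOp (l j : ℕ) :
    crossOp C l * xOp k I j = xOp k I (adjSwap l j) * crossOp C l := by
  refine LinearMap.ext fun f => funext fun μ => ?_
  simp only [Module.End.mul_apply, crossOp_apply, xOp_apply, map_mul, permAct_ratVar]
  ring

theorem crossOp_injective (l : ℕ) : Function.Injective (crossOp C l) := by
  rw [← LinearMap.ker_eq_bot, LinearMap.ker_eq_bot']
  intro f hf
  funext μ
  have h := congrFun hf (μ ∘ adjSwap l)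
  rw [crossOp_apply, comp_adjSwap_comp_adjSwap] at h
  simpa [crossCoeff_ne_zero C _ _ (Nat.ne_of_lt (Nat.lt_succ_self l))] using h

/-- The part of the operator of `τ_a ⋯ τ_{m-1}` that moves the variable `x_m` to `x_b`. -/
noncomputable def chainPart (a : ℕ) : ℕ → ℕ → Module.End k (RatRep k I)
  | 0, b => if b = 0 then 1 else 0
  | m + 1, b =>
    if a ≤ m then
      if b = m + 1 then (∑ c : Fin (m + 1), chainPart a m c) * stayOp m
      else chainPart a m b * crossOp C m
    else if b = m + 1 then 1 else 0

theorem chainPart_self (m b : ℕ) : chainPart C m m b = if b = m then 1 else 0 := by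
  cases m <;> simp [chainPart]

theorem chainPart_succ_self {a m : ℕ} (h : a ≤ m) :
    chainPart C a (m + 1) (m + 1) = (∑ c : Fin (m + 1), chainPart C a m c) * stayOp m := by
  rw [chainPart, if_pos h, if_pos rfl]

theorem chainPart_succ_of_ne {a b m : ℕ} (h : a ≤ m) (hb : b ≠ m + 1) :
    chainPart C a (m + 1) b = chainPart C a m b * crossOp C m := by
  rw [chainPart, if_pos h, if_neg hb]

theorem chainPart_mul_xOp_of_lt {a m j : ℕ} (ha : a ≤ m) (hj : m < j) (b : ℕ) :
    chainPart C a m b * xOp k I j = xOp k I j * chainPart C a m b := by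
  induction m, ha using Nat.le_induction generalizing b with
  | base => rw [chainPart_self]; split_ifs <;> simp
  | succ m ha ih =>
    obtain rfl | hb := eq_or_ne b (m + 1)
    · simp only [chainPart_succ_self C ha, mul_assoc, stayOp_mul_xOp, Finset.sum_mul,
        Finset.mul_sum]
      simp only [← mul_assoc, ih (Nat.lt_of_succ_lt hj)]
    · rw [chainPart_succ_of_ne C ha hb, mul_assoc, crossOp_mul_xOp,
        adjSwap_of_ne (by omega) (by omega), ← mul_assoc, ih (Nat.lt_of_succ_lt hj), mul_assoc]

theorem chainPart_mul_xOp {a m : ℕ} (ha : a ≤ m) (b : ℕ) :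
    chainPart C a m b * xOp k I m = xOp k I b * chainPart C a m b := by
  induction m, ha using Nat.le_induction generalizing b with
  | base =>
    rw [chainPart_self]
    split_ifs with h
    · rw [h, one_mul, mul_one]
    · rw [zero_mul, mul_zero]
  | succ m ha ih =>
    obtain rfl | hb := eq_or_ne b (m + 1)
    · simp only [chainPart_succ_self C ha, mul_assoc, stayOp_mul_xOp, Finset.sum_mul,
        Finset.mul_sum]
      simp only [← mul_assoc, chainPart_mul_xOp_of_lt C ha (Nat.lt_succ_self m)]
    · rw [chainPart_succ_of_ne C ha hb, mul_assoc, crossOp_mul_xOp, adjSwap_succ, ← mul_assoc, ih,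
        mul_assoc]

theorem chainPart_mul_xOp_pow {a m : ℕ} (ha : a ≤ m) (b M : ℕ) :
    chainPart C a m b * xOp k I m ^ M = xOp k I b ^ M * chainPart C a m b :=
  ((show SemiconjBy _ _ _ from chainPart_mul_xOp C ha b).pow_right M).eq

theorem chainPart_of_lt {a b m : ℕ} (ha : a ≤ m) (hb : b < a) : chainPart C a m b = 0 := by
  induction m, ha using Nat.le_induction with
  | base => rw [chainPart_self, if_neg hb.ne]
  | succ m ha ih => rw [chainPart_succ_of_ne C ha (by omega), ih, zero_mul]

theorem chainPart_left_injective {a m : ℕ} (ha : a ≤ m) :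
    Function.Injective (chainPart C a m a) := by
  induction m, ha using Nat.le_induction with
  | base =>
    rw [chainPart_self, if_pos rfl]
    exact Function.injective_id
  | succ m ha ih =>
    rw [chainPart_succ_of_ne C ha (by omega)]
    exact ih.comp (crossOp_injective C m)

/-- Multiplying by powers of `x_m` separates the parts that move `x_m` to different variables;
these parts are triangular in `a`. -/
theorem eq_zero_of_sum_chainPart_mul_eq_zero {m : ℕ} {D : Fin (m + 1) → Module.End k (RatRep k I)}
    (hD : ∀ a, Commute (xOp k I m) (D a))
    (h : ∑ a : Fin (m + 1), (∑ b : Fin (m + 1), chainPart C a m b) * D a = 0) : D = 0 := by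
  have hpow (M : ℕ) : ∑ b : Fin (m + 1), xOp k I b ^ M *
      ∑ a : Fin (m + 1), chainPart C a m b * D a = 0 := by
    rw [← zero_mul (xOp k I m ^ M), ← h, Finset.sum_mul]
    simp only [Finset.mul_sum, Finset.sum_mul]
    rw [Finset.sum_comm]
    refine Finset.sum_congr rfl fun a _ => Finset.sum_congr rfl fun b _ => ?_
    rw [mul_assoc (chainPart C a m b), ← ((hD a).pow_left M).eq, ← mul_assoc, ← mul_assoc,
      chainPart_mul_xOp_pow C a.is_le]
  have hpart := eq_zero_of_forall_sum_xOp_pow_mul_eq_zero hpow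
  funext a
  induction a using WellFoundedLT.induction with
  | _ a ih =>
    have ha : chainPart C a m a * D a = 0 := by
      refine (Fintype.sum_eq_single (f := fun c : Fin (m + 1) => chainPart C c m a * D c) a
        fun c hc => ?_).symm.trans (congrFun hpart a)
      obtain hlt | hlt := hc.lt_or_gt
      · rw [ih c hlt, Pi.zero_apply, mul_zero]
      · rw [chainPart_of_lt C c.is_le hlt, zero_mul]
    refine LinearMap.ext fun f => chainPart_left_injective C a.is_le ?_
    rw [← Module.End.mul_apply, ha]
    exact (map_zero _).symm

end Operators

section Faithful

variable {k : Type} [Field k] {I : Type} [Fintype I] [DecidableEq I] (C : CartanDatum k I)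
variable {N : ℕ}

theorem rep_xGen {j : ℕ} (h : j < N) : rep C N (xGen C N j) = xOp k I j := by
  refine LinearMap.ext fun f => funext fun μ => ?_
  rw [xGen_of_lt C h, rep_Xx_apply, xOp_apply]

theorem rep_tauGen {l : ℕ} (h : l + 1 < N) : rep C N (tauGen C N l) = tauOp C l := by
  rw [tauGen_of_lt C h, rep_Tt]

theorem rep_tauChain {a m : ℕ} (ha : a ≤ m) (hm : m < N) :
    rep C N (tauChain C N a m) = ∑ b : Fin (m + 1), chainPart C a m b := by
  induction m, ha using Nat.le_induction with
  | base =>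
    simp only [tauChain_self, map_one, chainPart_self, Fin.sum_univ_castSucc, Fin.val_castSucc,
      Fin.val_last, (Fin.is_lt _).ne, if_true, if_false, Finset.sum_const_zero, zero_add]
  | succ m ha ih =>
    rw [tauChain_succ C ha, map_mul, rep_tauGen C hm, ih (Nat.lt_of_succ_lt hm),
      tauOp_eq_crossOp_add_stayOp, Fin.sum_univ_castSucc (n := m + 1), mul_add, Finset.sum_mul,
      Fin.val_last, chainPart_succ_self C ha]
    simp only [Fin.val_castSucc, chainPart_succ_of_ne C ha (Fin.is_lt _).ne]

/-- The action on `RatRep k I` of a permutation of the variables alone. -/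
noncomputable def varPerm (w : Equiv.Perm ℕ) (f : RatRep k I) : RatRep k I :=
  fun μ => permAct k w (f μ)

theorem varPerm_rep {m : ℕ} (hm : m ≤ N) {w : Equiv.Perm ℕ} (hw : ∀ j < m, w j = j)
    {r : Alg C N} (hr : r ∈ genSubalg C N m m) (f : RatRep k I) :
    varPerm w (rep C N r f) = rep C N r (varPerm w f) := by
  induction hr using Algebra.adjoin_induction generalizing f with
  | mem g hg =>
    obtain (⟨ν, rfl⟩ | ⟨a, ha, rfl⟩) | ⟨l, hl, rfl⟩ := hg <;> funext μ
    · rw [varPerm, rep_Ee_apply, rep_Ee_apply]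
      split_ifs
      · rfl
      · exact map_zero _
    · have ha : a < m := ha
      simp only [rep_xGen C (ha.trans_le hm), varPerm, xOp_apply, map_mul, permAct_ratVar, hw a ha]
    · have hl : l + 1 < m := hl
      have hcomm : w * adjSwap l = adjSwap l * w := by
        rw [adjSwap, Equiv.mul_swap_eq_swap_mul, hw l (Nat.lt_of_succ_lt hl), hw _ hl]
      simp only [rep_tauGen C (hl.trans_le hm), varPerm, tauOp_apply, map_sub, map_mul,
        permAct_crossCoeff, permAct_demazureCoeff, permAct_ratVar, hw l (Nat.lt_of_succ_lt hl),
        hw _ hl, permAct_permAct, hcomm]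
  | algebraMap c =>
    funext μ
    simp [varPerm, Module.algebraMap_end_apply]
  | add a b _ _ ha hb =>
    rw [map_add, LinearMap.add_apply, LinearMap.add_apply, ← ha, ← hb]
    funext μ
    simp [varPerm]
  | mul a b _ _ ha hb => rw [map_mul, Module.End.mul_apply, Module.End.mul_apply, ha, hb]

/-- `R(m)` commutes with the exchange of `x_m` and any later variable, so a relation between
powers of `x_m` yields a polynomial with infinitely many roots. -/
theorem rep_eq_zero_of_rep_sum_xGen_pow_mul_eq_zero {m : ℕ} (hm : m < N) {r : ℕ →₀ Alg C N}
    (hr : ∀ c, r c ∈ genSubalg C N m m)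
    (h : rep C N (r.sum fun c y => xGen C N m ^ c * y) = 0) (c : ℕ) : rep C N (r c) = 0 := by
  refine LinearMap.ext fun f => funext fun μ => ?_
  set P : Polynomial (RatFun k) := ∑ c ∈ r.support, Polynomial.monomial c (rep C N (r c) f μ)
    with hP
  have hroot (j : ℕ) : P.IsRoot (ratVar k (m + 1 + j)) := by
    let w : Equiv.Perm ℕ := Equiv.swap m (m + 1 + j)
    have hw (j) (hj : j < m) : w j = j := Equiv.swap_apply_of_ne_of_ne (by omega) (by omega)
    have hww (g : RatFun k) : permAct k w (permAct k w g) = g := by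
      simp [permAct_permAct, w, permAct_one]
    have hcomm (c : ℕ) : permAct k w (rep C N (r c) (varPerm w f) μ) = rep C N (r c) f μ := by
      rw [← varPerm_rep C hm.le hw (hr c), varPerm, hww]
    have hwm : w m = m + 1 + j := Equiv.swap_apply_left _ _
    have key := congrArg (permAct k w) (congrFun (LinearMap.congr_fun h (varPerm w f)) μ)
    simp only [Finsupp.sum, map_sum, map_mul, map_pow, rep_xGen C hm, LinearMap.sum_apply,
      Finset.sum_apply, Module.End.mul_apply, xOp_pow_apply, permAct_ratVar, hwm, hcomm,
      LinearMap.zero_apply, Pi.zero_apply, map_zero] at key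
    simpa only [Polynomial.IsRoot, hP, Polynomial.eval_finsetSum, Polynomial.eval_monomial,
      mul_comm] using key
  have hP₀ : P = 0 := P.eq_zero_of_infinite_isRoot <| Set.infinite_of_injective_forall_mem
    (fun i j hij => Nat.add_left_cancel (ratVar_injective k hij)) hroot
  have hcoeff := congrArg (Polynomial.coeff · c) hP₀
  by_cases hc : r c = 0
  · simp [hc]
  · simpa [hP, Polynomial.finsetSum_coeff, Polynomial.coeff_monomial, hc] using hcoeff

variable (N) in
/-- The elements `τ_a ⋯ τ_{m-1} x_m^c`, a basis of `R(m + 1)` over `R(m)`. -/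
noncomputable def tauXMonomial (m : ℕ) (p : Fin (m + 1) × ℕ) : Alg C N :=
  tauChain C N p.1 m * xGen C N m ^ p.2

theorem rep_eq_zero_of_rep_sum_tauXMonomial_mul_eq_zero {m : ℕ} (hm : m < N)
    {r : Fin (m + 1) × ℕ →₀ Alg C N} (hr : ∀ p, r p ∈ genSubalg C N m m)
    (h : rep C N (r.sum fun p y => tauXMonomial C N m p * y) = 0) (p : Fin (m + 1) × ℕ) :
    rep C N (r p) = 0 := by
  let d (a : Fin (m + 1)) : Alg C N := (r.curry a).sum fun c y => xGen C N m ^ c * y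
  have hd (a) : d a ∈ genSubalg C N m (m + 1) :=
    Subalgebra.sum_mem _ fun c _ => mul_mem (pow_mem (xGen_mem_genSubalg C (Nat.lt_succ_self m)) c)
      (genSubalg_mono C le_rfl (Nat.le_succ m) (hr (a, c)))
  have hsum : (r.sum fun p y => tauXMonomial C N m p * y) =
      ∑ a : Fin (m + 1), tauChain C N a m * d a := by
    simp only [tauXMonomial, mul_assoc]
    rw [← Finsupp.sum_curry_index r fun a c y => tauChain C N a m * (xGen C N m ^ c * y)]
    simp only [d, Finsupp.mul_sum]
    exact Finsupp.sum_fintype _ _ fun _ => Finsupp.sum_zero_index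
  have hd₀ : (fun a => rep C N (d a)) = 0 := by
    refine eq_zero_of_sum_chainPart_mul_eq_zero C (fun a => ?_) ?_
    · rw [← rep_xGen C hm]
      exact (show Commute _ _ from xGen_mul_comm_of_mem_genSubalg C le_rfl (hd a)).map (rep C N)
    · rw [← h, hsum, map_sum]
      exact Finset.sum_congr rfl fun a _ => by rw [map_mul, rep_tauChain C a.is_le hm]
  exact rep_eq_zero_of_rep_sum_xGen_pow_mul_eq_zero C hm (r := r.curry p.1) (fun c => hr _)
    (congrFun hd₀ p.1) p.2

theorem exists_finsupp_of_mem_span_range_mul {R A ι : Type*} [CommSemiring R] [Semiring A]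
    [Algebra R A] {v : ι → A} {W : Submodule R A} {x : A}
    (hx : x ∈ Submodule.span R (Set.range v) * W) :
    ∃ r : ι →₀ A, (∀ i, r i ∈ W) ∧ (r.sum fun i y => v i * y) = x := by
  classical
  rw [← Submodule.span_eq W, Submodule.span_mul_span] at hx
  induction hx using Submodule.span_induction with
  | mem x hx =>
    obtain ⟨_, ⟨i, rfl⟩, y, hy, rfl⟩ := hx
    refine ⟨Finsupp.single i y, fun j => ?_, by simp⟩
    rw [Finsupp.single_apply]
    split_ifs
    exacts [hy, zero_mem _]
  | zero => exact ⟨0, fun _ => zero_mem _, Finsupp.sum_zero_index⟩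
  | add x y _ _ hx hy =>
    obtain ⟨r, hr, rfl⟩ := hx
    obtain ⟨s, hs, rfl⟩ := hy
    exact ⟨r + s, fun i => add_mem (hr i) (hs i),
      Finsupp.sum_add_index' (fun _ => mul_zero _) fun _ => mul_add _⟩
  | smul c x _ hx =>
    obtain ⟨r, hr, rfl⟩ := hx
    refine ⟨c • r, fun i => W.smul_mem c (hr i), ?_⟩
    rw [Finsupp.sum_smul_index' fun _ => mul_zero _, Finsupp.smul_sum]
    simp only [mul_smul_comm]

theorem genSpace_le_span_tauXMonomial_mul (m : ℕ) :
    genSpace C N (m + 1) (m + 1) ≤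
      Submodule.span k (Set.range (tauXMonomial C N m)) * genSpace C N m m := by
  refine (genSpace_le_tauChainSpan_mul_xPowSpan_mul C m).trans (mul_le_mul_left ?_ _)
  rw [tauChainSpan, xPowSpan, Submodule.span_mul_span, Submodule.span_le]
  rintro _ ⟨_, ⟨a, ha, rfl⟩, _, ⟨c, rfl⟩, rfl⟩
  exact Submodule.subset_span ⟨(⟨a, Nat.lt_succ_of_le ha⟩, c), rfl⟩

theorem genSpace_zero_le_span_Ee :
    genSpace C N 0 0 ≤ Submodule.span k (Set.range (Ee C (n := N))) := by
  have hone : (1 : Alg C N) ∈ Submodule.span k (Set.range (Ee C (n := N))) :=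
    sum_Ee C (N := N) ▸ Submodule.sum_mem _ fun ν _ => Submodule.subset_span ⟨ν, rfl⟩
  have hmul : Submodule.span k (Set.range (Ee C (n := N))) *
      Submodule.span k (Set.range (Ee C (n := N))) ≤ Submodule.span k (Set.range (Ee C)) := by
    rw [Submodule.span_mul_span, Submodule.span_le]
    rintro _ ⟨_, ⟨ν, rfl⟩, _, ⟨ν', rfl⟩, rfl⟩
    simp only [Ee_mul_Ee]
    split_ifs
    exacts [Submodule.subset_span ⟨ν, rfl⟩, zero_mem _]
  refine Algebra.adjoin_le (S := Submodule.toSubalgebra _ hone fun x y hx hy =>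
    hmul (Submodule.mul_mem_mul hx hy)) ?_
  rintro g ((⟨ν, rfl⟩ | ⟨a, ha, rfl⟩) | ⟨l, hl, rfl⟩)
  · exact Submodule.subset_span ⟨ν, rfl⟩
  · exact absurd ha (Nat.not_lt_zero a)
  · exact absurd hl (Nat.not_lt_zero _)

theorem eq_zero_of_mem_genSubalg_zero [Nonempty I] {r : Alg C N} (hr : r ∈ genSubalg C N 0 0)
    (h : rep C N r = 0) : r = 0 := by
  obtain ⟨c, rfl⟩ := (Submodule.mem_span_range_iff_exists_fun k).1 (genSpace_zero_le_span_Ee C hr)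
  refine Finset.sum_eq_zero fun ν _ => ?_
  let μ (j : ℕ) : I := if h : j < N then ν ⟨j, h⟩ else Classical.arbitrary I
  have hμ : wordPrefix N μ = ν := by
    funext a
    simp [wordPrefix, μ]
  have hν := congrFun (LinearMap.congr_fun h fun _ => 1) μ
  simp only [map_sum, map_smul, LinearMap.sum_apply, LinearMap.smul_apply, Finset.sum_apply,
    Pi.smul_apply, rep_Ee_apply, hμ, smul_ite, smul_zero, Finset.sum_ite_eq, Finset.mem_univ,
    if_true, LinearMap.zero_apply, Pi.zero_apply, smul_eq_zero, one_ne_zero, or_false] at hν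
  rw [hν, zero_smul]

theorem rep_injOn_genSubalg [Nonempty I] {m : ℕ} (hm : m ≤ N) {r : Alg C N}
    (hr : r ∈ genSubalg C N m m) (h : rep C N r = 0) : r = 0 := by
  induction m generalizing r with
  | zero => exact eq_zero_of_mem_genSubalg_zero C hr h
  | succ m ih =>
    obtain ⟨s, hs, rfl⟩ :=
      exists_finsupp_of_mem_span_range_mul (genSpace_le_span_tauXMonomial_mul C m hr)
    have hs₀ : s = 0 := Finsupp.ext fun p => ih (Nat.le_of_succ_le hm) (hs p)
      (rep_eq_zero_of_rep_sum_tauXMonomial_mul_eq_zero C hm hs h p)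
    rw [hs₀, Finsupp.sum_zero_index]

theorem rep_injective [Nonempty I] : Function.Injective (rep C N) :=
  (injective_iff_map_eq_zero _).2 fun _ h =>
    rep_injOn_genSubalg C le_rfl (genSubalg_self C (N := N) ▸ Algebra.mem_top) h

theorem eq_zero_of_sum_tauXMonomial_mul_eq_zero [Nonempty I] {m : ℕ} (hm : m < N)
    {r : Fin (m + 1) × ℕ →₀ Alg C N} (hr : ∀ p, r p ∈ genSubalg C N m m)
    (h : (r.sum fun p y => tauXMonomial C N m p * y) = 0) : r = 0 :=
  Finsupp.ext fun p => (injective_iff_map_eq_zero _).1 (rep_injective C) _ <|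
    rep_eq_zero_of_rep_sum_tauXMonomial_mul_eq_zero C hm hr (h ▸ map_zero (rep C N)) p

end Faithful

section Content

variable {I : Type} [DecidableEq I]

theorem content_eq_sum {m : ℕ} (ν : Fin m → I) (j : I) :
    content ν j = ∑ a, if ν a = j then 1 else 0 := by
  rw [content, Finset.card_filter]

theorem content_comp_perm {m : ℕ} (ν : Fin m → I) (σ : Equiv.Perm (Fin m)) :
    content (ν ∘ σ) = content ν := by
  funext j
  rw [content_eq_sum, content_eq_sum]
  exact Equiv.sum_comp σ fun a => if ν a = j then 1 else 0

theorem content_swapWord {N : ℕ} (l : ℕ) (ν : Fin N → I) :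
    content (swapWord l ν) = content ν := by
  unfold swapWord
  split_ifs
  · exact content_comp_perm ν _
  · rfl

theorem content_snoc {n : ℕ} (ν : Fin n → I) (i : I) :
    content (Fin.snoc ν i : Fin (n + 1) → I) = addA (content ν) i := by
  funext j
  rw [content_eq_sum, Fin.sum_univ_castSucc, addA, content_eq_sum]
  simp only [Fin.snoc_castSucc, Fin.snoc_last, eq_comm]

theorem content_apply_ne_zero {m : ℕ} (ν : Fin m → I) (a : Fin m) : content ν (ν a) ≠ 0 :=
  Finset.card_ne_zero_of_mem (Finset.mem_filter.2 ⟨Finset.mem_univ a, rfl⟩)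

theorem addA_subA {β : I → ℕ} {i : I} (h : β i ≠ 0) : addA (subA β i) i = β := by
  funext j
  by_cases hj : j = i
  · subst hj
    simp only [addA, subA, if_true]
    omega
  · simp only [addA, subA, hj, if_false, Nat.sub_zero, Nat.add_zero]

theorem addA_injective (i : I) : Function.Injective (fun β : I → ℕ => addA β i) :=
  fun _ _ h => funext fun j => Nat.add_right_cancel (congrFun h j)

theorem content_snoc_eq_addA_iff {n : ℕ} {ν : Fin n → I} {β : I → ℕ} {i : I} :
    content (Fin.snoc ν i : Fin (n + 1) → I) = addA β i ↔ content ν = β := by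
  rw [content_snoc]
  exact (addA_injective i).eq_iff

variable [Fintype I]

theorem mem_seqs {n : ℕ} {β : I → ℕ} {ν : Fin n → I} : ν ∈ seqs β n ↔ content ν = β := by
  simp [seqs]

/-- The words of content `δ + α_i` with last letter `i`, so that `eR` is the sum of their
idempotents. -/
def seqsLast (n : ℕ) (δ : I → ℕ) (i : I) : Finset (Fin (n + 1) → I) :=
  (seqs (addA δ i) (n + 1)).filter fun ν => ν (Fin.last n) = i

theorem mem_seqsLast {n : ℕ} {δ : I → ℕ} {i : I} {ν : Fin (n + 1) → I} :
    ν ∈ seqsLast n δ i ↔ content ν = addA δ i ∧ ν (Fin.last n) = i := by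
  rw [seqsLast, Finset.mem_filter, mem_seqs]

theorem snoc_mem_seqsLast {n : ℕ} {δ : I → ℕ} {i j : I} {ν : Fin n → I} :
    (Fin.snoc ν j : Fin (n + 1) → I) ∈ seqsLast n δ i ↔ ν ∈ seqs δ n ∧ j = i := by
  rw [mem_seqsLast, mem_seqs, Fin.snoc_last]
  refine and_congr_left ?_
  rintro rfl
  exact content_snoc_eq_addA_iff

theorem seqsLast_subset_seqs (n : ℕ) (δ : I → ℕ) (i : I) :
    seqsLast n δ i ⊆ seqs (addA δ i) (n + 1) :=
  Finset.filter_subset _ _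

theorem swapWord_mem_seqsLast {n l : ℕ} (hl : l + 1 < n) {δ : I → ℕ} {i : I}
    {ν : Fin (n + 1) → I} (hν : ν ∈ seqsLast n δ i) : swapWord l ν ∈ seqsLast n δ i := by
  rw [mem_seqsLast] at hν ⊢
  refine ⟨by rw [content_swapWord, hν.1], ?_⟩
  rw [swapWord, dif_pos (Nat.lt_succ_of_lt hl), Function.comp_apply,
    Equiv.swap_apply_of_ne_of_ne, hν.2]
  all_goals
    rw [Ne, Fin.ext_iff, Fin.val_last]
    dsimp only
    omega

end Content

section WordIdempotents

variable {k : Type} [Field k] {I : Type} [Fintype I] [DecidableEq I] (C : CartanDatum k I)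
variable {N : ℕ}

theorem commute_of_mem_genSubalg {m p : ℕ} {z : Alg C N} (he : ∀ ν, Commute z (Ee C ν))
    (hx : ∀ j < p, Commute z (xGen C N j)) (ht : ∀ l, l + 1 < m → Commute z (tauGen C N l))
    {r : Alg C N} (hr : r ∈ genSubalg C N m p) : Commute z r := by
  refine (Subalgebra.mem_centralizer_iff k).1
    (Algebra.adjoin_le (S := Subalgebra.centralizer k {z}) ?_ hr) z rfl
  rintro g ((⟨ν, rfl⟩ | ⟨a, ha, rfl⟩) | ⟨l, hl, rfl⟩) _ rfl
  exacts [he ν, hx a ha, ht l hl]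

@[elab_as_elim]
theorem alg_induction {motive : Alg C N → Prop} (Ee : ∀ ν, motive (Ee C ν))
    (xGen : ∀ j < N, motive (xGen C N j)) (tauGen : ∀ l, l + 1 < N → motive (tauGen C N l))
    (algebraMap : ∀ c : k, motive (algebraMap k _ c))
    (add : ∀ a b, motive a → motive b → motive (a + b))
    (mul : ∀ a b, motive a → motive b → motive (a * b)) (r : Alg C N) : motive r := by
  refine Algebra.adjoin_induction (p := fun r _ => motive r) ?_ algebraMap
    (fun a b _ _ => add a b) (fun a b _ _ => mul a b)
    (genSubalg_self C (N := N) ▸ Algebra.mem_top : r ∈ genSubalg C N N N)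
  rintro g ((⟨ν, rfl⟩ | ⟨a, ha, rfl⟩) | ⟨l, hl, rfl⟩)
  exacts [Ee ν, xGen a ha, tauGen l hl]

/-- The sum of the idempotents `e(ν)` over a set of words `ν`. -/
noncomputable def wordIdem (s : Finset (Fin N → I)) : Alg C N := ∑ ν ∈ s, Ee C ν

theorem wordIdem_mul_Ee (s : Finset (Fin N → I)) (ν : Fin N → I) :
    wordIdem C s * Ee C ν = if ν ∈ s then Ee C ν else 0 := by
  rw [wordIdem, Finset.sum_mul, ← Finset.sum_ite_eq' s ν (Ee C)]
  exact Finset.sum_congr rfl fun ν' _ => Ee_mul_Ee C ν' ν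

theorem wordIdem_mul_wordIdem {s t : Finset (Fin N → I)} (h : t ⊆ s) :
    wordIdem C s * wordIdem C t = wordIdem C t := by
  rw [wordIdem.eq_def C t, Finset.mul_sum]
  exact Finset.sum_congr rfl fun ν hν => by rw [wordIdem_mul_Ee, if_pos (h hν)]

theorem wordIdem_commute_Ee (s : Finset (Fin N → I)) (ν : Fin N → I) :
    Commute (wordIdem C s) (Ee C ν) := by
  refine Commute.sum_left _ _ _ fun ν' _ => ?_
  rw [Commute, SemiconjBy, Ee_mul_Ee, Ee_mul_Ee]
  split_ifs with h h' h'
  exacts [congrArg (Ee C) h, absurd h.symm h', absurd h'.symm h, rfl]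

theorem wordIdem_commute_xGen (s : Finset (Fin N → I)) (j : ℕ) :
    Commute (wordIdem C s) (xGen C N j) :=
  Commute.sum_left _ _ _ fun ν _ => (xGen_mul_Ee C j ν).symm

theorem wordIdem_commute_tauGen {s : Finset (Fin N → I)} {l : ℕ} (h : ∀ ν ∈ s, swapWord l ν ∈ s) :
    Commute (wordIdem C s) (tauGen C N l) := by
  rw [Commute, SemiconjBy, wordIdem, Finset.sum_mul, Finset.mul_sum]
  simp only [tauGen_mul_Ee]
  refine Finset.sum_nbij' (swapWord l) (swapWord l) h h (fun ν _ => swapWord_swapWord l ν)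
    (fun ν _ => swapWord_swapWord l ν) fun ν _ => ?_
  rw [swapWord_swapWord]

theorem wordIdem_mem_genSubalg (s : Finset (Fin N → I)) (m p : ℕ) :
    wordIdem C s ∈ genSubalg C N m p :=
  Subalgebra.sum_mem _ fun ν _ => Ee_mem_genSubalg C m p ν

theorem rep_wordIdem_apply (s : Finset (Fin N → I)) (f : RatRep k I) (μ : ℕ → I) :
    rep C N (wordIdem C s) f μ = if wordPrefix N μ ∈ s then f μ else 0 := by
  rw [wordIdem, map_sum, LinearMap.sum_apply, Finset.sum_apply]
  simp [rep_Ee_apply]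

theorem eIdem_eq_wordIdem (β : I → ℕ) : eIdem C N β = wordIdem C (seqs β N) := rfl

theorem eIdem_commute (β : I → ℕ) (r : Alg C N) : Commute (eIdem C N β) r :=
  commute_of_mem_genSubalg C (wordIdem_commute_Ee C _) (fun j _ => wordIdem_commute_xGen C _ j)
    (fun l _ => wordIdem_commute_tauGen C fun ν hν => by
      rwa [mem_seqs, content_swapWord, ← mem_seqs])
    (genSubalg_self C (N := N) ▸ Algebra.mem_top)

theorem eIdem_mul_self (β : I → ℕ) : eIdem C N β * eIdem C N β = eIdem C N β :=
  wordIdem_mul_wordIdem C subset_rfl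

theorem eR_eq_wordIdem (n : ℕ) (δ : I → ℕ) (i : I) : eR C n δ i = wordIdem C (seqsLast n δ i) :=
  rfl

theorem eR_mul_self (n : ℕ) (δ : I → ℕ) (i : I) : eR C n δ i * eR C n δ i = eR C n δ i :=
  wordIdem_mul_wordIdem C subset_rfl

theorem eR_commute (n : ℕ) (δ : I → ℕ) (i : I) {p : ℕ} {r : Alg C (n + 1)}
    (hr : r ∈ genSubalg C (n + 1) n p) : Commute (eR C n δ i) r :=
  commute_of_mem_genSubalg C (wordIdem_commute_Ee C _) (fun j _ => wordIdem_commute_xGen C _ j)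
    (fun _ hl => wordIdem_commute_tauGen C fun _ hν => swapWord_mem_seqsLast hl hν) hr

theorem eIdem_mul_eR (n : ℕ) (δ : I → ℕ) (i : I) :
    eIdem C (n + 1) (addA δ i) * eR C n δ i = eR C n δ i :=
  wordIdem_mul_wordIdem C (seqsLast_subset_seqs n δ i)

theorem eR_mul_Ee_snoc {n : ℕ} (δ : I → ℕ) {i j : I} (h : j ≠ i) (ν : Fin n → I) :
    eR C n δ i * Ee C (Fin.snoc ν j) = 0 := by
  rw [eR_eq_wordIdem, wordIdem_mul_Ee, if_neg fun hν => h (snoc_mem_seqsLast.1 hν).2]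

end WordIdempotents

section Quotient

variable {k : Type} [Field k] {I : Type} [Fintype I] [DecidableEq I] {C : CartanDatum k I}
variable {n : ℕ} {β : I → ℕ}

theorem toB_mkAlgHom (a : FA k I n) :
    (toB C (RingQuot.mkAlgHom k (Rel C n) a) : bAlg C n β) =
      RingQuot.mkAlgHom k (URel C n β) a := by
  simp [toB]

theorem toB_surjective : Function.Surjective (toB C : Alg C n →ₐ[k] bAlg C n β) := fun s =>
  let ⟨a, ha⟩ := RingQuot.mkAlgHom_surjective k (URel C n β) s
  ⟨_, (toB_mkAlgHom a).trans ha⟩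

theorem toB_eIdem : (toB C (eIdem C n β) : bAlg C n β) = 1 := by
  have h := RingQuot.mkAlgHom_rel k (URel.unit (C := C) (n := n) (β := β))
  rw [map_one, map_sum] at h
  rw [← h, eIdem, map_sum]
  exact Finset.sum_congr rfl fun ν _ => toB_mkAlgHom _

/-- The annihilator `J` of the central idempotent `e(β)` is a two-sided ideal containing
`1 - e(β)`, so `R(n) → R(n) / J` factors through `R(β)`. -/
theorem eIdem_mul_eq_zero_of_toB_eq_zero {r : Alg C n} (h : (toB C r : bAlg C n β) = 0) :
    eIdem C n β * r = 0 := by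
  let J : Ideal (Alg C n) := Ideal.torsionOf (Alg C n) (Alg C n) (eIdem C n β)
  have hJ (a) : a ∈ J ↔ a * eIdem C n β = 0 := Ideal.mem_torsionOf_iff _ _
  have : J.IsTwoSided := ⟨fun b ha => by
    rw [hJ] at ha ⊢
    rw [mul_assoc, ← (eIdem_commute C β b).eq, ← mul_assoc, ha, zero_mul]⟩
  let π : Alg C n →ₐ[k] Alg C n ⧸ J := Ideal.Quotient.mkₐ k J
  let π' : bAlg C n β →ₐ[k] Alg C n ⧸ J := RingQuot.liftAlgHom k
    ⟨π.comp (RingQuot.mkAlgHom k (Rel C n)), fun x y hxy => by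
      cases hxy with
      | base hb => rw [AlgHom.comp_apply, AlgHom.comp_apply, RingQuot.mkAlgHom_rel k hb]
      | unit =>
        rw [AlgHom.comp_apply, map_sum, map_one]
        refine Ideal.Quotient.eq.2 ((hJ _).2 ?_)
        rw [sub_mul, one_mul, sub_eq_zero]
        exact eIdem_mul_self C β⟩
  have hπ : π' (toB C r) = π r := by
    obtain ⟨a, rfl⟩ := RingQuot.mkAlgHom_surjective k (Rel C n) r
    rw [toB_mkAlgHom]
    simp [π']
  rw [h, map_zero] at hπ
  rw [(eIdem_commute C β r).eq, ← hJ]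
  exact Ideal.Quotient.eq_zero_iff_mem.1 hπ.symm

end Quotient

section SetLetter

variable {I : Type}

theorem wordPrefix_succ {n : ℕ} (μ : ℕ → I) :
    wordPrefix (n + 1) μ = (Fin.snoc (wordPrefix n μ) (μ n) : Fin (n + 1) → I) := by
  funext a
  induction a using Fin.lastCases with
  | last => rw [Fin.snoc_last, wordPrefix, Fin.val_last]
  | cast b => rw [Fin.snoc_castSucc, wordPrefix, wordPrefix, Fin.val_castSucc]

theorem wordPrefix_update {n : ℕ} (μ : ℕ → I) (j : I) :
    wordPrefix n (Function.update μ n j) = wordPrefix n μ :=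
  funext fun a => Function.update_of_ne a.2.ne _ _

theorem wordPrefix_succ_update {n : ℕ} (μ : ℕ → I) (j : I) :
    wordPrefix (n + 1) (Function.update μ n j) =
      (Fin.snoc (wordPrefix n μ) j : Fin (n + 1) → I) := by
  rw [wordPrefix_succ, wordPrefix_update, Function.update_self]

theorem update_comp_adjSwap {l n : ℕ} (h : l + 1 < n) (μ : ℕ → I) (j : I) :
    Function.update μ n j ∘ adjSwap l = Function.update (μ ∘ adjSwap l) n j := by
  have hn : adjSwap l n = n := adjSwap_of_ne (by omega) (by omega)
  conv_lhs => rw [← hn]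
  exact Function.update_comp_eq_of_injective μ (adjSwap l).injective n j

variable (k : Type) [Field k]

/-- The operator on the polynomial representation reading every word as if its letter in
position `n` were `j`. It lets `R(n)` and its image in `R(n+1)` be compared. -/
def setLetter (n : ℕ) (j : I) (f : RatRep k I) : RatRep k I := fun μ => f (Function.update μ n j)

variable {k} [Fintype I] [DecidableEq I] (C : CartanDatum k I) {n : ℕ}

theorem setLetter_rep (j : I) (r : Alg C n) (f : RatRep k I) :
    setLetter k n j (rep C n r f) = rep C n r (setLetter k n j f) := by
  induction r using alg_induction generalizing f with
  | Ee ν =>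
    funext μ
    simp only [setLetter, rep_Ee_apply, wordPrefix_update]
  | xGen a ha =>
    funext μ
    simp only [setLetter, rep_xGen C ha, xOp_apply]
  | tauGen l hl =>
    funext μ
    simp only [setLetter, rep_tauGen C hl, tauOp_apply, update_comp_adjSwap hl,
      Function.update_of_ne hl.ne, Function.update_of_ne (Nat.lt_of_succ_lt hl).ne]
  | algebraMap c =>
    rw [AlgHom.commutes]
    rfl
  | add a b ha hb =>
    rw [map_add, LinearMap.add_apply, LinearMap.add_apply, ← ha, ← hb]
    rfl
  | mul a b ha hb =>
    rw [map_mul, Module.End.mul_apply, Module.End.mul_apply, ← hb, ← ha]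

theorem rep_succ_sum_Ee_snoc (ν : Fin n → I) :
    rep C (n + 1) (∑ j, Ee C (Fin.snoc ν j : Fin (n + 1) → I)) = rep C n (Ee C ν) := by
  refine LinearMap.ext fun f => funext fun μ => ?_
  rw [map_sum, LinearMap.sum_apply, Finset.sum_apply, rep_Ee_apply]
  simp only [rep_Ee_apply, wordPrefix_succ, Fin.snoc_inj, and_comm, ite_and]
  rw [Finset.sum_ite_eq Finset.univ (μ n), if_pos (Finset.mem_univ _)]

theorem setLetter_rep_eR (δ : I → ℕ) (i j : I) (f : RatRep k I) :
    setLetter k n i (rep C (n + 1) (eR C n δ i) (setLetter k n j f)) =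
      rep C n (eIdem C n δ) (setLetter k n j f) := by
  funext μ
  simp only [setLetter, eR_eq_wordIdem, eIdem_eq_wordIdem, rep_wordIdem_apply,
    wordPrefix_succ_update, snoc_mem_seqsLast, and_true, Function.update_idem]

end SetLetter

section NonUnitalHom

variable {M N F : Type*} [MulOneClass M] [Mul N] [FunLike F M N] [MulHomClass F M N]

theorem map_mul_map_one (f : F) (s : M) : f s * f 1 = f s := by rw [← map_mul, mul_one]

theorem map_one_mul_map (f : F) (s : M) : f 1 * f s = f s := by rw [← map_mul, one_mul]

theorem map_mul_of_eq_mul_map_one {N : Type*} [Semigroup N] [FunLike F M N] [MulHomClass F M N]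
    {f : F} {a b : M} {u v : N} (ha : f a = u * f 1) (hb : f b = v * f 1) :
    f (a * b) = u * v * f 1 := by
  rw [map_mul, ha, mul_assoc, map_one_mul_map, hb, mul_assoc]

end NonUnitalHom

section Embedding

variable {k : Type} [Field k] {I : Type} [Fintype I] [DecidableEq I] {C : CartanDatum k I}
variable {n : ℕ} {δ γ : I → ℕ} {i : I}

theorem sum_seqs_Ee_snoc : ∑ ν ∈ seqs δ n, Ee C (Fin.snoc ν i : Fin (n + 1) → I) = eR C n δ i := by
  refine Finset.sum_nbij' (fun ν => (Fin.snoc ν i : Fin (n + 1) → I)) Fin.init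
    (fun ν hν => snoc_mem_seqsLast.2 ⟨hν, rfl⟩) (fun ν hν => ?_) (fun ν _ => Fin.init_snoc _ _)
    (fun ν hν => ?_) (fun _ _ => rfl)
  all_goals
    have hν' : Fin.snoc (Fin.init ν) i = ν := by
      rw [← (mem_seqsLast.1 hν).2, Fin.snoc_init_self]
  · exact (snoc_mem_seqsLast.1 (hν'.symm ▸ hν)).1
  · exact hν'

theorem eD_addA (δ : I → ℕ) (i : I) : eD C (n + 1) (addA δ i) i = eR C n δ i :=
  Finset.sum_congr (Finset.filter_congr fun _ _ => by rw [dif_pos n.succ_pos]; rfl) fun _ _ => rfl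

namespace IsUpRb

variable {φ : bAlg C n δ →ₙₐ[k] bAlg C (n + 1) γ}

theorem map_one (hφ : IsUpRb C i φ) : φ 1 = toB C (eR C n δ i) := by
  rw [← toB_eIdem, eIdem, map_sum, map_sum, ← sum_seqs_Ee_snoc, map_sum]
  exact Finset.sum_congr rfl fun ν _ => hφ.1 ν

theorem map_toB_xGen (hφ : IsUpRb C i φ) {j : ℕ} (hj : j < n) :
    φ (toB C (xGen C n j)) = toB C (xGen C (n + 1) j) * φ 1 := by
  rw [xGen_of_lt C hj, xGen_of_lt C (Nat.lt_succ_of_lt hj), hφ.2.1, hφ.map_one, map_mul]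
  rfl

theorem map_toB_tauGen (hφ : IsUpRb C i φ) {l : ℕ} (hl : l + 1 < n) :
    φ (toB C (tauGen C n l)) = toB C (tauGen C (n + 1) l) * φ 1 := by
  rw [tauGen_of_lt C hl, tauGen_of_lt C (Nat.lt_succ_of_lt hl), hφ.2.2, hφ.map_one, map_mul]

theorem map_algebraMap (c : k) : φ (algebraMap k _ c) = algebraMap k _ c * φ 1 := by
  rw [Algebra.algebraMap_eq_smul_one, map_smul, Algebra.smul_def]

theorem toB_Ee_snoc_mul_map_one (hφ : IsUpRb C i φ) (ν : Fin n → I) (j : I) :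
    toB C (Ee C (Fin.snoc ν j)) * φ 1 = if j = i then φ (toB C (Ee C ν)) else 0 := by
  split_ifs with h
  · rw [h, ← hφ.1, map_mul_map_one]
  · rw [hφ.map_one, ← map_mul, eR_eq_wordIdem, ← (wordIdem_commute_Ee C _ _).eq,
      ← eR_eq_wordIdem, eR_mul_Ee_snoc C δ h, map_zero]

theorem exists_map_eq_of_mem_genSubalg (hφ : IsUpRb C i φ) {r : Alg C (n + 1)}
    (hr : r ∈ genSubalg C (n + 1) n n) : ∃ s, φ s = toB C r * φ 1 := by
  induction hr using Algebra.adjoin_induction with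
  | mem g hg =>
    rcases hg with (⟨ν, rfl⟩ | ⟨j, hj, rfl⟩) | ⟨l, hl, rfl⟩
    · rw [← Fin.snoc_init_self ν, hφ.toB_Ee_snoc_mul_map_one]
      split_ifs
      exacts [⟨_, rfl⟩, ⟨0, map_zero φ⟩]
    · exact ⟨_, hφ.map_toB_xGen hj⟩
    · exact ⟨_, hφ.map_toB_tauGen hl⟩
  | algebraMap c => exact ⟨_, (map_algebraMap c).trans (by rw [AlgHom.commutes])⟩
  | add a b _ _ ha hb =>
    obtain ⟨⟨s, hs⟩, ⟨t, ht⟩⟩ := ha, hb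
    exact ⟨s + t, by rw [map_add, map_add, add_mul, hs, ht]⟩
  | mul a b _ _ ha hb =>
    obtain ⟨⟨s, hs⟩, ⟨t, ht⟩⟩ := ha, hb
    exact ⟨s * t, by rw [map_mul, map_mul, hs, mul_assoc, map_one_mul_map, ht, mul_assoc]⟩

theorem exists_mem_genSubalg_map_toB_eq (hφ : IsUpRb C i φ) (r : Alg C n) :
    ∃ r' ∈ genSubalg C (n + 1) n n,
      φ (toB C r) = toB C r' * φ 1 ∧ rep C (n + 1) r' = rep C n r := by
  induction r using alg_induction with
  | Ee ν =>
    refine ⟨∑ j, Ee C (Fin.snoc ν j), sum_mem fun j _ => Ee_mem_genSubalg C _ _ _, ?_,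
      rep_succ_sum_Ee_snoc C ν⟩
    rw [map_sum, Finset.sum_mul]
    simp only [hφ.toB_Ee_snoc_mul_map_one, Finset.sum_ite_eq', Finset.mem_univ, if_true]
  | xGen j hj =>
    exact ⟨_, xGen_mem_genSubalg C hj, hφ.map_toB_xGen hj,
      by rw [rep_xGen C hj, rep_xGen C (Nat.lt_succ_of_lt hj)]⟩
  | tauGen l hl =>
    exact ⟨_, tauGen_mem_genSubalg C hl, hφ.map_toB_tauGen hl,
      by rw [rep_tauGen C hl, rep_tauGen C (Nat.lt_succ_of_lt hl)]⟩
  | algebraMap c =>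
    refine ⟨algebraMap k _ c, Subalgebra.algebraMap_mem _ c, ?_, ?_⟩
    · rw [AlgHom.commutes, AlgHom.commutes, map_algebraMap]
    · rw [AlgHom.commutes, AlgHom.commutes]
  | add a b ha hb =>
    obtain ⟨⟨r, hr, h, hrep⟩, ⟨r', hr', h', hrep'⟩⟩ := ha, hb
    refine ⟨r + r', add_mem hr hr', ?_, ?_⟩
    · rw [map_add, map_add, map_add, add_mul, h, h']
    · rw [map_add, map_add, hrep, hrep']
  | mul a b ha hb =>
    obtain ⟨⟨r, hr, h, hrep⟩, ⟨r', hr', h', hrep'⟩⟩ := ha, hb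
    refine ⟨r * r', mul_mem hr hr', ?_, ?_⟩
    · rw [map_mul (toB C), map_mul (toB C), map_mul_of_eq_mul_map_one h h']
    · rw [map_mul, map_mul, hrep, hrep']

theorem exists_mem_genSubalg_map_eq (hφ : IsUpRb C i φ) (s : bAlg C n δ) :
    ∃ r ∈ genSubalg C (n + 1) n n, φ s = toB C r ∧ r * eR C n δ i = r := by
  obtain ⟨r₀, rfl⟩ := toB_surjective s
  obtain ⟨r, hr, h, -⟩ := hφ.exists_mem_genSubalg_map_toB_eq r₀
  refine ⟨r * eR C n δ i, mul_mem hr (wordIdem_mem_genSubalg C _ _ _), ?_, ?_⟩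
  · rw [h, hφ.map_one, map_mul]
  · rw [mul_assoc, eR_mul_self]

theorem injective {φ : bAlg C n δ →ₙₐ[k] bAlg C (n + 1) (addA δ i)} (hφ : IsUpRb C i φ) :
    Function.Injective φ := by
  refine (injective_iff_map_eq_zero φ).2 fun s hs => ?_
  have : Nonempty I := ⟨i⟩
  obtain ⟨r₀, rfl⟩ := toB_surjective s
  obtain ⟨r, -, h, hrep⟩ := hφ.exists_mem_genSubalg_map_toB_eq r₀
  have hr : r * eR C n δ i = 0 := by
    have h₀ : toB C (β := addA δ i) (r * eR C n δ i) = 0 := by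
      rw [map_mul, ← hφ.map_one, ← h, hs]
    have h₁ := eIdem_mul_eq_zero_of_toB_eq_zero h₀
    rwa [← mul_assoc, (eIdem_commute C _ r).eq, mul_assoc, eIdem_mul_eR] at h₁
  have hr₀ : r₀ * eIdem C n δ = 0 := by
    refine rep_injective C (LinearMap.ext fun f => funext fun μ => ?_)
    let f' := setLetter k n (μ n) f
    have hzero : rep C n r₀ (rep C (n + 1) (eR C n δ i) f') = 0 := by
      rw [← hrep, ← Module.End.mul_apply, ← map_mul, hr, map_zero, LinearMap.zero_apply]
    have hf' : setLetter k n (μ n) (rep C n (r₀ * eIdem C n δ) f) = 0 := by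
      rw [setLetter_rep, map_mul, Module.End.mul_apply, ← setLetter_rep_eR C δ i,
        ← setLetter_rep, hzero]
      rfl
    rw [map_zero]
    exact (congrArg _ (Function.update_eq_self n μ).symm).trans (congrFun hf' μ)
  rw [← mul_one (toB C r₀), ← toB_eIdem, ← map_mul, hr₀, map_zero]

end IsUpRb

end Embedding

section RightBasis

variable {k S B ι : Type*} [Field k] [Ring S] [Algebra k S] [Ring B] [Algebra k B]
  {φ : S →ₙₐ[k] B} {v : ι → B}

/-- The right `S`-submodule of `B` spanned by the family `v`, where `S` acts through the
non-unital homomorphism `φ`. -/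
def rightSpan (φ : S →ₙₐ[k] B) (v : ι → B) : Submodule k B :=
  Submodule.span k (Set.range fun p : ι × S => v p.1 * φ p.2)

theorem mul_map_mem_rightSpan (p : ι) (s : S) : v p * φ s ∈ rightSpan φ v :=
  Submodule.subset_span ⟨(p, s), rfl⟩

theorem rightSpan_le {W : Submodule k B} : rightSpan φ v ≤ W ↔ ∀ p s, v p * φ s ∈ W := by
  rw [rightSpan, Submodule.span_le, Set.range_subset_iff, Prod.forall]
  rfl

theorem rightSpan_mul_map {b : B} (hb : b ∈ rightSpan φ v) (s : S) : b * φ s ∈ rightSpan φ v := by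
  refine rightSpan_le (W := (rightSpan φ v).comap (LinearMap.mulRight k (φ s))).2 (fun p t => ?_) hb
  rw [Submodule.mem_comap, LinearMap.mulRight_apply, mul_assoc, ← map_mul]
  exact mul_map_mem_rightSpan p _

theorem apply_mul_map_one_mem_rightSpan {A : Type*} [Ring A] [Algebra k A] (π : A →ₐ[k] B)
    {W : Submodule k A} (hW : ∀ y ∈ W, ∃ s, φ s = π y * φ 1) {v : ι → A} {r : A}
    (hr : r ∈ Submodule.span k (Set.range v) * W) :
    π r * φ 1 ∈ rightSpan φ fun p => π (v p) := by
  let P : Submodule k B := rightSpan φ fun p => π (v p)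
  refine Submodule.mul_le (P := P.comap (LinearMap.mulRight k (φ 1) ∘ₗ π.toLinearMap)).2 ?_ hr
  intro a ha y hy
  obtain ⟨s, hs⟩ := hW y hy
  change (π (a * y) * φ 1 : B) ∈ P
  rw [map_mul, mul_assoc, ← hs]
  refine Submodule.span_le (p := P.comap (LinearMap.mulRight k (φ s) ∘ₗ π.toLinearMap)).2 ?_ ha
  rintro _ ⟨p, rfl⟩
  exact mul_map_mem_rightSpan (v := fun p => π (v p)) p s

/-- The right `S`-linear maps `B → S`, where `S` acts on `B` through `φ`. -/
def IsRightLinear (φ : S →ₙₐ[k] B) (κ : B →ₗ[k] S) : Prop := ∀ b s, κ (b * φ s) = κ b * s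

/-- The family `v` is a basis of the right `S`-module `B φ(1)`, where `S` acts through `φ`. The
`v p` need not lie in `B φ(1)`: it is the `v p * φ 1` that form the basis. -/
structure IsRightBasis (φ : S →ₙₐ[k] B) (v : ι → B) : Prop where
  mul_map_one_mem : ∀ b, b * φ 1 ∈ rightSpan φ v
  eq_zero_of_sum_eq_zero : ∀ σ : ι →₀ S, (σ.sum fun p s => v p * φ s) = 0 → σ = 0

theorem IsRightBasis.exists_dual [DecidableEq ι] (hv : IsRightBasis φ v) :
    ∃ κ : ι → B →ₗ[k] S, (∀ p, IsRightLinear φ (κ p)) ∧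
      ∀ p q s, κ p (v q * φ s) = if p = q then s else 0 := by
  let L : (ι →₀ S) →ₗ[k] B := Finsupp.lsum k fun p => LinearMap.mulLeft k (v p) ∘ₗ (φ : S →ₗ[k] B)
  have hL (p s) : L (Finsupp.single p s) = v p * φ s := by
    rw [Finsupp.lsum_single]
    rfl
  obtain ⟨G, hG⟩ := L.exists_leftInverse_of_injective
    (LinearMap.ker_eq_bot'.2 hv.eq_zero_of_sum_eq_zero)
  have hG' (p s) : G (v p * φ s) = Finsupp.single p s := by
    rw [← hL]
    exact LinearMap.congr_fun hG _
  let κ (p : ι) : B →ₗ[k] S := Finsupp.lapply p ∘ₗ G ∘ₗ LinearMap.mulRight k (φ 1)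
  have hκ (p q s) : κ p (v q * φ s) = if p = q then s else 0 := by
    change G (v q * φ s * φ 1) p = _
    rw [mul_assoc, map_mul_map_one, hG', Finsupp.single_apply]
    exact if_congr eq_comm rfl rfl
  refine ⟨κ, fun p b s => ?_, hκ⟩
  have hb : κ p (b * φ 1 * φ s) = κ p (b * φ 1) * s := by
    refine rightSpan_le (W := LinearMap.eqLocus (κ p ∘ₗ LinearMap.mulRight k (φ s))
      (LinearMap.mulRight k s ∘ₗ κ p)).2 (fun q t => ?_) (hv.mul_map_one_mem b)
    change κ p (v q * φ t * φ s) = κ p (v q * φ t) * s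
    rw [mul_assoc, ← map_mul, hκ, hκ, ite_mul, zero_mul]
  have hone : κ p (b * φ 1) = κ p b := by
    change G (b * φ 1 * φ 1) p = G (b * φ 1) p
    rw [mul_assoc, map_mul_map_one]
  rw [← hone, ← hb, mul_assoc, map_one_mul_map]

end RightBasis

section MonomialBasis

variable {k : Type} [Field k] {I : Type} [Fintype I] [DecidableEq I] {C : CartanDatum k I}
variable {n : ℕ} {δ γ : I → ℕ} {i : I}

namespace IsUpRb

variable {φ : bAlg C n δ →ₙₐ[k] bAlg C (n + 1) γ}

theorem toB_mul_map_one_mem_rightSpan (hφ : IsUpRb C i φ) {ι : Type*} {v : ι → Alg C (n + 1)}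
    {r : Alg C (n + 1)} (hr : r ∈ Submodule.span k (Set.range v) * genSpace C (n + 1) n n) :
    toB C r * φ 1 ∈ rightSpan φ fun p => toB C (v p) :=
  apply_mul_map_one_mem_rightSpan (toB C) (fun _ hy => hφ.exists_map_eq_of_mem_genSubalg hy) hr

end IsUpRb

variable (C n γ) in
/-- The image in `R(γ)` of the monomial `τ_a ⋯ τ_{n-1} x_n^c`, where `p = (a, c)` and positions
are counted from `0`. -/
noncomputable def tauXBasis (p : Fin (n + 1) × ℕ) : bAlg C (n + 1) γ :=
  toB C (tauXMonomial C (n + 1) n p)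

namespace IsUpRb

theorem mul_map_one_mem_rightSpan_tauXBasis {φ : bAlg C n δ →ₙₐ[k] bAlg C (n + 1) γ}
    (hφ : IsUpRb C i φ) (b : bAlg C (n + 1) γ) : b * φ 1 ∈ rightSpan φ (tauXBasis C n γ) := by
  obtain ⟨r, rfl⟩ := toB_surjective b
  exact hφ.toB_mul_map_one_mem_rightSpan (genSpace_le_span_tauXMonomial_mul C n
    (show r ∈ genSubalg C _ _ _ from genSubalg_self C (N := n + 1) ▸ Algebra.mem_top))

variable {φ : bAlg C n δ →ₙₐ[k] bAlg C (n + 1) (addA δ i)}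

theorem eq_zero_of_sum_tauXBasis_mul_eq_zero (hφ : IsUpRb C i φ)
    (σ : Fin (n + 1) × ℕ →₀ bAlg C n δ)
    (h : (σ.sum fun p s => tauXBasis C n (addA δ i) p * φ s) = 0) : σ = 0 := by
  have : Nonempty I := ⟨i⟩
  choose g hg_mem hg_map hg_mul using hφ.exists_mem_genSubalg_map_eq
  let r : Fin (n + 1) × ℕ →₀ Alg C (n + 1) := Finsupp.indicator σ.support fun p _ => g (σ p)
  have hr (p) : r p ∈ genSubalg C (n + 1) n n := by
    rw [Finsupp.indicator_apply]
    split_ifs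
    exacts [hg_mem _, zero_mem _]
  have hsum : (r.sum fun p y => tauXMonomial C (n + 1) n p * y) =
      ∑ p ∈ σ.support, tauXMonomial C (n + 1) n p * g (σ p) :=
    Finsupp.sum_indicator_index _ fun _ _ => mul_zero _
  have hg_eIdem (s) : g s * eIdem C (n + 1) (addA δ i) = g s := by
    rw [← hg_mul, mul_assoc, ← (eIdem_commute C _ _).eq, eIdem_mul_eR]
  have hzero : (r.sum fun p y => tauXMonomial C (n + 1) n p * y) = 0 := by
    have h₀ : (toB C (∑ p ∈ σ.support, tauXMonomial C (n + 1) n p * g (σ p)) :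
        bAlg C (n + 1) (addA δ i)) = 0 := by
      rw [← h, map_sum]
      exact Finset.sum_congr rfl fun p _ => by rw [map_mul, ← hg_map]; rfl
    rw [hsum, ← eIdem_mul_eq_zero_of_toB_eq_zero h₀, (eIdem_commute C _ _).eq, Finset.sum_mul]
    exact Finset.sum_congr rfl fun p _ => by rw [mul_assoc, hg_eIdem]
  have hr₀ : r = 0 := eq_zero_of_sum_tauXMonomial_mul_eq_zero C n.lt_succ_self hr hzero
  ext1 p
  by_contra hp
  refine hp (hφ.injective ?_)
  rw [hg_map, ← Finsupp.indicator_of_mem (Finsupp.mem_support_iff.2 hp) fun p _ => g (σ p)]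
  change toB C (r p) = φ 0
  rw [hr₀, Finsupp.zero_apply, map_zero, map_zero]

theorem isRightBasis_tauXBasis (hφ : IsUpRb C i φ) :
    IsRightBasis φ (tauXBasis C n (addA δ i)) :=
  ⟨hφ.mul_map_one_mem_rightSpan_tauXBasis, hφ.eq_zero_of_sum_tauXBasis_mul_eq_zero⟩

end IsUpRb

end MonomialBasis

section DoubleSpan

variable {k S B : Type*} [Field k] [Ring S] [Algebra k S] [Ring B] [Algebra k B]
  {φ : S →ₙₐ[k] B}

/-- The `S`-sub-bimodule of `B` generated by `θ`, where `S` acts through the non-unital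
homomorphism `φ`. -/
def doubleSpan (φ : S →ₙₐ[k] B) (θ : B) : Submodule k B :=
  Submodule.span k (Set.range fun p : S × S => φ p.1 * θ * φ p.2)

theorem map_mul_mul_map_mem_doubleSpan {θ : B} (s t : S) : φ s * θ * φ t ∈ doubleSpan φ θ :=
  Submodule.subset_span ⟨(s, t), rfl⟩

theorem map_mul_mem_rightSpan_pow {X : B} (hX : ∀ s, Commute X (φ s)) {b : B}
    (hb : b ∈ rightSpan φ (X ^ · : ℕ → B)) (s : S) : φ s * b ∈ rightSpan φ (X ^ · : ℕ → B) := by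
  refine rightSpan_le (W := (rightSpan φ (X ^ · : ℕ → B)).comap (LinearMap.mulLeft k (φ s))).2
    (fun j t => ?_) hb
  rw [Submodule.mem_comap, LinearMap.mulLeft_apply, ← mul_assoc, ← ((hX s).pow_left j).eq,
    mul_assoc, ← map_mul]
  exact mul_map_mem_rightSpan j _

theorem map_one_mul_mul_map_one_mem_doubleSpan {A : Type*} [Ring A] [Algebra k A] (π : A →ₐ[k] B)
    {G : Submodule k A} (hG : ∀ y ∈ G, ∃ s, φ s = π y * φ 1)
    (hcomm : ∀ y ∈ G, Commute (φ 1) (π y)) {τ r : A}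
    (hr : r ∈ G * Submodule.span k {τ} * G) :
    φ 1 * π r * φ 1 ∈ doubleSpan φ (φ 1 * π τ * φ 1) := by
  let F : A →ₗ[k] B := LinearMap.mulRight k (φ 1) ∘ₗ LinearMap.mulLeft k (φ 1) ∘ₗ π.toLinearMap
  change r ∈ (doubleSpan φ (φ 1 * π τ * φ 1)).comap F
  refine Submodule.mul_le.2 (fun u hu y hy => ?_) hr
  obtain ⟨x, hx, rfl⟩ := Submodule.mem_mul_span_singleton.1 hu
  obtain ⟨s, hs⟩ := hG x hx
  obtain ⟨t, ht⟩ := hG y hy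
  have h : φ 1 * π (x * τ * y) * φ 1 = φ s * (φ 1 * π τ * φ 1) * φ t := by
    calc φ 1 * π (x * τ * y) * φ 1 = φ 1 * π x * π τ * (π y * φ 1) := by
          rw [map_mul, map_mul]; simp only [mul_assoc]
      _ = φ s * π τ * φ t := by rw [(hcomm x hx).eq, hs, ht]
      _ = φ s * φ 1 * π τ * (φ 1 * φ t) := by rw [map_mul_map_one, map_one_mul_map]
      _ = _ := by simp only [mul_assoc]
  rw [Submodule.mem_comap]
  change φ 1 * π (x * τ * y) * φ 1 ∈ _
  rw [h]
  exact map_mul_mul_map_mem_doubleSpan s t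

end DoubleSpan

section SwapWord

variable {I : Type}

theorem swapWord_eq_self {N l : ℕ} (h : l + 1 < N) {μ : Fin N → I}
    (hμ : μ ⟨l, Nat.lt_of_succ_lt h⟩ = μ ⟨l + 1, h⟩) : swapWord l μ = μ := by
  rw [swapWord, dif_pos h]
  funext a
  rw [Function.comp_apply, Equiv.swap_apply_def]
  split_ifs with h₁ h₂
  exacts [h₁ ▸ hμ.symm, h₂ ▸ hμ, rfl]

theorem swapWord_snoc_last {n : ℕ} (ν : Fin (n + 1) → I) (j : I) :
    swapWord n (Fin.snoc ν j : Fin (n + 2) → I) (Fin.last (n + 1)) = ν (Fin.last n) := by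
  rw [swapWord, dif_pos (n + 1).lt_succ_self, Function.comp_apply]
  exact (congrArg _ (Equiv.swap_apply_right _ _)).trans
    (Fin.snoc_castSucc (α := fun _ => I) j ν (Fin.last n))

end SwapWord

section Corner

variable {k : Type} [Field k] {I : Type} [Fintype I] [DecidableEq I] {C : CartanDatum k I}
variable {n : ℕ} {β δ γ : I → ℕ} {i : I}

variable {φ : bAlg C (n + 1) β →ₙₐ[k] bAlg C (n + 2) (addA β i)}
  {φ' : bAlg C n δ →ₙₐ[k] bAlg C (n + 1) β}

namespace IsUpRb

theorem commute_xGen {ψ : bAlg C n δ →ₙₐ[k] bAlg C (n + 1) γ} (hψ : IsUpRb C i ψ)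
    (s : bAlg C n δ) : Commute (toB C (xGen C (n + 1) n)) (ψ s) := by
  obtain ⟨r, hr, h, -⟩ := hψ.exists_mem_genSubalg_map_eq s
  rw [h]
  exact Commute.map (xGen_mul_comm_of_mem_genSubalg C le_rfl hr) _

theorem commute_tauGen (hφ : IsUpRb C i φ) (hφ' : IsUpRb C i φ') (t : bAlg C n δ) :
    Commute (toB C (tauGen C (n + 2) n)) (φ (φ' t)) := by
  set τ : bAlg C (n + 2) (addA β i) := toB C (tauGen C (n + 2) n)
  have he (ν : Fin n → I) : Commute τ (φ (φ' (toB C (Ee C ν)))) := by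
    have h : swapWord n (Fin.snoc (Fin.snoc ν i : Fin (n + 1) → I) i : Fin (n + 2) → I) =
        Fin.snoc (Fin.snoc ν i : Fin (n + 1) → I) i := by
      refine swapWord_eq_self (n + 1).lt_succ_self
        (Eq.trans ?_ (Fin.snoc_last (α := fun _ => I) i _).symm)
      exact (Fin.snoc_castSucc (α := fun _ => I) i _ (Fin.last n)).trans (Fin.snoc_last _ _)
    rw [hφ'.1, hφ.1]
    refine Commute.map (f := toB C) ((tauGen_mul_Ee C _ _).trans ?_)
    rw [h]
  have hone : Commute τ (φ (φ' 1)) := by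
    rw [← toB_eIdem, eIdem, map_sum, map_sum, map_sum]
    exact Commute.sum_right _ _ _ fun ν _ => he ν
  have hgen {s : bAlg C n δ} {y : Alg C (n + 2)} (hs : φ (φ' s) = toB C y * φ (φ' 1))
      (hy : Commute (tauGen C (n + 2) n) y) : Commute τ (φ (φ' s)) := by
    rw [hs]
    exact (hy.map (toB C)).mul_right hone
  obtain ⟨r, rfl⟩ := toB_surjective t
  induction r using alg_induction with
  | Ee ν => exact he ν
  | xGen j hj =>
    refine hgen (y := xGen C (n + 2) j) ?_ (tauGen_mul_xGen_of_ne C (by omega) (by omega))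
    rw [hφ'.map_toB_xGen hj, map_mul, hφ.map_toB_xGen (by omega), mul_assoc, map_one_mul_map]
  | tauGen l hl =>
    refine hgen (y := tauGen C (n + 2) l) ?_ (tauGen_comm C (by omega))
    rw [hφ'.map_toB_tauGen hl, map_mul, hφ.map_toB_tauGen (by omega), mul_assoc, map_one_mul_map]
  | algebraMap c =>
    rw [AlgHom.commutes, Algebra.algebraMap_eq_smul_one, map_smul, map_smul]
    exact hone.smul_right c
  | add a b ha hb =>
    rw [map_add, map_add, map_add]
    exact ha.add_right hb
  | mul a b ha hb =>
    rw [map_mul, map_mul, map_mul]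
    exact ha.mul_right hb

theorem map_one_mul_tauGen_mul_map_toB_Ee (hφ : IsUpRb C i φ) {ν : Fin (n + 1) → I}
    (hν : ν ∈ seqs β (n + 1)) :
    φ 1 * toB C (tauGen C (n + 2) n) * φ (toB C (Ee C ν)) =
      if ν (Fin.last n) = i then toB C (tauGen C (n + 2) n) * φ (toB C (Ee C ν)) else 0 := by
  have hmem : swapWord n (Fin.snoc ν i : Fin (n + 2) → I) ∈ seqsLast (n + 1) β i ↔
      ν (Fin.last n) = i := by
    rw [mem_seqsLast, content_swapWord, content_snoc, mem_seqs.1 hν, swapWord_snoc_last]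
    exact and_iff_right rfl
  rw [hφ.map_one, hφ.1, ← map_mul, ← map_mul, ← map_mul, mul_assoc, tauGen_mul_Ee, ← mul_assoc,
    eR_eq_wordIdem, wordIdem_mul_Ee, if_congr hmem rfl rfl, ite_mul, zero_mul]
  split_ifs
  exacts [rfl, map_zero _]

theorem map_one_mul_tauGen_mul_map_one (hφ : IsUpRb C i φ) :
    φ 1 * toB C (tauGen C (n + 2) n) * φ 1 =
      toB C (tauGen C (n + 2) n) * φ (eDb C (n + 1) β i) := by
  have hone : φ 1 = ∑ ν ∈ seqs β (n + 1), φ (toB C (Ee C ν)) := by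
    rw [← toB_eIdem, eIdem, map_sum, map_sum]
  conv_lhs => arg 2; rw [hone]
  rw [Finset.mul_sum, Finset.sum_congr rfl fun ν hν => hφ.map_one_mul_tauGen_mul_map_toB_Ee hν,
    ← Finset.sum_filter, eDb, eD, map_sum, map_sum, Finset.mul_sum]
  exact Finset.sum_congr (Finset.filter_congr fun _ _ => by rw [dif_pos n.succ_pos]; rfl)
    fun _ _ => rfl

end IsUpRb

/-- The crossing `e(β, α_i) τ e(β, α_i)` of the last two strands in `R(β + α_i)`, where
`e(β, α_i) = φ(1)`. -/
noncomputable def lastCrossing (φ : bAlg C (n + 1) β →ₙₐ[k] bAlg C (n + 2) (addA β i)) :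
    bAlg C (n + 2) (addA β i) :=
  φ 1 * toB C (tauGen C (n + 2) n) * φ 1

theorem eDb_mul_self (n : ℕ) (β : I → ℕ) (i : I) : eDb C n β i * eDb C n β i = eDb C n β i :=
  (map_mul _ _ _).symm.trans <| congrArg _ <| wordIdem_mul_wordIdem C subset_rfl

theorem tauXMonomial_succ_sub_mem {N m : ℕ} (a : Fin (m + 1)) (c : ℕ) :
    tauXMonomial C N (m + 1) (a.castSucc, c) - tauXMonomial C N m (a, c) * tauGen C N m ∈
      genSubalg C N (m + 1) (m + 2) := by
  have h := mul_mem (tauChain_mem_genSubalg C (N := N) a m (m + 2))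
    (tauGen_mul_xGen_pow_sub_mem C m c)
  rwa [mul_sub, ← mul_assoc, ← mul_assoc, ← tauChain_succ C (Nat.le_of_lt_succ a.2)] at h

theorem tauXBasis_last (j : ℕ) :
    tauXBasis C n γ (Fin.last n, j) = toB C (xGen C (n + 1) n) ^ j := by
  rw [tauXBasis, tauXMonomial, Fin.val_last, tauChain_self, one_mul, map_pow]

theorem toB_wordIdem_eq_zero {s : Finset (Fin n → I)} (h : ∀ ν ∈ s, content ν ≠ β) :
    (toB C (wordIdem C s) : bAlg C n β) = 0 := by
  rw [← one_mul (toB C (wordIdem C s)), ← toB_eIdem, ← map_mul, wordIdem, Finset.mul_sum,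
    Finset.sum_eq_zero, map_zero]
  intro ν hν
  rw [eIdem_eq_wordIdem, wordIdem_mul_Ee, if_neg (mt mem_seqs.1 (h ν hν))]

namespace IsUpRb

theorem lastCrossing_eq (hφ : IsUpRb C i φ) :
    lastCrossing φ = toB C (tauGen C (n + 2) n) * φ (eDb C (n + 1) β i) :=
  hφ.map_one_mul_tauGen_mul_map_one

theorem lastCrossing_mul_map_eDb (hφ : IsUpRb C i φ) :
    lastCrossing φ * φ (eDb C (n + 1) β i) = lastCrossing φ := by
  rw [hφ.lastCrossing_eq, mul_assoc, ← map_mul, eDb_mul_self]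

theorem commute_lastCrossing (hφ : IsUpRb C i φ) (hφ' : IsUpRb C i φ') (t : bAlg C n δ) :
    Commute (lastCrossing φ) (φ (φ' t)) := by
  have hone : Commute (φ 1) (φ (φ' t)) := by
    rw [commute_iff_eq, map_mul_map_one, map_one_mul_map]
  exact (hone.mul_left (hφ.commute_tauGen hφ' t)).mul_left hone

theorem map_one_mul_mul_map_one_mem (hφ : IsUpRb C i φ) (b : bAlg C (n + 2) (addA β i)) :
    φ 1 * b * φ 1 ∈ doubleSpan φ (lastCrossing φ) ⊔
      rightSpan φ (toB C (xGen C (n + 2) (n + 1)) ^ · : ℕ → _) := by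
  obtain ⟨r, rfl⟩ := toB_surjective b
  have hr : r ∈ genSpace C (n + 2) (n + 2) (n + 2) :=
    show r ∈ genSubalg C _ _ _ from genSubalg_self C (N := n + 2) ▸ Algebra.mem_top
  obtain ⟨y, hy, z, hz, rfl⟩ :=
    Submodule.mem_sup.1 (genSpace_le_mul_tauLine_mul_sup C n hr)
  rw [map_add, mul_add, add_mul]
  refine Submodule.add_mem_sup ?_ ?_
  · refine map_one_mul_mul_map_one_mem_doubleSpan (toB C)
      (fun _ h => hφ.exists_map_eq_of_mem_genSubalg h) (fun u hu => ?_) hy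
    rw [hφ.map_one]
    exact (eR_commute C _ _ _ hu).map _
  · have h := hφ.toB_mul_map_one_mem_rightSpan (v := fun c => xGen C (n + 2) (n + 1) ^ c) hz
    simp only [map_pow] at h
    rw [mul_assoc]
    exact map_mul_mem_rightSpan_pow hφ.commute_xGen h 1

section

variable {φ : bAlg C n δ →ₙₐ[k] bAlg C (n + 1) γ}

theorem map_toB_tauChain (hφ : IsUpRb C i φ) (a : ℕ) {m : ℕ} (hm : m < n) :
    φ (toB C (tauChain C n a m)) = toB C (tauChain C (n + 1) a m) * φ 1 := by
  induction m with
  | zero => simp only [tauChain, _root_.map_one, one_mul]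
  | succ m ih =>
    simp only [tauChain]
    split_ifs
    · rw [map_mul (toB C), map_mul (toB C), map_mul_of_eq_mul_map_one (ih (Nat.lt_of_succ_lt hm))
        (hφ.map_toB_tauGen hm)]
    · simp only [_root_.map_one, one_mul]

theorem map_toB_xGen_pow (hφ : IsUpRb C i φ) {j : ℕ} (hj : j < n) (c : ℕ) :
    φ (toB C (xGen C n j ^ c)) = toB C (xGen C (n + 1) j ^ c) * φ 1 := by
  induction c with
  | zero => simp only [pow_zero, _root_.map_one, one_mul]
  | succ c ih =>
    rw [pow_succ, pow_succ, map_mul (toB C), map_mul (toB C),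
      map_mul_of_eq_mul_map_one ih (hφ.map_toB_xGen hj)]

end

theorem map_tauXBasis (hφ : IsUpRb C i φ) (p : Fin (n + 1) × ℕ) :
    φ (tauXBasis C n β p) = toB C (tauXMonomial C (n + 2) n p) * φ 1 := by
  rw [tauXBasis, tauXMonomial, tauXMonomial, map_mul (toB C), map_mul (toB C)]
  exact map_mul_of_eq_mul_map_one (hφ.map_toB_tauChain _ n.lt_succ_self)
    (hφ.map_toB_xGen_pow n.lt_succ_self _)

theorem tauXBasis_castSucc_mul_sub_mem (hφ : IsUpRb C i φ) (p : Fin (n + 1) × ℕ) :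
    tauXBasis C (n + 1) (addA β i) (p.1.castSucc, p.2) * φ (eDb C (n + 1) β i) -
        φ (tauXBasis C n β p) * lastCrossing φ ∈
      rightSpan φ (toB C (xGen C (n + 2) (n + 1)) ^ · : ℕ → _) := by
  have h₁ : φ (tauXBasis C n β p) * lastCrossing φ =
      toB C (tauXMonomial C (n + 2) n p * tauGen C (n + 2) n) * φ (eDb C (n + 1) β i) := by
    have h : φ 1 * lastCrossing φ = lastCrossing φ := by
      rw [lastCrossing, ← mul_assoc, ← mul_assoc, map_mul_map_one]
    rw [hφ.map_tauXBasis, mul_assoc, h, hφ.lastCrossing_eq, map_mul, mul_assoc]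
  have h₂ := hφ.toB_mul_map_one_mem_rightSpan (v := fun c => xGen C (n + 2) (n + 1) ^ c)
    (genSpace_le_xPowSpan_mul C (n + 1) (tauXMonomial_succ_sub_mem p.1 p.2))
  simp only [map_pow] at h₂
  have h₃ := rightSpan_mul_map h₂ (eDb C (n + 1) β i)
  rw [mul_assoc, map_one_mul_map, map_sub, sub_mul] at h₃
  rw [h₁]
  exact h₃

theorem map_one_eq_eDb_addA {φ : bAlg C n β →ₙₐ[k] bAlg C (n + 1) (addA β i)}
    (hφ : IsUpRb C i φ) : φ 1 = eDb C (n + 1) (addA β i) i := by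
  rw [hφ.map_one, eDb, eD_addA]

theorem map_one_eq_eDb {φ' : bAlg C n (subA β i) →ₙₐ[k] bAlg C (n + 1) β}
    (hφ' : IsUpRb C i φ') : φ' 1 = eDb C (n + 1) β i := by
  rw [hφ'.map_one, eDb]
  by_cases h : β i = 0
  · have hne {ν : Fin (n + 1) → I} (hν : ν (Fin.last n) = i) : content ν ≠ β := fun hβ =>
      content_apply_ne_zero ν (Fin.last n) (by rw [hν, hβ, h])
    rw [eR_eq_wordIdem, toB_wordIdem_eq_zero fun ν hν => hne (mem_seqsLast.1 hν).2]
    refine (toB_wordIdem_eq_zero fun ν hν => hne ?_).symm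
    have hi := (Finset.mem_filter.1 hν).2
    rwa [dif_pos n.succ_pos] at hi
  · rw [← eD_addA, addA_subA h]

end IsUpRb
end Corner

section InducedModule

open TensorProduct

variable {k S B M : Type} [Field k] [Ring S] [Algebra k S] [Ring B] [Algebra k B]
  [AddCommGroup M] [Module k M] [Module S M]

/-- The canonical `k`-bilinear map `(b, m) ↦ b ⊗ m` to the balanced tensor product. -/
noncomputable def otTmul (φ : S →ₙₐ[k] B) : B →ₗ[k] M →ₗ[k] OT k S B M φ :=
  (TensorProduct.mk k B M).compr₂ ((TRel k S B M φ).mkQ.restrictScalars k)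

variable {φ : S →ₙₐ[k] B}

theorem smul_otTmul (a b : B) (m : M) : a • otTmul φ b m = otTmul φ (a * b) m := rfl

theorem otTmul_mul_map (b : B) (s : S) (m : M) : otTmul φ (b * φ s) m = otTmul φ b (s • m) :=
  (Submodule.Quotient.eq _).2 (Submodule.subset_span ⟨b, s, m, rfl⟩)

theorem otTmul_mul_map_one (b : B) (m : M) : otTmul φ (b * φ 1) m = otTmul φ b m := by
  rw [otTmul_mul_map, one_smul]

theorem mem_of_forall_otTmul_mem {W : Submodule k (OT k S B M φ)} (h : ∀ b m, otTmul φ b m ∈ W)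
    (z : OT k S B M φ) : z ∈ W := by
  obtain ⟨z, rfl⟩ := Submodule.Quotient.mk_surjective _ z
  induction z using TensorProduct.induction_on with
  | zero => exact zero_mem W
  | tmul b m => exact h b m
  | add x y hx hy => exact add_mem hx hy

theorem ot_hom_ext {N : Type*} [AddCommGroup N] [Module k N] {f g : OT k S B M φ →ₗ[k] N}
    (h : ∀ b m, f (otTmul φ b m) = g (otTmul φ b m)) : f = g :=
  LinearMap.ext fun z => mem_of_forall_otTmul_mem (W := LinearMap.eqLocus f g) h z

theorem otTmul_mem_otGr {𝒜 : ℤ → Submodule k B} {gr : ℤ → Submodule k M} {c₁ c₂ c : ℤ} {b : B}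
    {m : M} (hb : b ∈ 𝒜 c₁) (hm : m ∈ gr c₂) (h : c₁ + c₂ = c) :
    otTmul φ b m ∈ otGr k S B M φ 𝒜 gr c :=
  Submodule.subset_span ⟨c₁, c₂, b, m, h, hb, hm, rfl⟩

theorem lsum_otTmul_surjective {ι : Type*} {v : ι → B} (hv : ∀ b, b * φ 1 ∈ rightSpan φ v) :
    Function.Surjective (Finsupp.lsum k fun p => (otTmul φ (v p) : M →ₗ[k] OT k S B M φ)) := by
  let W : Submodule k (OT k S B M φ) :=
    LinearMap.range (Finsupp.lsum k fun p => (otTmul φ (v p) : M →ₗ[k] OT k S B M φ))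
  refine fun z => mem_of_forall_otTmul_mem (W := W) (fun b m => ?_) z
  rw [← otTmul_mul_map_one]
  refine rightSpan_le (W := W.comap ((otTmul φ).flip m)).2 (fun p s => ?_) (hv b)
  change otTmul φ (v p * φ s) m ∈ W
  rw [otTmul_mul_map]
  exact ⟨Finsupp.single p (s • m), Finsupp.lsum_single _ _ _ _⟩

theorem mem_eSub_of_smul_eq {N : Type} [AddCommGroup N] [Module k N] [Module B N]
    [IsScalarTower k B N] {e : B} {x : N} (h : e • x = x) : x ∈ eSub k B N e :=
  ⟨x, h⟩

theorem smul_coe_eSub {N : Type} [AddCommGroup N] [Module k N] [Module B N]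
    [IsScalarTower k B N] {e : B} (he : e * e = e) (x : eSub k B N e) : e • (x : N) = x := by
  obtain ⟨_, y, rfl⟩ := x
  exact (smul_smul e e y).trans (congrArg (· • y) he)

theorem surjective_of_forall_exists_coe_eq {e : B} (he : φ 1 = e) {N : Type*} [AddCommGroup N]
    [Module k N] {L : N →ₗ[k] eSub k B (OT k S B M φ) e}
    (h : ∀ b m, ∃ x, (L x : OT k S B M φ) = otTmul φ (e * b * e) m) :
    Function.Surjective L := by
  rintro ⟨_, z, rfl⟩
  let W := LinearMap.range ((eSub k B (OT k S B M φ) e).subtype ∘ₗ L)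
  obtain ⟨x, hx⟩ :=
    mem_of_forall_otTmul_mem (W := W.comap (eMap k B _ e)) (fun b m => by
      have hb : e • otTmul φ b m = otTmul φ (e * b * e) m := by
        rw [← he, otTmul_mul_map_one, smul_otTmul]
      exact hb.symm ▸ h b m : ∀ b m, e • otTmul φ b m ∈ W) z
  exact ⟨x, Subtype.ext hx⟩

variable [IsScalarTower k S M]

theorem TRel_le_ker_of_isRightLinear {κ : B →ₗ[k] S} (hκ : IsRightLinear φ κ) :
    (TRel k S B M φ).restrictScalars k ≤
      LinearMap.ker (TensorProduct.lift ((Algebra.lsmul k k M).toLinearMap ∘ₗ κ)) := by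
  let K : B ⊗[k] M →ₗ[k] M := TensorProduct.lift ((Algebra.lsmul k k M).toLinearMap ∘ₗ κ)
  have hK (b : B) (m : M) : K (b ⊗ₜ m) = κ b • m := rfl
  intro z hz
  suffices h : ∀ b : B, K (b • z) = 0 by
    rw [LinearMap.mem_ker, ← one_smul B z]
    exact h 1
  refine Submodule.span_induction (p := fun z _ => ∀ b : B, K (b • z) = 0) ?_ (fun b => ?_)
    (fun x y _ _ hx hy b => ?_) (fun a x _ hx b => ?_) hz
  · rintro _ ⟨b, r, m, rfl⟩ b'
    rw [smul_sub, smul_tmul', smul_tmul', map_sub, hK, hK, smul_eq_mul, smul_eq_mul, ← mul_assoc,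
      hκ, mul_smul, sub_self]
  · rw [smul_zero, map_zero]
  · rw [smul_add, map_add, hx, hy, add_zero]
  · rw [smul_smul, hx]

theorem exists_linearMap_otTmul {κ : B →ₗ[k] S} (hκ : IsRightLinear φ κ) :
    ∃ K : OT k S B M φ →ₗ[k] M, ∀ b m, K (otTmul φ b m) = κ b • m :=
  ⟨((TRel k S B M φ).restrictScalars k).liftQ _ (TRel_le_ker_of_isRightLinear hκ) ∘ₗ
    (Submodule.Quotient.restrictScalarsEquiv k (TRel k S B M φ)).symm.toLinearMap, fun _ _ => rfl⟩

end InducedModule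

section CornerPolynomial

variable {k S B M : Type} [Field k] [Ring S] [Algebra k S] [Ring B] [Algebra k B]

/-- `X` centralizes the image of `φ : S → B`, whose unit is `φ(1) = e`, and its powers `X ^ j φ(1)`
form part of a basis of the right `S`-module `B e`. Thus `e B e` contains a copy of `S[X]`. -/
structure CornerPolynomial (φ : S →ₙₐ[k] B) (e X : B) : Prop where
  map_one : φ 1 = e
  commute : ∀ s, Commute X (φ s)
  exists_dual_pow : ∃ κ : ℕ → B →ₗ[k] S, (∀ j, IsRightLinear φ (κ j)) ∧
    ∀ j j' s, κ j (X ^ j' * φ s) = if j = j' then s else 0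

namespace CornerPolynomial

variable [AddCommGroup M] [Module k M] [Module S M] {φ : S →ₙₐ[k] B} {e X : B}

theorem smul_otTmul_pow (h : CornerPolynomial φ e X) (s : S) (j : ℕ) (m : M) :
    φ s • otTmul φ (X ^ j) m = otTmul φ (X ^ j) (s • m) := by
  rw [smul_otTmul, ← ((h.commute s).pow_left j).eq, otTmul_mul_map]

/-- The map `M[t] → e (B ⊗_S M)` sending `m t ^ j` to `X ^ j ⊗ m`. -/
noncomputable def ofFinsupp (h : CornerPolynomial φ e X) (d : EData k (OT k S B M φ) e φ) :
    letI := d.inst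
    (ℕ →₀ M) →ₗ[S] eSub k B (OT k S B M φ) e :=
  letI := d.inst
  Finsupp.lsum ℕ fun j =>
    { toFun := fun m => ⟨otTmul φ (X ^ j) m, mem_eSub_of_smul_eq <| by
        rw [← h.map_one, h.smul_otTmul_pow, one_smul]⟩
      map_add' := fun _ _ => Subtype.ext (map_add _ _ _)
      map_smul' := fun s m => Subtype.ext <| by
        rw [d.compat]
        exact (h.smul_otTmul_pow s j m).symm }

theorem coe_ofFinsupp (h : CornerPolynomial φ e X) (d : EData k (OT k S B M φ) e φ) (v : ℕ →₀ M) :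
    (letI := d.inst; (h.ofFinsupp d v : OT k S B M φ)) = v.sum fun j m => otTmul φ (X ^ j) m :=
  map_finsuppSum (eSub k B (OT k S B M φ) e).subtype _ _

theorem coe_ofFinsupp_single (h : CornerPolynomial φ e X) (d : EData k (OT k S B M φ) e φ) (j : ℕ)
    (m : M) :
    (letI := d.inst; (h.ofFinsupp d (Finsupp.single j m) : OT k S B M φ)) = otTmul φ (X ^ j) m := by
  exact (h.coe_ofFinsupp d _).trans (Finsupp.sum_single_index (map_zero (otTmul φ (X ^ j))))

theorem exists_coe_ofFinsupp_eq (h : CornerPolynomial φ e X) (d : EData k (OT k S B M φ) e φ)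
    {b : B} (hb : b ∈ rightSpan φ (X ^ · : ℕ → B)) (m : M) :
    letI := d.inst
    ∃ v, (h.ofFinsupp d v : OT k S B M φ) = otTmul φ b m := by
  let L : (ℕ →₀ M) →ₗ[k] OT k S B M φ := Finsupp.lsum k fun j => otTmul φ (X ^ j)
  have hL : rightSpan φ (X ^ · : ℕ → B) ≤ (LinearMap.range L).comap ((otTmul φ).flip m) :=
    rightSpan_le.2 fun j s =>
      ⟨Finsupp.single j (s • m), (Finsupp.lsum_single _ _ _ _).trans (otTmul_mul_map _ s m).symm⟩
  obtain ⟨v, hv⟩ := hL hb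
  exact ⟨v, (h.coe_ofFinsupp d v).trans hv⟩

theorem ofFinsupp_single_mem_eSubGr (h : CornerPolynomial φ e X) (d : EData k (OT k S B M φ) e φ)
    {𝒜 : ℤ → Submodule k B} {gr : ℤ → Submodule k M} {c c' : ℤ} {j : ℕ} (hX : X ^ j * φ 1 ∈ 𝒜 c')
    {x : M} (hx : x ∈ gr (c - c')) :
    letI := d.inst
    h.ofFinsupp d (Finsupp.single j x) ∈
      eSubGr k B (OT k S B M φ) e (otGr k S B M φ 𝒜 gr) c := by
  change (h.ofFinsupp d _ : OT k S B M φ) ∈ otGr k S B M φ 𝒜 gr c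
  rw [coe_ofFinsupp_single, ← otTmul_mul_map_one]
  exact otTmul_mem_otGr hX hx (add_sub_cancel c' c)

theorem map_coe_ofFinsupp (h : CornerPolynomial φ e X) (d : EData k (OT k S B M φ) e φ) {M' : Type}
    [AddCommGroup M'] [Module k M'] [Module S M'] (d' : EData k (OT k S B M' φ) e φ)
    {f : M →ₗ[S] M'} {gF : OT k S B M φ →ₗ[k] OT k S B M' φ}
    (hgF : ∀ b m, gF (otTmul φ b m) = otTmul φ b (f m)) (v : ℕ →₀ M) :
    letI := d.inst; letI := d'.inst
    gF (h.ofFinsupp d v) = h.ofFinsupp d' (Finsupp.mapRange f f.map_zero v) := by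
  rw [coe_ofFinsupp, coe_ofFinsupp, map_finsuppSum, Finsupp.sum_mapRange_index fun _ => map_zero _]
  exact Finsupp.sum_congr fun j _ => hgF _ _

variable [IsScalarTower k S M]

theorem ofFinsupp_injective (h : CornerPolynomial φ e X) (d : EData k (OT k S B M φ) e φ) :
    letI := d.inst
    Function.Injective (h.ofFinsupp d) := by
  let _ := d.inst
  refine (injective_iff_map_eq_zero _).2 fun v hv => Finsupp.ext fun j => ?_
  obtain ⟨κ, hκ, hdual⟩ := h.exists_dual_pow
  obtain ⟨K, hK⟩ := exists_linearMap_otTmul (M := M) (hκ j)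
  have hpow (j' : ℕ) : κ j (X ^ j') = if j = j' then 1 else 0 := by
    rw [← hdual j j' 1, hκ j, mul_one]
  have hv' := congrArg (fun z => K z.val) hv
  simp only [coe_ofFinsupp, map_finsuppSum, hK, hpow, ite_smul, one_smul, zero_smul,
    Finsupp.sum_ite_eq, Submodule.coe_zero, map_zero] at hv'
  simpa using hv'

theorem ofFinsupp_bijective (h : CornerPolynomial φ e X)
    (hmem : ∀ b, e * b * e ∈ rightSpan φ (X ^ · : ℕ → B)) (d : EData k (OT k S B M φ) e φ) :
    letI := d.inst
    Function.Bijective (h.ofFinsupp d) := by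
  let _ := d.inst
  have := d.tower
  exact ⟨h.ofFinsupp_injective d, surjective_of_forall_exists_coe_eq h.map_one
    (L := (h.ofFinsupp d).restrictScalars k) fun b m => h.exists_coe_ofFinsupp_eq d (hmem b) m⟩

/-- The isomorphism `e (B ⊗_S M) ≅ M[t]` when the powers of `X` generate `e B e` over `S`. -/
noncomputable def equivFinsupp (h : CornerPolynomial φ e X)
    (hmem : ∀ b, e * b * e ∈ rightSpan φ (X ^ · : ℕ → B)) (d : EData k (OT k S B M φ) e φ) :
    letI := d.inst
    eSub k B (OT k S B M φ) e ≃ₗ[S] (ℕ →₀ M) :=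
  letI := d.inst
  (LinearEquiv.ofBijective (h.ofFinsupp d) (h.ofFinsupp_bijective hmem d)).symm

theorem equivFinsupp_natural (h : CornerPolynomial φ e X)
    (hmem : ∀ b, e * b * e ∈ rightSpan φ (X ^ · : ℕ → B)) (d : EData k (OT k S B M φ) e φ)
    {M' : Type} [AddCommGroup M'] [Module k M'] [Module S M'] [IsScalarTower k S M']
    (d' : EData k (OT k S B M' φ) e φ) {f : M →ₗ[S] M'}
    {gF : OT k S B M φ →ₗ[k] OT k S B M' φ} (hgF : ∀ b m, gF (otTmul φ b m) = otTmul φ b (f m))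
    {gEF : eSub k B (OT k S B M φ) e →ₗ[k] eSub k B (OT k S B M' φ) e}
    (hgEF : ∀ x, (gEF x).val = gF x.val) (z : eSub k B (OT k S B M φ) e) :
    letI := d.inst; letI := d'.inst
    h.equivFinsupp hmem d' (gEF z) = Finsupp.mapRange f f.map_zero (h.equivFinsupp hmem d z) := by
  let _ := d.inst
  let _ := d'.inst
  obtain ⟨v, rfl⟩ := (h.equivFinsupp hmem d).symm.surjective z
  rw [LinearEquiv.apply_symm_apply, ← LinearEquiv.eq_symm_apply]
  exact Subtype.ext ((hgEF _).trans (h.map_coe_ofFinsupp d d' hgF v))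

end CornerPolynomial
end CornerPolynomial

section CornerDecomposition

open TensorProduct

variable {k T S B M ι : Type} [Field k] [Ring T] [Algebra k T] [Ring S] [Algebra k S] [Ring B]
  [Algebra k B] [DecidableEq ι]

/-- The algebraic data behind `e B e = S θ S ⊕ S[X]` with `S θ S ≅ S e' ⊗_T e' S`, for non-unital
homomorphisms `φ' : T → S` and `φ : S → B` with units `e'` and `e`: the element `θ` centralizes `T`,
and `w` generates the right `T`-module `S e'`. -/
structure CornerDecomposition (φ : S →ₙₐ[k] B) (φ' : T →ₙₐ[k] S) (e : B) (e' : S) (X θ : B)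
    (w : ι → S) : Prop extends CornerPolynomial φ e X where
  map_one' : φ' 1 = e'
  mul_map : θ * φ e' = θ
  commute_theta : ∀ t, Commute θ (φ (φ' t))
  mul_mul_mem : ∀ b, e * b * e ∈ doubleSpan φ θ ⊔ rightSpan φ (X ^ · : ℕ → B)
  mul_mem_rightSpan : ∀ s, s * e' ∈ rightSpan φ' w
  exists_dual : ∃ κ : ι → B →ₗ[k] S, (∀ p, IsRightLinear φ (κ p)) ∧
    (∀ p q, κ p (φ (w q) * θ) = if p = q then e' else 0) ∧ ∀ p j s, κ p (X ^ j * φ s) = 0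

namespace CornerDecomposition

variable [AddCommGroup M] [Module k M] [Module S M] [IsScalarTower k S M]
  {φ : S →ₙₐ[k] B} {φ' : T →ₙₐ[k] S} {e : B} {e' : S} {X θ : B} {w : ι → S}

theorem isIdempotentElem (h : CornerDecomposition φ φ' e e' X θ w) : e' * e' = e' := by
  rw [← h.map_one', ← map_mul, one_mul]

theorem mul_theta (h : CornerDecomposition φ φ' e e' X θ w) : e * θ = θ := by
  have hθ : θ = φ e' * θ := by
    rw [← h.map_one', ← (h.commute_theta 1).eq, h.map_one', h.mul_map]
  rw [hθ, ← mul_assoc, ← h.map_one, map_one_mul_map]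

/-- The map `S ⊗_k e' M → e (B ⊗_S M)` sending `s ⊗ x` to `φ(s) θ ⊗ x`. -/
noncomputable def ofTensor (h : CornerDecomposition φ φ' e e' X θ w)
    (d₂ : EData k (OT k S B M φ) e φ) :
    letI := d₂.inst
    S ⊗[k] eSub k S M e' →ₗ[S] eSub k B (OT k S B M φ) e :=
  letI := d₂.inst
  haveI := d₂.tower
  AlgebraTensorModule.lift <| LinearMap.toSpanSingleton S _ <|
    ((otTmul φ θ) ∘ₗ (eSub k S M e').subtype).codRestrict (eSub k B (OT k S B M φ) e) fun x =>
      mem_eSub_of_smul_eq (by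
        change e • otTmul φ θ (x : M) = otTmul φ θ (x : M)
        rw [smul_otTmul, h.mul_theta])

theorem coe_ofTensor_tmul (h : CornerDecomposition φ φ' e e' X θ w)
    (d₂ : EData k (OT k S B M φ) e φ) (s : S) (x : eSub k S M e') :
    letI := d₂.inst
    (h.ofTensor d₂ (s ⊗ₜ[k] x) : OT k S B M φ) = otTmul φ (φ s * θ) (x : M) :=
  d₂.compat s _

/-- The map `S ⊗_T e' M → e (B ⊗_S M)` sending `s ⊗ x` to `φ(s) θ ⊗ x`. -/
noncomputable def ofInduced (h : CornerDecomposition φ φ' e e' X θ w) (d₁ : EData k M e' φ')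
    (d₂ : EData k (OT k S B M φ) e φ) :
    letI := d₁.inst; letI := d₁.tower; letI := d₂.inst
    OT k T S (eSub k S M e') φ' →ₗ[S] eSub k B (OT k S B M φ) e :=
  letI := d₁.inst; letI := d₁.tower; letI := d₂.inst
  Submodule.liftQ _ (h.ofTensor d₂) <| Submodule.span_le.2 <| by
    rintro _ ⟨s, t, x, rfl⟩
    rw [SetLike.mem_coe, LinearMap.mem_ker, map_sub, sub_eq_zero]
    refine Subtype.ext ?_
    rw [coe_ofTensor_tmul, coe_ofTensor_tmul, d₁.compat, ← otTmul_mul_map, map_mul φ,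
      mul_assoc, mul_assoc, (h.commute_theta t).eq]

theorem coe_ofInduced_otTmul (h : CornerDecomposition φ φ' e e' X θ w) (d₁ : EData k M e' φ')
    (d₂ : EData k (OT k S B M φ) e φ) (s : S) (x : eSub k S M e') :
    letI := d₁.inst; letI := d₁.tower; letI := d₂.inst
    (h.ofInduced d₁ d₂ (otTmul φ' s x) : OT k S B M φ) = otTmul φ (φ s * θ) (x : M) :=
  h.coe_ofTensor_tmul d₂ s x

theorem exists_coe_ofInduced_eq (h : CornerDecomposition φ φ' e e' X θ w) (d₁ : EData k M e' φ')
    (d₂ : EData k (OT k S B M φ) e φ) {b : B} (hb : b ∈ doubleSpan φ θ) (m : M) :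
    letI := d₁.inst; letI := d₁.tower; letI := d₂.inst
    ∃ u, (h.ofInduced d₁ d₂ u : OT k S B M φ) = otTmul φ b m := by
  let _ := d₁.inst
  let _ := d₁.tower
  let _ := d₂.inst
  have := d₂.tower
  let L : OT k T S (eSub k S M e') φ' →ₗ[k] OT k S B M φ :=
    (eSub k B (OT k S B M φ) e).subtype ∘ₗ (h.ofInduced d₁ d₂).restrictScalars k
  suffices hL : doubleSpan φ θ ≤ (LinearMap.range L).comap ((otTmul φ).flip m) from hL hb
  refine Submodule.span_le.2 ?_
  rintro _ ⟨⟨s, t⟩, rfl⟩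
  let x : eSub k S M e' := ⟨e' • t • m, mem_eSub_of_smul_eq (by
    rw [smul_smul, h.isIdempotentElem])⟩
  refine ⟨otTmul φ' s x, (h.coe_ofInduced_otTmul d₁ d₂ s x).trans ?_⟩
  change otTmul φ (φ s * θ) (e' • t • m) = otTmul φ (φ s * θ * φ t) m
  rw [← otTmul_mul_map, mul_assoc, h.mul_map, otTmul_mul_map]

/-- The comparison map `(S ⊗_T e' M) ⊕ M[t] → e (B ⊗_S M)`. -/
noncomputable def ofProd (h : CornerDecomposition φ φ' e e' X θ w) (d₁ : EData k M e' φ')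
    (d₂ : EData k (OT k S B M φ) e φ) :
    letI := d₁.inst; letI := d₁.tower; letI := d₂.inst
    OT k T S (eSub k S M e') φ' × (ℕ →₀ M) →ₗ[S] eSub k B (OT k S B M φ) e :=
  letI := d₁.inst; letI := d₁.tower; letI := d₂.inst
  (h.ofInduced d₁ d₂).coprod (h.ofFinsupp d₂)

theorem ofProd_surjective (h : CornerDecomposition φ φ' e e' X θ w) (d₁ : EData k M e' φ')
    (d₂ : EData k (OT k S B M φ) e φ) :
    letI := d₁.inst; letI := d₁.tower; letI := d₂.inst
    Function.Surjective (h.ofProd d₁ d₂) := by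
  let _ := d₁.inst
  let _ := d₁.tower
  let _ := d₂.inst
  have := d₂.tower
  refine surjective_of_forall_exists_coe_eq h.map_one (L := (h.ofProd d₁ d₂).restrictScalars k)
    fun b m => ?_
  obtain ⟨b₁, hb₁, b₂, hb₂, hb⟩ := Submodule.mem_sup.1 (h.mul_mul_mem b)
  obtain ⟨u, hu⟩ := h.exists_coe_ofInduced_eq d₁ d₂ hb₁ m
  obtain ⟨v, hv⟩ := h.exists_coe_ofFinsupp_eq d₂ hb₂ m
  refine ⟨(u, v), ?_⟩
  change (h.ofInduced d₁ d₂ u : OT k S B M φ) + (h.ofFinsupp d₂ v : OT k S B M φ) = _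
  rw [hu, hv, ← hb, map_add, LinearMap.add_apply]

theorem exists_linearMap_coefficient (h : CornerDecomposition φ φ' e e' X θ w)
    (d₁ : EData k M e' φ') (d₂ : EData k (OT k S B M φ) e φ) (p : ι) :
    letI := d₁.inst; letI := d₁.tower; letI := d₂.inst
    ∃ K : OT k S B M φ →ₗ[k] M, (∀ v, K (h.ofFinsupp d₂ v) = 0) ∧
      ∀ σ : ι →₀ eSub k S M e',
        K (h.ofInduced d₁ d₂ (Finsupp.lsum k (fun p => otTmul φ' (w p)) σ)) = σ p := by
  let _ := d₁.inst
  let _ := d₁.tower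
  let _ := d₂.inst
  have := d₂.tower
  obtain ⟨κ, hκ, hdual, hpow⟩ := h.exists_dual
  obtain ⟨K, hK⟩ := exists_linearMap_otTmul (M := M) (hκ p)
  refine ⟨K, fun v => ?_, fun σ => ?_⟩
  · rw [CornerPolynomial.coe_ofFinsupp, map_finsuppSum]
    refine Finset.sum_eq_zero fun j _ => ?_
    change K (otTmul φ (X ^ j) (v j)) = 0
    rw [← otTmul_mul_map_one, hK, hpow, zero_smul]
  · let L : OT k T S (eSub k S M e') φ' →ₗ[k] M :=
      K ∘ₗ (eSub k B (OT k S B M φ) e).subtype ∘ₗ (h.ofInduced d₁ d₂).restrictScalars k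
    have hL (q : ι) (x : eSub k S M e') :
        L (otTmul φ' (w q) x) = if p = q then (x : M) else 0 := by
      change K (h.ofInduced d₁ d₂ _).val = _
      rw [coe_ofInduced_otTmul, hK, hdual, ite_smul, zero_smul,
        smul_coe_eSub h.isIdempotentElem]
    change L (σ.sum fun q x => otTmul φ' (w q) x) = σ p
    simp only [map_finsuppSum, hL, Finsupp.sum_ite_eq]
    split_ifs with hp
    · rfl
    · rw [Finsupp.notMem_support_iff.1 hp, Submodule.coe_zero]

theorem ofProd_injective (h : CornerDecomposition φ φ' e e' X θ w) (d₁ : EData k M e' φ')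
    (d₂ : EData k (OT k S B M φ) e φ) :
    letI := d₁.inst; letI := d₁.tower; letI := d₂.inst
    Function.Injective (h.ofProd d₁ d₂) := by
  let _ := d₁.inst
  let _ := d₁.tower
  let _ := d₂.inst
  refine (injective_iff_map_eq_zero _).2 ?_
  rintro ⟨u, v⟩ huv
  change h.ofInduced d₁ d₂ u + h.ofFinsupp d₂ v = 0 at huv
  obtain ⟨σ, rfl⟩ := lsum_otTmul_surjective (M := eSub k S M e')
    (fun s => h.map_one'.symm ▸ h.mul_mem_rightSpan s) u
  have hσ : σ = 0 := Finsupp.ext fun p => Subtype.ext <| by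
    obtain ⟨K, hK₁, hK₂⟩ := h.exists_linearMap_coefficient d₁ d₂ p
    have hK := congrArg (fun z => K z.val) huv
    simp only [Submodule.coe_add, map_add, hK₁, hK₂, add_zero, Submodule.coe_zero,
      map_zero] at hK
    exact hK
  rw [hσ, map_zero, map_zero, zero_add] at huv
  rw [hσ, map_zero, (injective_iff_map_eq_zero _).1 (h.ofFinsupp_injective d₂) v huv]
  rfl

/-- The isomorphism `e (B ⊗_S M) ≅ (S ⊗_T e' M) ⊕ M[t]`. -/
noncomputable def equivProd (h : CornerDecomposition φ φ' e e' X θ w) (d₁ : EData k M e' φ')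
    (d₂ : EData k (OT k S B M φ) e φ) :
    letI := d₁.inst; letI := d₁.tower; letI := d₂.inst
    eSub k B (OT k S B M φ) e ≃ₗ[S] OT k T S (eSub k S M e') φ' × (ℕ →₀ M) :=
  letI := d₁.inst; letI := d₁.tower; letI := d₂.inst
  (LinearEquiv.ofBijective (h.ofProd d₁ d₂)
    ⟨h.ofProd_injective d₁ d₂, h.ofProd_surjective d₁ d₂⟩).symm

theorem equivProd_symm_inl (h : CornerDecomposition φ φ' e e' X θ w) (d₁ : EData k M e' φ')
    (d₂ : EData k (OT k S B M φ) e φ) :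
    letI := d₁.inst; letI := d₁.tower; letI := d₂.inst
    ∀ u, (h.equivProd d₁ d₂).symm (u, 0) = h.ofInduced d₁ d₂ u := by
  let _ := d₁.inst
  let _ := d₁.tower
  let _ := d₂.inst
  exact fun u => (congrArg (h.ofInduced d₁ d₂ u + ·) (map_zero (h.ofFinsupp d₂))).trans (add_zero _)

theorem equivProd_symm_inr (h : CornerDecomposition φ φ' e e' X θ w) (d₁ : EData k M e' φ')
    (d₂ : EData k (OT k S B M φ) e φ) (v : ℕ →₀ M) :
    letI := d₁.inst; letI := d₁.tower; letI := d₂.inst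
    (h.equivProd d₁ d₂).symm (0, v) = h.ofFinsupp d₂ v := by
  let _ := d₁.inst
  let _ := d₁.tower
  let _ := d₂.inst
  exact (congrArg (· + h.ofFinsupp d₂ v) (map_zero (h.ofInduced d₁ d₂))).trans (zero_add _)

theorem equivProd_symm_inl_mem_eSubGr (h : CornerDecomposition φ φ' e e' X θ w)
    (d₁ : EData k M e' φ') (d₂ : EData k (OT k S B M φ) e φ) {𝒜S : ℤ → Submodule k S}
    {𝒜B : ℤ → Submodule k B} {gr : ℤ → Submodule k M} {c m : ℤ}
    (hmul : ∀ {c₁ c₂ : ℤ} {a b : B}, a ∈ 𝒜B c₁ → b ∈ 𝒜B c₂ → a * b ∈ 𝒜B (c₁ + c₂))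
    (hφ : ∀ c s, s ∈ 𝒜S c → φ s ∈ 𝒜B c) (hθ : θ ∈ 𝒜B (-c)) :
    letI := d₁.inst; letI := d₁.tower; letI := d₂.inst
    ∀ u ∈ otGr k T S (eSub k S M e') φ' 𝒜S (eSubGr k S M e' gr) (m + c),
      (h.equivProd d₁ d₂).symm (u, 0) ∈
        eSubGr k B (OT k S B M φ) e (otGr k S B M φ 𝒜B gr) m := by
  let _ := d₁.inst
  let _ := d₁.tower
  let _ := d₂.inst
  have := d₂.tower
  intro u hu
  rw [equivProd_symm_inl]
  let L : OT k T S (eSub k S M e') φ' →ₗ[k] OT k S B M φ :=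
    (eSub k B (OT k S B M φ) e).subtype ∘ₗ (h.ofInduced d₁ d₂).restrictScalars k
  refine Submodule.span_le (p := (otGr k S B M φ 𝒜B gr m).comap L) |>.2 ?_ hu
  rintro _ ⟨c₁, c₂, s, x, hc, hs, hx, rfl⟩
  change (h.ofInduced d₁ d₂ (otTmul φ' s x) : OT k S B M φ) ∈ otGr k S B M φ 𝒜B gr m
  rw [coe_ofInduced_otTmul]
  exact otTmul_mem_otGr (hmul (hφ c₁ s hs) hθ) hx (by linarith)

theorem equivProd_symm_inr_single_mem_eSubGr (h : CornerDecomposition φ φ' e e' X θ w)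
    (d₁ : EData k M e' φ') (d₂ : EData k (OT k S B M φ) e φ) {𝒜 : ℤ → Submodule k B}
    {gr : ℤ → Submodule k M} {c c' : ℤ} {j : ℕ} (hX : X ^ j * φ 1 ∈ 𝒜 c') {x : M}
    (hx : x ∈ gr (c - c')) :
    letI := d₁.inst; letI := d₁.tower; letI := d₂.inst
    (h.equivProd d₁ d₂).symm (0, Finsupp.single j x) ∈
      eSubGr k B (OT k S B M φ) e (otGr k S B M φ 𝒜 gr) c := by
  rw [equivProd_symm_inr]
  exact h.ofFinsupp_single_mem_eSubGr d₂ hX hx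

theorem map_coe_ofInduced (h : CornerDecomposition φ φ' e e' X θ w) (d₁ : EData k M e' φ')
    (d₂ : EData k (OT k S B M φ) e φ) {M' : Type} [AddCommGroup M'] [Module k M'] [Module S M']
    [IsScalarTower k S M'] (d₁' : EData k M' e' φ') (d₂' : EData k (OT k S B M' φ) e φ)
    {f : M → M'} {gF : OT k S B M φ →ₗ[k] OT k S B M' φ}
    (hgF : ∀ b m, gF (otTmul φ b m) = otTmul φ b (f m))
    {gE : eSub k S M e' →ₗ[k] eSub k S M' e'} (hgE : ∀ x, (gE x).val = f x.val) :
    letI := d₁.inst; letI := d₁.tower; letI := d₂.inst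
    letI := d₁'.inst; letI := d₁'.tower; letI := d₂'.inst
    ∀ {gFE : OT k T S (eSub k S M e') φ' →ₗ[k] OT k T S (eSub k S M' e') φ'},
      (∀ s x, gFE (otTmul φ' s x) = otTmul φ' s (gE x)) →
      ∀ u, gF (h.ofInduced d₁ d₂ u) = h.ofInduced d₁' d₂' (gFE u) := by
  let _ := d₁.inst
  let _ := d₁.tower
  let _ := d₂.inst
  have := d₂.tower
  let _ := d₁'.inst
  let _ := d₁'.tower
  let _ := d₂'.inst
  have := d₂'.tower
  intro gFE hgFE u
  let L := (eSub k B (OT k S B M φ) e).subtype ∘ₗ (h.ofInduced d₁ d₂).restrictScalars k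
  let L' := (eSub k B (OT k S B M' φ) e).subtype ∘ₗ (h.ofInduced d₁' d₂').restrictScalars k
  suffices hL : gF ∘ₗ L = L' ∘ₗ gFE from LinearMap.congr_fun hL u
  refine ot_hom_ext fun s x => ?_
  change gF (h.ofInduced d₁ d₂ _).val = (h.ofInduced d₁' d₂' (gFE _)).val
  rw [hgFE, coe_ofInduced_otTmul, coe_ofInduced_otTmul, hgF, hgE]

theorem equivProd_natural (h : CornerDecomposition φ φ' e e' X θ w) (d₁ : EData k M e' φ')
    (d₂ : EData k (OT k S B M φ) e φ) {M' : Type} [AddCommGroup M'] [Module k M'] [Module S M']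
    [IsScalarTower k S M'] (d₁' : EData k M' e' φ') (d₂' : EData k (OT k S B M' φ) e φ)
    {f : M →ₗ[S] M'} {gF : OT k S B M φ →ₗ[k] OT k S B M' φ}
    (hgF : ∀ b m, gF (otTmul φ b m) = otTmul φ b (f m))
    {gEF : eSub k B (OT k S B M φ) e →ₗ[k] eSub k B (OT k S B M' φ) e}
    (hgEF : ∀ x, (gEF x).val = gF x.val)
    {gE : eSub k S M e' →ₗ[k] eSub k S M' e'} (hgE : ∀ x, (gE x).val = f x.val) :
    letI := d₁.inst; letI := d₁.tower; letI := d₂.inst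
    letI := d₁'.inst; letI := d₁'.tower; letI := d₂'.inst
    ∀ {gFE : OT k T S (eSub k S M e') φ' →ₗ[k] OT k T S (eSub k S M' e') φ'},
      (∀ s x, gFE (otTmul φ' s x) = otTmul φ' s (gE x)) →
      ∀ z, h.equivProd d₁' d₂' (gEF z) =
        (gFE (h.equivProd d₁ d₂ z).1, Finsupp.mapRange f f.map_zero (h.equivProd d₁ d₂ z).2) := by
  let _ := d₁.inst
  let _ := d₁.tower
  let _ := d₂.inst
  let _ := d₁'.inst
  let _ := d₁'.tower
  let _ := d₂'.inst
  intro gFE hgFE z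
  obtain ⟨⟨u, v⟩, rfl⟩ := (h.equivProd d₁ d₂).symm.surjective z
  rw [LinearEquiv.apply_symm_apply, ← LinearEquiv.eq_symm_apply]
  refine Subtype.ext ((hgEF _).trans ?_)
  change gF ((h.ofInduced d₁ d₂ u).val + (h.ofFinsupp d₂ v).val) = _
  rw [map_add, h.map_coe_ofInduced d₁ d₂ d₁' d₂' hgF hgE hgFE, h.map_coe_ofFinsupp d₂ d₂' hgF]
  rfl

end CornerDecomposition
end CornerDecomposition

section Induction

variable {k : Type} [Field k] {I : Type} [Fintype I] [DecidableEq I] {C : CartanDatum k I}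
variable {n : ℕ} {β : I → ℕ} {i : I}

namespace IsUpRb

theorem cornerPolynomial {φ : bAlg C n β →ₙₐ[k] bAlg C (n + 1) (addA β i)} (hφ : IsUpRb C i φ) :
    CornerPolynomial φ (eDb C (n + 1) (addA β i) i) (toB C (xGen C (n + 1) n)) where
  map_one := hφ.map_one_eq_eDb_addA
  commute := hφ.commute_xGen
  exists_dual_pow := by
    obtain ⟨κ, hκ, hdual⟩ := hφ.isRightBasis_tauXBasis.exists_dual
    refine ⟨fun j => κ (Fin.last n, j), fun j => hκ _, fun j j' s => ?_⟩
    rw [← tauXBasis_last, hdual]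
    exact if_congr (Prod.mk_right_injective _).eq_iff rfl rfl

theorem eDb_mul_mul_eDb_mem_rightSpan_pow
    {φ : bAlg C 0 β →ₙₐ[k] bAlg C 1 (addA β i)} (hφ : IsUpRb C i φ) (b : bAlg C 1 (addA β i)) :
    eDb C 1 (addA β i) i * b * eDb C 1 (addA β i) i ∈
      rightSpan φ (toB C (xGen C 1 0) ^ · : ℕ → _) := by
  rw [← hφ.map_one_eq_eDb_addA]
  refine rightSpan_le.2 ?_ (hφ.mul_map_one_mem_rightSpan_tauXBasis (φ 1 * b))
  rintro ⟨a, j⟩ s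
  have ha : a = Fin.last 0 := Subsingleton.elim (α := Fin 1) a _
  rw [ha, tauXBasis_last]
  exact mul_map_mem_rightSpan j s

variable {φ : bAlg C (n + 1) β →ₙₐ[k] bAlg C (n + 2) (addA β i)}

theorem exists_dual_tauXBasis_mul_lastCrossing (hφ : IsUpRb C i φ) :
    ∃ κ : Fin (n + 1) × ℕ → bAlg C (n + 2) (addA β i) →ₗ[k] bAlg C (n + 1) β,
      (∀ p, IsRightLinear φ (κ p)) ∧
      (∀ p q, κ p (φ (tauXBasis C n β q) * lastCrossing φ) =
        if p = q then eDb C (n + 1) β i else 0) ∧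
      ∀ p j s, κ p (toB C (xGen C (n + 2) (n + 1)) ^ j * φ s) = 0 := by
  obtain ⟨κ, hκ, hdual⟩ := hφ.isRightBasis_tauXBasis.exists_dual
  have hpow (p : Fin (n + 1) × ℕ) (j : ℕ) (s : bAlg C (n + 1) β) :
      κ (p.1.castSucc, p.2) (toB C (xGen C (n + 2) (n + 1)) ^ j * φ s) = 0 := by
    rw [← tauXBasis_last, hdual, if_neg fun h => p.1.castSucc_ne_last (congrArg Prod.fst h)]
  refine ⟨fun p => κ (p.1.castSucc, p.2), fun p => hκ _, fun p q => ?_, hpow⟩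
  have hzero := (rightSpan_le (W := LinearMap.ker (κ (p.1.castSucc, p.2)))).2 (hpow p)
    (hφ.tauXBasis_castSucc_mul_sub_mem q)
  rw [LinearMap.mem_ker, map_sub, sub_eq_zero] at hzero
  rw [← hzero, hdual]
  refine if_congr ?_ rfl rfl
  rw [Prod.ext_iff, Prod.ext_iff, Fin.castSucc_inj]

theorem cornerDecomposition (hφ : IsUpRb C i φ)
    {φ' : bAlg C n (subA β i) →ₙₐ[k] bAlg C (n + 1) β} (hφ' : IsUpRb C i φ') :
    CornerDecomposition φ φ' (eDb C (n + 2) (addA β i) i) (eDb C (n + 1) β i)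
      (toB C (xGen C (n + 2) (n + 1))) (lastCrossing φ) (tauXBasis C n β) where
  toCornerPolynomial := hφ.cornerPolynomial
  map_one' := hφ'.map_one_eq_eDb
  mul_map := hφ.lastCrossing_mul_map_eDb
  commute_theta := hφ.commute_lastCrossing hφ'
  mul_mul_mem b := hφ.map_one_eq_eDb_addA ▸ hφ.map_one_mul_mul_map_one_mem b
  mul_mem_rightSpan s := hφ'.map_one_eq_eDb ▸ hφ'.mul_map_one_mem_rightSpan_tauXBasis s
  exists_dual := hφ.exists_dual_tauXBasis_mul_lastCrossing

end IsUpRb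
end Induction

section Grading

theorem iSup_mul_iSup_le {k A : Type*} [CommSemiring k] [Semiring A] [Algebra k A] {ι : Type*}
    [Add ι] {P : ι → Submodule k A} (hP : ∀ c c', P c * P c' ≤ P (c + c')) :
    (⨆ c, P c) * (⨆ c, P c) ≤ ⨆ c, P c := by
  rw [Submodule.iSup_mul]
  refine iSup_le fun c => ?_
  rw [Submodule.mul_iSup]
  exact iSup_le fun c' => (hP c c').trans (le_iSup P (c + c'))

variable {k : Type} [Field k] {I : Type} [Fintype I] [DecidableEq I] {C : CartanDatum k I}
variable {n : ℕ} {β γ : I → ℕ} {i : I}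

/-- The elements of degree `c` which `φ` maps to elements of degree `c`. -/
def degreeLocus {S B : Type*} [Ring S] [Algebra k S] [Ring B] [Algebra k B] (φ : S →ₙₐ[k] B)
    (𝒜S : ℤ → Submodule k S) (𝒜B : ℤ → Submodule k B) (c : ℤ) : Submodule k S :=
  𝒜S c ⊓ (𝒜B c).comap (φ : S →ₗ[k] B)

theorem degreeLocus_mul_le {S B : Type} [Ring S] [Algebra k S] [Ring B] [Algebra k B]
    {φ : S →ₙₐ[k] B} {𝒜S : ℤ → Submodule k S} {𝒜B : ℤ → Submodule k B} (hS : IsAlgGrading k 𝒜S)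
    (hB : IsAlgGrading k 𝒜B) (c c' : ℤ) :
    degreeLocus φ 𝒜S 𝒜B c * degreeLocus φ 𝒜S 𝒜B c' ≤ degreeLocus φ 𝒜S 𝒜B (c + c') := by
  refine Submodule.mul_le.2 fun x hx y hy => ⟨hS.2.1 hx.1 hy.1, ?_⟩
  change φ (x * y) ∈ 𝒜B (c + c')
  rw [map_mul]
  exact hB.2.1 hx.2 hy.2

namespace IsUpRb

variable {φ : bAlg C n β →ₙₐ[k] bAlg C (n + 1) γ}

theorem map_toB_xGen_mul_Ee (hφ : IsUpRb C i φ) {j : ℕ} (hj : j < n) (ν : Fin n → I) :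
    φ (toB C (xGen C n j * Ee C ν)) =
      toB C (xGen C (n + 1) j * Ee C (Fin.snoc ν i : Fin (n + 1) → I)) := by
  rw [map_mul (toB C), map_mul φ, hφ.map_toB_xGen hj, mul_assoc, map_one_mul_map, hφ.1, ← map_mul]

theorem map_toB_tauGen_mul_Ee (hφ : IsUpRb C i φ) {l : ℕ} (hl : l + 1 < n) (ν : Fin n → I) :
    φ (toB C (tauGen C n l * Ee C ν)) =
      toB C (tauGen C (n + 1) l * Ee C (Fin.snoc ν i : Fin (n + 1) → I)) := by
  rw [map_mul (toB C), map_mul φ, hφ.map_toB_tauGen hl, mul_assoc, map_one_mul_map, hφ.1,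
    ← map_mul]

variable {𝒜S : ℤ → Submodule k (bAlg C n β)} {𝒜B : ℤ → Submodule k (bAlg C (n + 1) γ)}

theorem toB_Ee_mem_degreeLocus (hφ : IsUpRb C i φ) (hS : IsKLRGrading C (toB C) 𝒜S)
    (hB : IsKLRGrading C (toB C) 𝒜B) (ν : Fin n → I) :
    toB C (Ee C ν) ∈ degreeLocus φ 𝒜S 𝒜B 0 := by
  refine ⟨hS.2.1 ν, ?_⟩
  change φ _ ∈ 𝒜B 0
  rw [hφ.1]
  exact hB.2.1 _

theorem toB_xGen_mul_Ee_mem_degreeLocus (hφ : IsUpRb C i φ) (hS : IsKLRGrading C (toB C) 𝒜S)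
    (hB : IsKLRGrading C (toB C) 𝒜B) {j : ℕ} (hj : j < n) (ν : Fin n → I) :
    toB C (xGen C n j * Ee C ν) ∈ degreeLocus φ 𝒜S 𝒜B (B C (ν ⟨j, hj⟩) (ν ⟨j, hj⟩)) := by
  refine ⟨xGen_of_lt C hj ▸ hS.2.2.1 ⟨j, hj⟩ ν, ?_⟩
  change φ _ ∈ 𝒜B _
  rw [hφ.map_toB_xGen_mul_Ee hj, xGen_of_lt C (Nat.lt_succ_of_lt hj)]
  have h := hB.2.2.1 (Fin.castSucc ⟨j, hj⟩) (Fin.snoc ν i)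
  rwa [Fin.snoc_castSucc (α := fun _ => I)] at h

theorem toB_tauGen_mul_Ee_mem_degreeLocus (hφ : IsUpRb C i φ) (hS : IsKLRGrading C (toB C) 𝒜S)
    (hB : IsKLRGrading C (toB C) 𝒜B) {l : ℕ} (hl : l + 1 < n) (ν : Fin n → I) :
    toB C (tauGen C n l * Ee C ν) ∈
      degreeLocus φ 𝒜S 𝒜B (-B C (ν ⟨l, Nat.lt_of_succ_lt hl⟩) (ν ⟨l + 1, hl⟩)) := by
  refine ⟨tauGen_of_lt C hl ▸ hS.2.2.2 l hl ν, ?_⟩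
  change φ _ ∈ 𝒜B _
  rw [hφ.map_toB_tauGen_mul_Ee hl, tauGen_of_lt C (Nat.lt_succ_of_lt hl)]
  have h (a : Fin n) : (Fin.snoc ν i : Fin (n + 1) → I) a.castSucc = ν a :=
    Fin.snoc_castSucc (α := fun _ => I) i ν a
  rw [← h ⟨l, Nat.lt_of_succ_lt hl⟩, ← h ⟨l + 1, hl⟩]
  exact hB.2.2.2 l _ _

theorem iSup_degreeLocus (hφ : IsUpRb C i φ) (hS : IsKLRGrading C (toB C) 𝒜S)
    (hB : IsKLRGrading C (toB C) 𝒜B) : ⨆ c, degreeLocus φ 𝒜S 𝒜B c = ⊤ := by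
  have hmem {r : Alg C n} (h : ∀ ν, ∃ c, toB C (r * Ee C ν) ∈ degreeLocus φ 𝒜S 𝒜B c) :
      toB C r ∈ ⨆ c, degreeLocus φ 𝒜S 𝒜B c := by
    rw [← mul_one r, ← sum_Ee, Finset.mul_sum, map_sum]
    exact sum_mem fun ν _ => (h ν).elim fun c hc => Submodule.mem_iSup_of_mem c hc
  refine eq_top_iff.2 fun s _ => ?_
  obtain ⟨r, rfl⟩ := toB_surjective s
  induction r using alg_induction with
  | Ee ν => exact Submodule.mem_iSup_of_mem 0 (hφ.toB_Ee_mem_degreeLocus hS hB ν)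
  | xGen j hj => exact hmem fun ν => ⟨_, hφ.toB_xGen_mul_Ee_mem_degreeLocus hS hB hj ν⟩
  | tauGen l hl => exact hmem fun ν => ⟨_, hφ.toB_tauGen_mul_Ee_mem_degreeLocus hS hB hl ν⟩
  | algebraMap c =>
    refine hmem fun ν => ⟨0, ?_⟩
    rw [← Algebra.smul_def, map_smul]
    exact Submodule.smul_mem _ c (hφ.toB_Ee_mem_degreeLocus hS hB ν)
  | add a b ha hb => exact map_add (toB C) a b ▸ add_mem (ha trivial) (hb trivial)
  | mul a b ha hb =>
    rw [map_mul]
    exact iSup_mul_iSup_le (degreeLocus_mul_le hS.1 hB.1)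
      (Submodule.mul_mem_mul (ha trivial) (hb trivial))

theorem map_mem_of_mem (hφ : IsUpRb C i φ) (hS : IsKLRGrading C (toB C) 𝒜S)
    (hB : IsKLRGrading C (toB C) 𝒜B) (c : ℤ) (s : bAlg C n β) (hs : s ∈ 𝒜S c) : φ s ∈ 𝒜B c := by
  have h : degreeLocus φ 𝒜S 𝒜B = 𝒜S := (hS.1.2.2.submodule_iSupIndep.le_iff_eq_of_iSup_eq_top
    (hφ.iSup_degreeLocus hS hB)).1 fun _ => inf_le_left
  exact (h.symm ▸ hs : s ∈ degreeLocus φ 𝒜S 𝒜B c).2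

theorem xGen_mul_map_one_mem (hφ : IsUpRb C i φ) (hB : IsKLRGrading C (toB C) 𝒜B) :
    toB C (xGen C (n + 1) n) * φ 1 ∈ 𝒜B (B C i i) := by
  rw [hφ.map_one, ← map_mul, eR_eq_wordIdem, wordIdem, Finset.mul_sum, map_sum,
    xGen_of_lt C n.lt_succ_self]
  refine sum_mem fun ν hν => ?_
  rw [← (mem_seqsLast.1 hν).2]
  exact hB.2.2.1 (Fin.last n) ν

theorem xGen_pow_mul_map_one_mem (hφ : IsUpRb C i φ) (hB : IsKLRGrading C (toB C) 𝒜B) (j : ℕ) :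
    toB C (xGen C (n + 1) n) ^ j * φ 1 ∈ 𝒜B (j * B C i i) := by
  induction j with
  | zero =>
    rw [pow_zero, one_mul, hφ.map_one, eR_eq_wordIdem, wordIdem, map_sum, Nat.cast_zero, zero_mul]
    exact sum_mem fun ν _ => hB.2.1 ν
  | succ j ih =>
    have hX := hφ.commute_xGen 1
    have h := hB.1.2.1 ih (hφ.xGen_mul_map_one_mem hB)
    rw [hX.eq, mul_assoc, ← mul_assoc (φ 1), map_one_mul_map, ← hX.eq, ← mul_assoc,
      ← pow_succ] at h
    rwa [Nat.cast_succ, add_one_mul]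

theorem lastCrossing_mem {φ : bAlg C (n + 1) β →ₙₐ[k] bAlg C (n + 2) (addA β i)}
    (hφ : IsUpRb C i φ) {𝒜B : ℤ → Submodule k (bAlg C (n + 2) (addA β i))}
    (hB : IsKLRGrading C (toB C) 𝒜B) : lastCrossing φ ∈ 𝒜B (-B C i i) := by
  rw [hφ.lastCrossing_eq, eDb, eD, map_sum, map_sum, Finset.mul_sum]
  refine sum_mem fun ν hν => ?_
  have hi := (Finset.mem_filter.1 hν).2
  rw [dif_pos n.succ_pos] at hi
  have h := hB.2.2.2 n n.succ.lt_succ_self (Fin.snoc ν i)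
  have hn : (Fin.snoc ν i : Fin (n + 2) → I) (Fin.castSucc (Fin.last n)) = i :=
    (Fin.snoc_castSucc (α := fun _ => I) i ν _).trans hi
  have hlast : (Fin.snoc ν i : Fin (n + 2) → I) (Fin.last (n + 1)) = i :=
    Fin.snoc_last (α := fun _ => I) i ν
  rw [hφ.1, tauGen_of_lt C n.succ.lt_succ_self, ← map_mul]
  exact congrArg₂ (B C) hn hlast ▸ h

end IsUpRb
end Grading

end KLR

open KLR TensorProduct in
set_option maxHeartbeats 1000000 in
/-- For every graded `R(β)`-module `M` there is a natural isomorphism of graded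
`R(β)`-modules `E_i F_i M ≅ q^{-(α_i,α_i)} F_i E_i M ⊕ (M ⊗ k[t_i])`, with
`M ⊗ k[t_i] ≅ ⊕_{m ≥ 0} q^{m(α_i,α_i)} M` (encoded as `ℕ →₀ M`); when `β = 0` the
term `F_i E_i M` is zero and the isomorphism reads `E_i F_i M ≅ M ⊗ k[t_i]`. -/
theorem EiFi_decomposition {k : Type} [Field k] {I : Type} [Fintype I]
    [DecidableEq I] (C : CartanDatum k I) (β : I → ℕ) (i : I) :
    -- the case `β = 0`, where `E_i` on `R(β)`-modules is the zero functor
    (ht I β = 0 →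
      ∀ (φ0 : bAlg C 0 β →ₙₐ[k] bAlg C 1 (addA β i)), IsUpRb C i φ0 →
      ∀ (𝒜S : ℤ → Submodule k (bAlg C 0 β)), IsKLRGrading C (toB C) 𝒜S →
      ∀ (𝒜B : ℤ → Submodule k (bAlg C 1 (addA β i))), IsKLRGrading C (toB C) 𝒜B →
      ∃ Φ : ∀ (M : Type) [AddCommGroup M] [Module k M] [Module (bAlg C 0 β) M]
          [IsScalarTower k (bAlg C 0 β) M]
          (d : EData k (OT k (bAlg C 0 β) (bAlg C 1 (addA β i)) M φ0)
            (eDb C 1 (addA β i) i) φ0),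
          (letI := d.inst;
            (↥(eSub k (bAlg C 1 (addA β i))
                (OT k (bAlg C 0 β) (bAlg C 1 (addA β i)) M φ0) (eDb C 1 (addA β i) i))
              ≃ₗ[bAlg C 0 β] (ℕ →₀ M))),
        (∀ (M : Type) (_ : AddCommGroup M) (_ : Module k M)
          (_ : Module (bAlg C 0 β) M) (_ : IsScalarTower k (bAlg C 0 β) M)
          (d : EData k (OT k (bAlg C 0 β) (bAlg C 1 (addA β i)) M φ0)
            (eDb C 1 (addA β i) i) φ0),
          letI := d.inst;
          ∀ (grM : ℤ → Submodule k M), IsModGrading k 𝒜S grM →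
          ∀ (m : ℤ) (jj : ℕ) (x : M), x ∈ grM (m - (jj : ℤ) * B C i i) →
            (Φ M d).symm (Finsupp.single jj x)
              ∈ eSubGr k (bAlg C 1 (addA β i))
                (OT k (bAlg C 0 β) (bAlg C 1 (addA β i)) M φ0) (eDb C 1 (addA β i) i)
                (otGr k (bAlg C 0 β) (bAlg C 1 (addA β i)) M φ0 𝒜B grM) m) ∧
        (∀ (M M' : Type) (_ : AddCommGroup M) (_ : Module k M)
          (_ : Module (bAlg C 0 β) M) (_ : IsScalarTower k (bAlg C 0 β) M)
          (_ : AddCommGroup M') (_ : Module k M') (_ : Module (bAlg C 0 β) M')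
          (_ : IsScalarTower k (bAlg C 0 β) M')
          (d : EData k (OT k (bAlg C 0 β) (bAlg C 1 (addA β i)) M φ0)
            (eDb C 1 (addA β i) i) φ0)
          (d' : EData k (OT k (bAlg C 0 β) (bAlg C 1 (addA β i)) M' φ0)
            (eDb C 1 (addA β i) i) φ0),
          letI := d.inst; letI := d'.inst;
          ∀ (f : M →ₗ[bAlg C 0 β] M')
            (gF : OT k (bAlg C 0 β) (bAlg C 1 (addA β i)) M φ0 →ₗ[k]
              OT k (bAlg C 0 β) (bAlg C 1 (addA β i)) M' φ0),
            (∀ (b : bAlg C 1 (addA β i)) (m : M),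
              gF (OTmk k (bAlg C 0 β) (bAlg C 1 (addA β i)) M φ0 (b ⊗ₜ[k] m))
                = OTmk k (bAlg C 0 β) (bAlg C 1 (addA β i)) M' φ0 (b ⊗ₜ[k] f m)) →
          ∀ (gEF : ↥(eSub k (bAlg C 1 (addA β i))
              (OT k (bAlg C 0 β) (bAlg C 1 (addA β i)) M φ0) (eDb C 1 (addA β i) i))
              →ₗ[k] ↥(eSub k (bAlg C 1 (addA β i))
              (OT k (bAlg C 0 β) (bAlg C 1 (addA β i)) M' φ0) (eDb C 1 (addA β i) i))),
            (∀ x, (gEF x).val = gF x.val) →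
            ∀ z, Φ M' d' (gEF z) = Finsupp.mapRange ⇑f f.map_zero (Φ M d z))) ∧
    -- the case of `β` of positive height
    (∀ n : ℕ, ht I β = n + 1 →
      ∀ (φup : bAlg C (n + 1) β →ₙₐ[k] bAlg C (n + 2) (addA β i)), IsUpRb C i φup →
      ∀ (φdown : bAlg C n (subA β i) →ₙₐ[k] bAlg C (n + 1) β), IsUpRb C i φdown →
      ∀ (𝒜S : ℤ → Submodule k (bAlg C (n + 1) β)), IsKLRGrading C (toB C) 𝒜S →
      ∀ (𝒜B : ℤ → Submodule k (bAlg C (n + 2) (addA β i))), IsKLRGrading C (toB C) 𝒜B →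
      ∀ (𝒜T : ℤ → Submodule k (bAlg C n (subA β i))), IsKLRGrading C (toB C) 𝒜T →
      ∃ Φ : ∀ (M : Type) [AddCommGroup M] [Module k M] [Module (bAlg C (n + 1) β) M]
          [IsScalarTower k (bAlg C (n + 1) β) M]
          (d1 : EData k M (eDb C (n + 1) β i) φdown)
          (d2 : EData k (OT k (bAlg C (n + 1) β) (bAlg C (n + 2) (addA β i)) M φup)
            (eDb C (n + 2) (addA β i) i) φup),
          (letI := d1.inst; letI := d1.tower; letI := d2.inst;
            (↥(eSub k (bAlg C (n + 2) (addA β i))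
                (OT k (bAlg C (n + 1) β) (bAlg C (n + 2) (addA β i)) M φup)
                (eDb C (n + 2) (addA β i) i))
              ≃ₗ[bAlg C (n + 1) β]
              ((OT k (bAlg C n (subA β i)) (bAlg C (n + 1) β)
                  ↥(eSub k (bAlg C (n + 1) β) M (eDb C (n + 1) β i)) φdown) ×
                (ℕ →₀ M)))),
        -- gradedness
        (∀ (M : Type) (_ : AddCommGroup M) (_ : Module k M)
          (_ : Module (bAlg C (n + 1) β) M) (_ : IsScalarTower k (bAlg C (n + 1) β) M)
          (d1 : EData k M (eDb C (n + 1) β i) φdown)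
          (d2 : EData k (OT k (bAlg C (n + 1) β) (bAlg C (n + 2) (addA β i)) M φup)
            (eDb C (n + 2) (addA β i) i) φup),
          letI := d1.inst; letI := d1.tower; letI := d2.inst;
          ∀ (grM : ℤ → Submodule k M), IsModGrading k 𝒜S grM →
          ∀ m : ℤ,
            (∀ y, y ∈ otGr k (bAlg C n (subA β i)) (bAlg C (n + 1) β)
                ↥(eSub k (bAlg C (n + 1) β) M (eDb C (n + 1) β i)) φdown 𝒜S
                (eSubGr k (bAlg C (n + 1) β) M (eDb C (n + 1) β i) grM)
                (m + B C i i) →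
              (Φ M d1 d2).symm (y, 0) ∈ eSubGr k (bAlg C (n + 2) (addA β i))
                (OT k (bAlg C (n + 1) β) (bAlg C (n + 2) (addA β i)) M φup)
                (eDb C (n + 2) (addA β i) i)
                (otGr k (bAlg C (n + 1) β) (bAlg C (n + 2) (addA β i)) M φup 𝒜B grM)
                m) ∧
            (∀ (jj : ℕ) (x : M), x ∈ grM (m - (jj : ℤ) * B C i i) →
              (Φ M d1 d2).symm (0, Finsupp.single jj x)
                ∈ eSubGr k (bAlg C (n + 2) (addA β i))
                  (OT k (bAlg C (n + 1) β) (bAlg C (n + 2) (addA β i)) M φup)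
                  (eDb C (n + 2) (addA β i) i)
                  (otGr k (bAlg C (n + 1) β) (bAlg C (n + 2) (addA β i)) M φup 𝒜B grM)
                  m)) ∧
        -- naturality in `M`
        (∀ (M M' : Type) (_ : AddCommGroup M) (_ : Module k M)
          (_ : Module (bAlg C (n + 1) β) M) (_ : IsScalarTower k (bAlg C (n + 1) β) M)
          (_ : AddCommGroup M') (_ : Module k M')
          (_ : Module (bAlg C (n + 1) β) M')
          (_ : IsScalarTower k (bAlg C (n + 1) β) M')
          (d1 : EData k M (eDb C (n + 1) β i) φdown)
          (d2 : EData k (OT k (bAlg C (n + 1) β) (bAlg C (n + 2) (addA β i)) M φup)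
            (eDb C (n + 2) (addA β i) i) φup)
          (d1' : EData k M' (eDb C (n + 1) β i) φdown)
          (d2' : EData k (OT k (bAlg C (n + 1) β) (bAlg C (n + 2) (addA β i)) M' φup)
            (eDb C (n + 2) (addA β i) i) φup),
          letI := d1.inst; letI := d1.tower; letI := d2.inst;
          letI := d1'.inst; letI := d1'.tower; letI := d2'.inst;
          ∀ (f : M →ₗ[bAlg C (n + 1) β] M')
            (gF : OT k (bAlg C (n + 1) β) (bAlg C (n + 2) (addA β i)) M φup →ₗ[k]
              OT k (bAlg C (n + 1) β) (bAlg C (n + 2) (addA β i)) M' φup),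
            (∀ (b : bAlg C (n + 2) (addA β i)) (m : M),
              gF (OTmk k (bAlg C (n + 1) β) (bAlg C (n + 2) (addA β i)) M φup
                  (b ⊗ₜ[k] m))
                = OTmk k (bAlg C (n + 1) β) (bAlg C (n + 2) (addA β i)) M' φup
                  (b ⊗ₜ[k] f m)) →
          ∀ (gEF : ↥(eSub k (bAlg C (n + 2) (addA β i))
              (OT k (bAlg C (n + 1) β) (bAlg C (n + 2) (addA β i)) M φup)
              (eDb C (n + 2) (addA β i) i)) →ₗ[k]
              ↥(eSub k (bAlg C (n + 2) (addA β i))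
              (OT k (bAlg C (n + 1) β) (bAlg C (n + 2) (addA β i)) M' φup)
              (eDb C (n + 2) (addA β i) i))),
            (∀ x, (gEF x).val = gF x.val) →
          ∀ (gE : ↥(eSub k (bAlg C (n + 1) β) M (eDb C (n + 1) β i)) →ₗ[k]
              ↥(eSub k (bAlg C (n + 1) β) M' (eDb C (n + 1) β i))),
            (∀ x, (gE x).val = f x.val) →
          ∀ (gFE : OT k (bAlg C n (subA β i)) (bAlg C (n + 1) β)
              ↥(eSub k (bAlg C (n + 1) β) M (eDb C (n + 1) β i)) φdown →ₗ[k]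
              OT k (bAlg C n (subA β i)) (bAlg C (n + 1) β)
              ↥(eSub k (bAlg C (n + 1) β) M' (eDb C (n + 1) β i)) φdown),
            (∀ (b : bAlg C (n + 1) β)
                (x : ↥(eSub k (bAlg C (n + 1) β) M (eDb C (n + 1) β i))),
              gFE (OTmk k (bAlg C n (subA β i)) (bAlg C (n + 1) β)
                  ↥(eSub k (bAlg C (n + 1) β) M (eDb C (n + 1) β i)) φdown
                  (b ⊗ₜ[k] x))
                = OTmk k (bAlg C n (subA β i)) (bAlg C (n + 1) β)
                  ↥(eSub k (bAlg C (n + 1) β) M' (eDb C (n + 1) β i)) φdown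
                  (b ⊗ₜ[k] gE x)) →
            ∀ z, Φ M' d1' d2' (gEF z)
              = (gFE (Φ M d1 d2 z).1,
                  Finsupp.mapRange ⇑f f.map_zero (Φ M d1 d2 z).2))) := by
  refine ⟨fun _ φ hφ 𝒜S _ 𝒜B hB => ?_, fun n _ φ hφ φ' hφ' 𝒜S hS 𝒜B hB _ _ => ?_⟩
  · have h := hφ.cornerPolynomial
    have hspan := hφ.eDb_mul_mul_eDb_mem_rightSpan_pow
    refine ⟨fun M _ _ _ _ d => h.equivFinsupp hspan d, ?_, ?_⟩
    · intro M _ _ _ _ d grM _ m j x hx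
      exact h.ofFinsupp_single_mem_eSubGr d (hφ.xGen_pow_mul_map_one_mem hB j) hx
    · intro M M' _ _ _ _ _ _ _ _ d d' f gF hgF gEF hgEF
      exact h.equivFinsupp_natural hspan d d' hgF hgEF
  · have h := hφ.cornerDecomposition hφ'
    refine ⟨fun M _ _ _ _ d₁ d₂ => h.equivProd d₁ d₂, ?_, ?_⟩
    · intro M _ _ _ _ d₁ d₂ grM _ m
      refine ⟨h.equivProd_symm_inl_mem_eSubGr d₁ d₂ hB.1.2.1 (hφ.map_mem_of_mem hS hB)
        (hφ.lastCrossing_mem hB), fun j x hx => ?_⟩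
      exact h.equivProd_symm_inr_single_mem_eSubGr d₁ d₂ (hφ.xGen_pow_mul_map_one_mem hB j) hx
    · intro M M' _ _ _ _ _ _ _ _ d₁ d₂ d₁' d₂' f gF hgF gEF hgEF gE hgE gFE hgFE
      exact h.equivProd_natural d₁ d₂ d₁' d₂' hgF hgEF hgE hgFE
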